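/- arXiv:1509.03983 — 2 statements merged into one kernel-verified Lean document; each statement's English description precedes it below -/
import Mathlib

section
/- Let r ≥ 3, Δ ≥ 2 and r′ ≥ 2 be integers with r′ dividing r. Suppose there exist constants c₁, c₂ > 0 such that for every n ≥ 1 there is an r′-uniform hypergraph that is universal for 𝓕^(r′)(n,Δ), has at most c₁·n vertices, and has at most c₂·n^{r′ − r′/Δ} edges. Then there exist constants C₁, C₂ > 0 (depending on r, r′, Δ, c₁, c₂) such that for every n ≥ 1 there is an r-uniform hypergraph that is universal for 𝓕^(r)(n,Δ), has at most C₁·n vertices, and has at most C₂·n^{r − r/Δ} edges. -/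
/-!
Write `r = r' * k`. Splitting every edge of an `r`-uniform hypergraph `F` into `k` disjoint
`r'`-sets gives an `r'`-uniform hypergraph `F'` on the same vertices. The degrees do not grow,
since each edge of `F` through `v` has exactly one part through `v`. If `H'` is universal for such
`F'`, let `H` consist of all `r`-sets that are unions of `k` edges of `H'`: an embedding of `F'`
into `H'` is then an embedding of `F` into `H`. The vertex set is unchanged, and
`|E(H)| ≤ |E(H')| ^ k ≤ c₂ ^ k * n ^ (k * (r' - r' / Δ)) = c₂ ^ k * n ^ (r - r / Δ)`.
-/

/-- `EH` (a set of edges on the vertex set `Fin N`) is the edge set of an `r`-uniform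
hypergraph that is universal for the family `𝓕^(r)(n,Δ)` of `r`-uniform hypergraphs with
at most `n` vertices and maximum vertex degree at most `Δ`: every such hypergraph
(represented on the vertex set `Fin n`) admits an injective map into `Fin N`
sending edges to edges. -/
def HypergraphUniversal (r n Δ N : ℕ) (EH : Finset (Finset (Fin N))) : Prop :=
  ∀ EF : Finset (Finset (Fin n)),
    (∀ e ∈ EF, e.card = r) →
    (∀ v : Fin n, (EF.filter (fun e => v ∈ e)).card ≤ Δ) →
    ∃ φ : Fin n → Fin N, Function.Injective φ ∧ ∀ e ∈ EF, e.image φ ∈ EH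

/-- A set of `k * m` elements splits into `k` pairwise disjoint sets of size `m`. -/
lemma exists_equal_split {α : Type*} [DecidableEq α] (k m : ℕ) (s : Finset α)
    (hs : s.card = k * m) :
    ∃ P : Fin k → Finset α, (∀ i, (P i).card = m) ∧
      (∀ v i j, v ∈ P i → v ∈ P j → i = j) ∧ Finset.univ.biUnion P = s := by
  have σ : Fin k × Fin m ≃ s := finProdFinEquiv.trans (s.equivFinOfCardEq hs).symm
  refine ⟨fun i => Finset.univ.image fun j => (σ (i, j) : α), fun i => ?_, ?_, ?_⟩
  · rw [Finset.card_image_of_injective, Finset.card_univ, Fintype.card_fin]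
    intro a b hab
    simpa using σ.injective (Subtype.ext hab)
  · intro v i j hi hj
    simp only [Finset.mem_image, Finset.mem_univ, true_and] at hi hj
    obtain ⟨a, rfl⟩ := hi
    obtain ⟨b, hb⟩ := hj
    have := σ.injective (Subtype.ext hb)
    exact (congrArg Prod.fst this).symm
  · ext v
    simp only [Finset.mem_biUnion, Finset.mem_image, Finset.mem_univ, true_and]
    constructor
    · rintro ⟨i, j, rfl⟩
      exact (σ (i, j)).2
    · intro hv
      exact ⟨(σ.symm ⟨v, hv⟩).1, (σ.symm ⟨v, hv⟩).2, by simp⟩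

/-- The `r`-sets that are unions of `k` (not necessarily distinct) members of `EH`. -/
def unionEdges (r k : ℕ) {N : ℕ} (EH : Finset (Finset (Fin N))) : Finset (Finset (Fin N)) :=
  ((Fintype.piFinset fun _ : Fin k => EH).image fun f => Finset.univ.biUnion f).filter
    fun e => e.card = r

lemma card_unionEdges_le (r k : ℕ) {N : ℕ} (EH : Finset (Finset (Fin N))) :
    (unionEdges r k EH).card ≤ EH.card ^ k := by
  refine (Finset.card_filter_le _ _).trans (Finset.card_image_le.trans ?_)
  simp

/-- Edge splitting turns universality in uniformity `m` into universality in uniformity `k * m`. -/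
lemma universal_unionEdges {k m n Δ N : ℕ} {EH : Finset (Finset (Fin N))}
    (h : HypergraphUniversal m n Δ N EH) :
    HypergraphUniversal (k * m) n Δ N (unionEdges (k * m) k EH) := by
  intro EF hcard hdeg
  have hsplit : ∀ e : Finset (Fin n), ∃ P : Fin k → Finset (Fin n), e ∈ EF →
      (∀ i, (P i).card = m) ∧ (∀ v i j, v ∈ P i → v ∈ P j → i = j) ∧
      Finset.univ.biUnion P = e := by
    intro e
    by_cases he : e ∈ EF
    · obtain ⟨P, hP⟩ := exists_equal_split k m e (hcard e he)
      exact ⟨P, fun _ => hP⟩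
    · exact ⟨fun _ => ∅, fun h => absurd h he⟩
  choose P hP using hsplit
  have hunif : ∀ f ∈ EF.biUnion fun e => Finset.univ.image (P e), f.card = m := by
    intro f hf
    simp only [Finset.mem_biUnion, Finset.mem_image, Finset.mem_univ, true_and] at hf
    obtain ⟨e, he, i, rfl⟩ := hf
    exact (hP e he).1 i
  have hdeg' : ∀ v : Fin n,
      ((EF.biUnion fun e => Finset.univ.image (P e)).filter fun f => v ∈ f).card ≤ Δ := by
    intro v
    -- Every part through `v` comes from an edge through `v`, and each edge has at most one.
    have hsub : (EF.biUnion fun e => Finset.univ.image (P e)).filter (fun f => v ∈ f) ⊆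
        (EF.filter fun e => v ∈ e).biUnion
          fun e => (Finset.univ.image (P e)).filter fun f => v ∈ f := by
      intro f hf
      simp only [Finset.mem_filter, Finset.mem_biUnion, Finset.mem_image, Finset.mem_univ,
        true_and] at hf ⊢
      obtain ⟨⟨e, he, i, rfl⟩, hv⟩ := hf
      refine ⟨e, ⟨he, ?_⟩, ⟨i, rfl⟩, hv⟩
      rw [← (hP e he).2.2]
      exact Finset.mem_biUnion.2 ⟨i, Finset.mem_univ i, hv⟩
    refine (Finset.card_le_card hsub).trans
      ((Finset.card_biUnion_le_card_mul _ _ 1 fun e he => ?_).trans (by simpa using hdeg v))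
    refine Finset.card_le_one.2 fun a ha b hb => ?_
    simp only [Finset.mem_filter, Finset.mem_image, Finset.mem_univ, true_and] at ha hb he
    obtain ⟨⟨i, rfl⟩, hi⟩ := ha
    obtain ⟨⟨j, rfl⟩, hj⟩ := hb
    rw [(hP e he.1).2.1 v i j hi hj]
  obtain ⟨φ, hφ, hmap⟩ := h _ hunif hdeg'
  refine ⟨φ, hφ, fun e he => ?_⟩
  rw [unionEdges, Finset.mem_filter, Finset.card_image_of_injective _ hφ]
  refine ⟨Finset.mem_image.2 ⟨fun i => (P e i).image φ, ?_, ?_⟩, hcard e he⟩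
  · refine Fintype.mem_piFinset.2 fun i => hmap _ ?_
    exact Finset.mem_biUnion.2 ⟨e, he, Finset.mem_image_of_mem _ (Finset.mem_univ i)⟩
  · conv_rhs => rw [← (hP e he).2.2]
    rw [Finset.biUnion_image]

/-- if for some `r' ∣ r` there are `𝓕^(r')(n,Δ)`-universal `r'`-uniform
hypergraphs with `O(n)` vertices and `O(n^{r'-r'/Δ})` edges, then there are
`𝓕^(r)(n,Δ)`-universal `r`-uniform hypergraphs with `O(n)` vertices and
`O(n^{r-r/Δ})` edges. -/
theorem universal_from_divisor (r Δ r' : ℕ) (hr : 3 ≤ r) (hΔ : 2 ≤ Δ) (hr' : 2 ≤ r')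
    (hdvd : r' ∣ r) (c₁ c₂ : ℝ) (hc₁ : 0 < c₁) (hc₂ : 0 < c₂)
    (hyp : ∀ n : ℕ, 1 ≤ n → ∃ (N : ℕ) (EH : Finset (Finset (Fin N))),
      (∀ e ∈ EH, e.card = r') ∧
      (N : ℝ) ≤ c₁ * n ∧
      (EH.card : ℝ) ≤ c₂ * (n : ℝ) ^ ((r' : ℝ) - (r' : ℝ) / (Δ : ℝ)) ∧
      HypergraphUniversal r' n Δ N EH) :
    ∃ C₁ C₂ : ℝ, 0 < C₁ ∧ 0 < C₂ ∧ ∀ n : ℕ, 1 ≤ n →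
      ∃ (N : ℕ) (EH : Finset (Finset (Fin N))),
        (∀ e ∈ EH, e.card = r) ∧
        (N : ℝ) ≤ C₁ * n ∧
        (EH.card : ℝ) ≤ C₂ * (n : ℝ) ^ ((r : ℝ) - (r : ℝ) / (Δ : ℝ)) ∧
        HypergraphUniversal r n Δ N EH := by
  obtain ⟨k, hk⟩ := hdvd
  rw [mul_comm] at hk
  subst hk
  refine ⟨c₁, c₂ ^ k, hc₁, by positivity, fun n hn => ?_⟩
  obtain ⟨N, EH, -, hN, hE, hU⟩ := hyp n hn
  refine ⟨N, unionEdges (k * r') k EH, fun e he => (Finset.mem_filter.1 he).2, hN, ?_,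
    universal_unionEdges hU⟩
  calc ((unionEdges (k * r') k EH).card : ℝ) ≤ (EH.card : ℝ) ^ k := by
        exact_mod_cast card_unionEdges_le _ _ _
    _ ≤ (c₂ * (n : ℝ) ^ ((r' : ℝ) - (r' : ℝ) / (Δ : ℝ))) ^ k := by gcongr
    _ = c₂ ^ k * (n : ℝ) ^ (((k * r' : ℕ) : ℝ) - ((k * r' : ℕ) : ℝ) / (Δ : ℝ)) := by
        rw [mul_pow, ← Real.rpow_mul_natCast (Nat.cast_nonneg n)]
        congr 2
        push_cast
        ring
end

section
/- For every even integer r ≥ 4 and every integer Δ ≥ 2 there exists a constant C = C(r,Δ) > 0 such that for every n ≥ 1 there is an r-uniform hypergraph that is universal for 𝓕^(r)(n,Δ), has at most C·n vertices, and has at most C·n^{r − r/Δ} edges. -/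
set_option linter.unusedSectionVars false

open Finset

/-! ### Existence of an expander -/

theorem pow_self_le_factorial (s : ℕ) : s ^ s ≤ 3 ^ s * s.factorial := by
  have h1 : (s : ℝ) ^ s / s.factorial ≤ Real.exp s :=
    Real.pow_div_factorial_le_exp (s : ℝ) (by positivity) s
  have h2 : Real.exp s ≤ 3 ^ s := by
    rw [← Real.exp_one_pow]
    exact pow_le_pow_left₀ (Real.exp_pos 1).le (Real.exp_one_lt_d9.le.trans (by norm_num)) s
  have h3 : (0 : ℝ) < s.factorial := by exact_mod_cast s.factorial_pos
  have h4 : (s : ℝ) ^ s ≤ 3 ^ s * s.factorial := by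
    rw [← div_le_iff₀ h3]; exact h1.trans h2
  exact_mod_cast h4

theorem choose_mul_pow_le (M s : ℕ) : M.choose s * s ^ s ≤ (3 * M) ^ s := by
  calc M.choose s * s ^ s ≤ M.choose s * (3 ^ s * s.factorial) :=
        Nat.mul_le_mul_left _ (pow_self_le_factorial s)
    _ = 3 ^ s * (s.factorial * M.choose s) := by ring
    _ = 3 ^ s * M.descFactorial s := by rw [Nat.descFactorial_eq_factorial_mul_choose]
    _ ≤ 3 ^ s * M ^ s := Nat.mul_le_mul_left _ (Nat.descFactorial_le_pow M s)
    _ = (3 * M) ^ s := by rw [mul_pow]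

/-- The bound on one term of the union bound: the left-hand factors count the sets of `s` sources,
of `4 s` targets and of `16 s` out of the `32 s` arcs, and the ways to send these arcs to the
targets. As `s ≤ 2 b`, the probability of such an event is at most `4 ^ (-s)`. -/
theorem union_term_le (b s : ℕ) (hs : s ≤ 2 * b) :
    (128 * b).choose s * (128 * b).choose (4 * s) * (32 * s).choose (16 * s)
      * (4 * s) ^ (16 * s) * 4 ^ s ≤ (128 * b) ^ (16 * s) := by
  set M := 128 * b with hM
  have h1 := choose_mul_pow_le M s
  have h2 := choose_mul_pow_le M (4 * s)
  have h3 : (32 * s).choose (16 * s) ≤ 2 ^ (32 * s) := Nat.choose_le_two_pow _ _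
  have h4 : (16 * (4 * s)) ^ (11 * s) ≤ M ^ (11 * s) := Nat.pow_le_pow_left (by omega) _
  calc M.choose s * M.choose (4 * s) * (32 * s).choose (16 * s) * (4 * s) ^ (16 * s) * 4 ^ s
      = (M.choose s * s ^ s) * (M.choose (4 * s) * (4 * s) ^ (4 * s)) * (32 * s).choose (16 * s)
        * (4 * s) ^ (11 * s) * (4 ^ s * 4 ^ s) := by
          rw [show 16 * s = s + 4 * s + 11 * s by ring, pow_add, pow_add, mul_pow 4 s s]; ring
    _ ≤ (3 * M) ^ s * (3 * M) ^ (4 * s) * 2 ^ (32 * s) * (4 * s) ^ (11 * s) * (4 ^ s * 4 ^ s) := by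
          gcongr
    _ = M ^ (5 * s) * ((243 * 2 ^ 32 * 16) ^ s * (4 * s) ^ (11 * s)) := by
          simp only [mul_pow, ← pow_mul]
          rw [show (243 : ℕ) = 3 ^ 5 by norm_num, show (16 : ℕ) = 4 ^ 2 by norm_num]
          simp only [← pow_mul]
          ring
    _ ≤ M ^ (5 * s) * ((16 ^ 11) ^ s * (4 * s) ^ (11 * s)) := by
          gcongr; norm_num
    _ = M ^ (5 * s) * (16 * (4 * s)) ^ (11 * s) := by
          rw [mul_pow 16 (4 * s), ← pow_mul]
    _ ≤ M ^ (5 * s) * M ^ (11 * s) := by gcongr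
    _ = M ^ (16 * s) := by rw [← pow_add]; congr 1; ring

theorem card_fun_into {α : Type*} [Fintype α] [DecidableEq α] {M : ℕ} (A : Finset α)
    (T : Finset (Fin M)) :
    #{h : α → Fin M | ∀ a ∈ A, h a ∈ T} = #T ^ #A * M ^ (Fintype.card α - #A) := by
  have : ({h : α → Fin M | ∀ a ∈ A, h a ∈ T} : Finset _)
      = Fintype.piFinset (fun a => if a ∈ A then T else univ) := by
    ext h
    simp only [mem_filter, mem_univ, true_and, Fintype.mem_piFinset]
    refine forall_congr' fun a => ?_
    by_cases ha : a ∈ A <;> simp [ha]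
  rw [this, Fintype.card_piFinset, ← Finset.prod_mul_prod_compl A]
  congr 1
  · rw [Finset.prod_congr rfl (g := fun _ => #T)]
    · simp
    · intro x hx; simp [hx]
  · rw [Finset.prod_congr rfl (g := fun _ => M)]
    · simp [card_compl]
    · intro x hx; simp at hx; simp [hx]

/-- A function `h` is read as a directed graph on `128 b` vertices with `32` arcs `x → h (x, i)`
out of each vertex. By the union bound over random `h`, there is one such that for every small
nonempty set `R` and every set `T` at most four times as large, fewer than half of the arcs out
of `R` end in `T`. -/
theorem exists_expander (b : ℕ) (hb : 1 ≤ b) :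
    ∃ h : Fin (128 * b) × Fin 32 → Fin (128 * b), ∀ R T : Finset (Fin (128 * b)),
      R.Nonempty → #R ≤ 2 * b → #T ≤ 4 * #R →
      #{p : Fin (128 * b) × Fin 32 | p.1 ∈ R ∧ h p ∈ T} < 16 * #R := by
  by_contra! hcon
  set M := 128 * b with hM
  have hM0 : 0 < M := by omega
  let Bd : ℕ → Finset (Fin M × Fin 32 → Fin M) := fun s =>
    (univ.powersetCard s).biUnion fun R : Finset (Fin M) =>
      (univ.powersetCard (4 * s)).biUnion fun T : Finset (Fin M) =>
        ((R ×ˢ (univ : Finset (Fin 32))).powersetCard (16 * s)).biUnion fun A =>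
          {h : Fin M × Fin 32 → Fin M | ∀ a ∈ A, h a ∈ T}
  have hcov : (univ : Finset (Fin M × Fin 32 → Fin M)) ⊆ (Icc 1 (2 * b)).biUnion Bd := by
    intro h _
    obtain ⟨R, T, hR, hRb, hT, hc⟩ := hcon h
    obtain ⟨T', hTT', hT'⟩ := exists_superset_card_eq hT (by simp; omega)
    obtain ⟨A, hA, hAc⟩ := exists_subset_card_eq hc
    simp only [mem_biUnion, Bd, mem_powersetCard]
    refine ⟨#R, mem_Icc.2 ⟨hR.card_pos, hRb⟩, R, ⟨subset_univ _, rfl⟩, T', ⟨subset_univ _, hT'⟩, A,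
      ⟨fun a ha => ?_, hAc⟩, ?_⟩
    · have := hA ha
      simp only [mem_filter, mem_univ, true_and] at this
      simp [this.1]
    · simp only [mem_filter, mem_univ, true_and]
      intro a ha
      have := hA ha
      simp only [mem_filter, mem_univ, true_and] at this
      exact hTT' this.2
  have hBd : ∀ s ∈ Icc 1 (2 * b), (#(Bd s) : ℝ) ≤ (M : ℝ) ^ (32 * M) * (1 / 4) ^ s := by
    intro s hs
    rw [mem_Icc] at hs
    have h1 : #(Bd s) ≤ M.choose s * (M.choose (4 * s) * ((32 * s).choose (16 * s) *
        ((4 * s) ^ (16 * s) * M ^ (32 * M - 16 * s)))) := by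
      refine (card_biUnion_le_card_mul _ _ _ fun R hR => ?_).trans
        (by rw [card_powersetCard, card_univ, Fintype.card_fin])
      rw [mem_powersetCard] at hR
      refine (card_biUnion_le_card_mul _ _ _ fun T hT => ?_).trans
        (by rw [card_powersetCard, card_univ, Fintype.card_fin])
      rw [mem_powersetCard] at hT
      refine (card_biUnion_le_card_mul _ _ _ fun A hA => ?_).trans
        (by rw [card_powersetCard, card_product, hR.2, card_univ, Fintype.card_fin, mul_comm s])
      rw [mem_powersetCard] at hA
      rw [card_fun_into, hT.2, hA.2]
      simp [mul_comm]
    have h2 := union_term_le b s hs.2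
    rw [← hM] at h2
    have h3 : #(Bd s) * 4 ^ s ≤ M ^ (32 * M) := by
      calc #(Bd s) * 4 ^ s ≤ (M.choose s * (M.choose (4 * s) * ((32 * s).choose (16 * s) *
            ((4 * s) ^ (16 * s) * M ^ (32 * M - 16 * s))))) * 4 ^ s := by gcongr
        _ = (M.choose s * M.choose (4 * s) * (32 * s).choose (16 * s)
              * (4 * s) ^ (16 * s) * 4 ^ s) * M ^ (32 * M - 16 * s) := by ring
        _ ≤ M ^ (16 * s) * M ^ (32 * M - 16 * s) := by gcongr
        _ = M ^ (32 * M) := by rw [← pow_add]; congr 1; omega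
    have h4 : (#(Bd s) : ℝ) * 4 ^ s ≤ (M : ℝ) ^ (32 * M) := by exact_mod_cast h3
    rw [one_div, inv_pow, ← div_eq_mul_inv, le_div_iff₀ (by positivity)]
    exact h4
  have h5 : (#(univ : Finset (Fin M × Fin 32 → Fin M)) : ℝ) = (M : ℝ) ^ (32 * M) := by
    simp [mul_comm]
  have h6 : ((M : ℝ) ^ (32 * M)) ≤ ∑ s ∈ Icc 1 (2 * b), (M : ℝ) ^ (32 * M) * (1 / 4) ^ s := by
    rw [← h5]
    refine le_trans ?_ (Finset.sum_le_sum (fun s hs => (hBd s hs).trans_eq (by rw [h5])))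
    exact_mod_cast (card_le_card hcov).trans card_biUnion_le
  rw [← Finset.mul_sum] at h6
  have h7 : ∑ s ∈ Icc 1 (2 * b), (1 / 4 : ℝ) ^ s ≤ 1 / 3 := by
    have : ∑ s ∈ Icc 1 (2 * b), (1 / 4 : ℝ) ^ s = (∑ s ∈ range (2 * b), (1 / 4 : ℝ) ^ s) * (1 / 4) := by
      rw [Finset.sum_mul, ← Finset.Ico_succ_right_eq_Icc, Order.succ_eq_add_one,
        Finset.sum_Ico_eq_sum_range]
      simp [pow_add, mul_comm]
    rw [this, geom_sum_eq (by norm_num)]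
    have : (0 : ℝ) < (1 / 4) ^ (2 * b) := by positivity
    rw [div_mul_eq_mul_div, div_le_iff_of_neg (by norm_num)]
    nlinarith
  have h8 : (0 : ℝ) < (M : ℝ) ^ (32 * M) := by positivity
  nlinarith

/-! ### Walks avoiding moving obstacles -/

section Walks
variable {b : ℕ}

/-- The expansion property of the directed graph with arcs `x → h (x, i)`: fewer than half of the
arcs out of a small nonempty set `R` end in a given set of size at most `4 * #R`. -/
def Expands (h : Fin (128 * b) × Fin 32 → Fin (128 * b)) : Prop :=
  ∀ R T : Finset (Fin (128 * b)), R.Nonempty → #R ≤ 2 * b → #T ≤ 4 * #R →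
    #{p : Fin (128 * b) × Fin 32 | p.1 ∈ R ∧ h p ∈ T} < 16 * #R

/-- The vertices at which a walk of `n` steps that avoids `B j` at each time `j ≤ n` should not be
started: they lie in `B 0`, or at least half of their arcs lead to vertices that are bad for the
remaining `n - 1` steps. -/
def bad (h : Fin (128 * b) × Fin 32 → Fin (128 * b)) :
    ℕ → (ℕ → Finset (Fin (128 * b))) → Finset (Fin (128 * b))
  | 0, B => B 0
  | n + 1, B => B 0 ∪
    ({x | 16 ≤ #{i : Fin 32 | h (x, i) ∈ bad h n (fun j => B (j + 1))}} : Finset _)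

theorem card_pairs_ge (h : Fin (128 * b) × Fin 32 → Fin (128 * b)) (R T : Finset (Fin (128 * b)))
    (hR : ∀ x ∈ R, 16 ≤ #{i : Fin 32 | h (x, i) ∈ T}) :
    16 * #R ≤ #{p : Fin (128 * b) × Fin 32 | p.1 ∈ R ∧ h p ∈ T} := by
  have : #{p : Fin (128 * b) × Fin 32 | p.1 ∈ R ∧ h p ∈ T}
      = ∑ x ∈ R, #{i : Fin 32 | h (x, i) ∈ T} := by
    rw [← card_sigma]
    refine card_bij' (fun p _ => ⟨p.1, p.2⟩) (fun p _ => (p.1, p.2)) ?_ ?_ ?_ ?_ <;>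
      simp
  rw [this, mul_comm, ← smul_eq_mul]
  exact card_nsmul_le_sum _ _ _ hR

/-- Few vertices are bad: by expansion, at most `b` vertices send half of their arcs into the at most
`2 b` vertices that are bad one step later, and `B 0` contains at most `b` vertices. -/
theorem card_bad_le {h : Fin (128 * b) × Fin 32 → Fin (128 * b)} (hh : Expands h) (hb : 1 ≤ b)
    (n : ℕ) : ∀ B : ℕ → Finset (Fin (128 * b)), (∀ j, #(B j) ≤ b) → #(bad h n B) ≤ 2 * b := by
  induction n with
  | zero => intro B hB; have := hB 0; simp only [bad]; omega
  | succ n ih =>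
    intro B hB
    have h1 := ih (fun j => B (j + 1)) (fun j => hB _)
    have h2 : #({x | 16 ≤ #{i : Fin 32 | h (x, i) ∈ bad h n (fun j => B (j + 1))}} :
        Finset (Fin (128 * b))) ≤ b := by
      by_contra! hcon
      obtain ⟨R, hR, hRc⟩ := exists_subset_card_eq hcon.le
      have h3 := card_pairs_ge h R (bad h n (fun j => B (j + 1)))
        (fun x hx => by simpa using hR hx)
      have h4 := hh R (bad h n (fun j => B (j + 1))) (card_pos.1 (by omega)) (by omega) (by omega)
      omega
    have h3 := card_union_le (B 0) ({x | 16 ≤ #{i : Fin 32 | h (x, i) ∈ bad h n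
      (fun j => B (j + 1))}} : Finset (Fin (128 * b)))
    have h4 := hB 0
    simp only [bad]
    omega

theorem B_subset_bad (h : Fin (128 * b) × Fin 32 → Fin (128 * b)) (n : ℕ)
    (B : ℕ → Finset (Fin (128 * b))) : B 0 ⊆ bad h n B := by
  cases n with
  | zero => simp [bad]
  | succ n => exact subset_union_left

/-- From a set `R` of vertices that are not bad, `#R * 2 ^ n` vertices can be reached by walks of
`n` steps that are self-avoiding, avoid `B j` at time `j`, and leave the set `W ⊇ R` of used
vertices at once. In each step the frontier doubles: at least half of the arcs out of `R` lead to
vertices that are not bad, and by expansion these heads, minus `W`, number at least `2 * #R`. -/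
theorem grow {h : Fin (128 * b) × Fin 32 → Fin (128 * b)} (hh : Expands h) (n : ℕ) :
    ∀ (B : ℕ → Finset (Fin (128 * b))) (R W : Finset (Fin (128 * b))), R.Nonempty →
      Disjoint R (bad h n B) → R ⊆ W → #W < 2 * #R → #R * 2 ^ n ≤ 4 * b →
      ∃ S : Finset (Fin (128 * b)), #S = #R * 2 ^ n ∧ ∀ y ∈ S, ∃ w : ℕ → Fin (128 * b),
        w 0 ∈ R ∧ w n = y ∧ (∀ j < n, ∃ i, h (w j, i) = w (j + 1)) ∧ (∀ j ≤ n, w j ∉ B j) ∧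
        (∀ j, 1 ≤ j → j ≤ n → w j ∉ W) ∧ Set.InjOn w (Set.Iic n) := by
  induction n with
  | zero =>
    intro B R W hR hd hRW hW hb
    refine ⟨R, by simp, fun y hy => ⟨fun _ => y, hy, rfl, by simp, ?_, by omega, ?_⟩⟩
    · intro j hj
      obtain rfl : j = 0 := by omega
      exact fun hc => disjoint_left.1 hd hy (B_subset_bad h 0 B hc)
    · intro x hx y hy _
      simp at hx hy
      omega
  | succ n ih =>
    intro B R W hR hd hRW hW hb
    set Bd := bad h n (fun j => B (j + 1)) with hBd
    set T : Finset (Fin (128 * b)) := ({p : Fin (128 * b) × Fin 32 | p.1 ∈ R ∧ h p ∉ Bd} :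
      Finset _).image h with hT
    have hpow : 0 < 2 ^ n := by positivity
    have hR2 : #R ≤ 2 * b := by
      rw [pow_succ] at hb
      nlinarith
    have h1 : ∀ x ∈ R, 16 ≤ #{i : Fin 32 | h (x, i) ∈ T} := by
      intro x hx
      have h2 : x ∉ bad h (n + 1) B := disjoint_left.1 hd hx
      simp only [bad, mem_union, mem_filter, mem_univ, true_and, not_or, not_le, ← hBd] at h2
      have h3 := card_filter_add_card_filter_not (s := (univ : Finset (Fin 32)))
        (fun i => h (x, i) ∈ Bd)
      have h4 : ({i : Fin 32 | ¬ h (x, i) ∈ Bd} : Finset (Fin 32)) ⊆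
          ({i : Fin 32 | h (x, i) ∈ T} : Finset (Fin 32)) := by
        intro i hi
        simp only [mem_filter, mem_univ, true_and] at hi ⊢
        exact mem_image.2 ⟨(x, i), by simp [hx, hi], rfl⟩
      have h5 := card_le_card h4
      simp only [card_univ, Fintype.card_fin] at h3
      omega
    have h2 : 4 * #R < #T := by
      by_contra! hc
      have h3 := hh R T hR hR2 hc
      have h4 := card_pairs_ge h R T h1
      omega
    have h3 : 2 * #R ≤ #(T \ W) := by
      have := le_card_sdiff W T
      omega
    obtain ⟨R', hR', hR'c⟩ := exists_subset_card_eq h3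
    have hdis : Disjoint W R' := by
      rw [disjoint_left]
      intro x hx hx'
      exact (mem_sdiff.1 (hR' hx')).2 hx
    have hpos := hR.card_pos
    obtain ⟨S, hS, hw⟩ := ih (fun j => B (j + 1)) R' (W ∪ R') (card_pos.1 (by omega)) (by
        rw [disjoint_left]
        intro x hx
        have := (mem_sdiff.1 (hR' hx)).1
        rw [hT, mem_image] at this
        obtain ⟨p, hp, rfl⟩ := this
        exact (mem_filter.1 hp).2.2) subset_union_right
      (by rw [card_union_of_disjoint hdis]; omega)
      (by rw [hR'c]; rw [pow_succ] at hb; nlinarith)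
    refine ⟨S, by rw [hS, hR'c, pow_succ]; ring, fun y hy => ?_⟩
    obtain ⟨w, hw0, hwn, hws, hwB, hwW, hwi⟩ := hw y hy
    have h5 := (mem_sdiff.1 (hR' hw0))
    obtain ⟨p, hp, hpw⟩ := mem_image.1 h5.1
    simp only [mem_filter, mem_univ, true_and] at hp
    have hall : ∀ j ≤ n, w j ∉ W := by
      intro j hj
      rcases Nat.eq_zero_or_pos j with rfl | hj0
      · exact h5.2
      · exact fun hc => hwW j hj0 hj (mem_union_left _ hc)
    refine ⟨fun j => Nat.casesOn j p.1 w, hp.1, hwn, ?_, ?_, ?_, ?_⟩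
    · intro j hj
      cases j with
      | zero => exact ⟨p.2, hpw⟩
      | succ j => exact hws j (by omega)
    · intro j hj
      cases j with
      | zero => exact fun hc => disjoint_left.1 hd hp.1 (B_subset_bad h _ B hc)
      | succ j => exact hwB j (by omega)
    · intro j h1 hj
      cases j with
      | zero => omega
      | succ j => exact hall j (by omega)
    · intro i hi j hj hij
      simp only [Set.mem_Iic] at hi hj
      cases i with
      | zero =>
        cases j with
        | zero => rfl
        | succ j =>
          simp only at hij
          exact absurd (hij ▸ hRW hp.1) (hall j (by omega))
      | succ i =>
        cases j with
        | zero =>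
          simp only at hij
          exact absurd (hij ▸ hRW hp.1) (hall i (by omega))
        | succ j =>
          have := hwi (show i ∈ Set.Iic n by simp; omega) (show j ∈ Set.Iic n by simp; omega) hij
          omega

/-- The case of `grow` with a single starting vertex. The `2 ^ L > 2 b` possible end vertices cannot
all lie in a set `Y` of size at most `2 b`. -/
theorem chunk {h : Fin (128 * b) × Fin 32 → Fin (128 * b)} (hh : Expands h) {L : ℕ}
    (hL : 2 * b < 2 ^ L) (hL' : 2 ^ L ≤ 4 * b) (B : ℕ → Finset (Fin (128 * b)))
    (x₀ : Fin (128 * b)) (hx₀ : x₀ ∉ bad h L B) (Y : Finset (Fin (128 * b))) (hY : #Y ≤ 2 * b) :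
    ∃ w : ℕ → Fin (128 * b), w 0 = x₀ ∧ w L ∉ Y ∧ (∀ j < L, ∃ i, h (w j, i) = w (j + 1)) ∧
      (∀ j ≤ L, w j ∉ B j) ∧ Set.InjOn w (Set.Iic L) := by
  obtain ⟨S, hS, hw⟩ := grow hh L B {x₀} {x₀} (by simp) (by simpa) subset_rfl (by simp)
    (by simpa using hL')
  have : ∃ y ∈ S, y ∉ Y := by
    by_contra! hc
    have := card_le_card (show S ⊆ Y from hc)
    simp at hS
    omega
  obtain ⟨y, hy, hyY⟩ := this
  obtain ⟨w, h0, h1, h2, h3, -, h4⟩ := hw y hy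
  exact ⟨w, by simpa using h0, h1 ▸ hyY, h2, h3, h4⟩

/-- Vertices of large in-degree. -/
def heavy (h : Fin (128 * b) × Fin 32 → Fin (128 * b)) : Finset (Fin (128 * b)) :=
  {y | 8192 < #{p : Fin (128 * b) × Fin 32 | h p = y}}

/-- Symbols are adjacent if they are equal or joined by an arc whose head is not heavy. Leaving out
arcs into heavy vertices bounds the degree of this symmetric relation. -/
def hostAdj (h : Fin (128 * b) × Fin 32 → Fin (128 * b)) (x y : Fin (128 * b)) : Prop :=
  x = y ∨ (∃ i, h (x, i) = y ∧ y ∉ heavy h) ∨ (∃ i, h (y, i) = x ∧ x ∉ heavy h)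

theorem two_mul_card_heavy_le (h : Fin (128 * b) × Fin 32 → Fin (128 * b)) :
    2 * #(heavy h) ≤ b := by
  have h1 : ∑ y ∈ heavy h, #{p : Fin (128 * b) × Fin 32 | h p = y} ≤ 32 * (128 * b) := by
    refine (Finset.sum_le_sum_of_subset (subset_univ _)).trans ?_
    rw [← card_eq_sum_card_fiberwise (fun x _ => by simp)]
    simp [mul_comm]
  have h2 : #(heavy h) • 8193 ≤ ∑ y ∈ heavy h, #{p : Fin (128 * b) × Fin 32 | h p = y} :=
    card_nsmul_le_sum _ _ _ fun y hy => (mem_filter.1 hy).2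
  rw [smul_eq_mul] at h2
  omega

theorem hostAdj_symm {h : Fin (128 * b) × Fin 32 → Fin (128 * b)} {x y : Fin (128 * b)}
    (hxy : hostAdj h x y) : hostAdj h y x := by
  rcases hxy with rfl | hx | hx
  · exact Or.inl rfl
  · exact Or.inr (Or.inr hx)
  · exact Or.inr (Or.inl hx)

open Classical in
theorem card_hostAdj_le (h : Fin (128 * b) × Fin 32 → Fin (128 * b)) (x : Fin (128 * b)) :
    #{y | hostAdj h x y} ≤ 8225 := by
  have h1 : ({y | hostAdj h x y} : Finset (Fin (128 * b))) ⊆ {x} ∪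
      (univ.image (fun i => h (x, i)) ∪
        if x ∈ heavy h then ∅ else ({p | h p = x} : Finset (Fin (128 * b) × Fin 32)).image Prod.fst) := by
    intro y hy
    rw [mem_filter] at hy
    replace hy := hy.2
    rcases hy with rfl | ⟨i, hi, -⟩ | ⟨i, hi, hx⟩
    · simp
    · refine mem_union_right _ (mem_union_left _ ?_)
      simp only [mem_image, mem_univ, true_and]
      exact ⟨i, hi⟩
    · refine mem_union_right _ (mem_union_right _ ?_)
      rw [if_neg hx]
      simp only [mem_image, mem_filter, mem_univ, true_and]
      exact ⟨(y, i), hi, rfl⟩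
  refine (card_le_card h1).trans ((card_union_le _ _).trans ?_)
  have h2 : #(univ.image (fun i => h (x, i))) ≤ 32 := card_image_le.trans (by simp)
  have h3 : #(if x ∈ heavy h then ∅ else ({p | h p = x} :
      Finset (Fin (128 * b) × Fin 32)).image Prod.fst) ≤ 8192 := by
    split_ifs with hx
    · simp
    · refine card_image_le.trans ?_
      simpa [heavy] using hx
  have h4 := card_union_le (univ.image (fun i => h (x, i))) (if x ∈ heavy h then ∅ else ({p | h p = x} :
      Finset (Fin (128 * b) × Fin 32)).image Prod.fst)
  simp only [card_singleton]
  omega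

end Walks

/-! ### A walk that spreads its visits evenly -/

section Piece
variable {b : ℕ} {V κ : Type*} [DecidableEq V] [DecidableEq κ]

/-- The number of items of class `k` at the symbol `y`: those present initially, and those in `U`
whose visit, at time `τ v ≤ T` of the walk `x`, takes place at `y`. -/
def load (U : Finset V) (τ : V → ℕ) (c : V → κ) (cnt : κ → Fin (128 * b) → ℕ)
    (x : ℕ → Fin (128 * b)) (T : ℕ) (k : κ) (y : Fin (128 * b)) : ℕ :=
  cnt k y + #{v ∈ U | c v = k ∧ τ v ≤ T ∧ x (τ v) = y}

/-- The symbols to be avoided at time `p`: the heavy ones, and those that at time `T` have already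
reached the threshold load for the class of an item visited at time `p`. -/
def forb (h : Fin (128 * b) × Fin 32 → Fin (128 * b)) (U : Finset V) (τ : V → ℕ) (c : V → κ)
    (cnt : κ → Fin (128 * b) → ℕ) (θ : κ → ℕ)
    (x : ℕ → Fin (128 * b)) (T : ℕ) (p : ℕ) : Finset (Fin (128 * b)) :=
  heavy h ∪ (U.filter (fun v => τ v = p)).biUnion
    (fun v => {y | θ (c v) ≤ load U τ c cnt x T (c v) y})

/-- At most `b / 2` symbols are heavy. By Markov's inequality at most `b / 4` symbols have reached the
threshold of a given class, and at most two classes matter at a given time. -/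
theorem card_forb_le (h : Fin (128 * b) × Fin 32 → Fin (128 * b)) (U : Finset V) (τ : V → ℕ)
    (c : V → κ) (cnt : κ → Fin (128 * b) → ℕ) (θ : κ → ℕ) (hθ0 : ∀ k, 0 < θ k)
    (hτ : ∀ t, #{v ∈ U | τ v = t} ≤ 2)
    (hθ : ∀ k, 4 * (∑ y, cnt k y + #{v ∈ U | c v = k}) ≤ θ k * b)
    (x : ℕ → Fin (128 * b)) (T p : ℕ) : #(forb h U τ c cnt θ x T p) ≤ b := by
  have h1 : ∀ k, 4 * #{y | θ k ≤ load U τ c cnt x T k y} ≤ b := by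
    intro k
    have h2 : #{y | θ k ≤ load U τ c cnt x T k y} • θ k
        ≤ ∑ y ∈ ({y | θ k ≤ load U τ c cnt x T k y} : Finset _), load U τ c cnt x T k y :=
      card_nsmul_le_sum _ _ _ fun y hy => (mem_filter.1 hy).2
    have h3 : ∑ y ∈ ({y | θ k ≤ load U τ c cnt x T k y} : Finset _), load U τ c cnt x T k y
        ≤ ∑ y, cnt k y + #{v ∈ U | c v = k} := by
      refine (Finset.sum_le_sum_of_subset (subset_univ _)).trans ?_
      simp only [load, sum_add_distrib]
      gcongr
      rw [← card_biUnion]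
      · refine card_le_card fun v hv => ?_
        simp only [mem_biUnion, mem_filter, mem_univ, true_and] at hv ⊢
        obtain ⟨y, h1, h2, -⟩ := hv
        exact ⟨h1, h2⟩
      · intro y _ y' _ hne
        simp only [Function.onFun]
        rw [disjoint_left]
        intro v hv hv'
        simp only [mem_filter] at hv hv'
        exact hne (hv.2.2.2.symm.trans hv'.2.2.2)
    have h4 := hθ k
    have h5 : θ k * (4 * #{y | θ k ≤ load U τ c cnt x T k y}) ≤ θ k * b := by
      rw [smul_eq_mul] at h2
      nlinarith
    exact Nat.le_of_mul_le_mul_left h5 (hθ0 k)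
  have h2 : 4 * #((U.filter (fun v => τ v = p)).biUnion
    (fun v => ({y | θ (c v) ≤ load U τ c cnt x T (c v) y} : Finset _))) ≤ 2 * b := by
    calc _ ≤ 4 * ∑ v ∈ U.filter (fun v => τ v = p), #{y | θ (c v) ≤ load U τ c cnt x T (c v) y} := by
          gcongr; exact card_biUnion_le
      _ = ∑ v ∈ U.filter (fun v => τ v = p), 4 * #{y | θ (c v) ≤ load U τ c cnt x T (c v) y} := by
          rw [mul_sum]
      _ ≤ #(U.filter (fun v => τ v = p)) • b := sum_le_card_nsmul _ _ _ fun v _ => h1 (c v)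
      _ ≤ 2 * b := by rw [smul_eq_mul]; exact Nat.mul_le_mul_right _ (hτ p)
  have h3 := two_mul_card_heavy_le h
  have h4 := card_union_le (heavy h) ((U.filter (fun v => τ v = p)).biUnion
    (fun v => ({y | θ (c v) ≤ load U τ c cnt x T (c v) y} : Finset _)))
  unfold forb
  omega

theorem forb_congr (h : Fin (128 * b) × Fin 32 → Fin (128 * b)) (U : Finset V) (τ : V → ℕ)
    (c : V → κ) (cnt : κ → Fin (128 * b) → ℕ) (θ : κ → ℕ) {x x' : ℕ → Fin (128 * b)} {T : ℕ}
    (hx : ∀ t ≤ T, x t = x' t) (p : ℕ) :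
    forb h U τ c cnt θ x T p = forb h U τ c cnt θ x' T p := by
  have : ∀ k y, load U τ c cnt x T k y = load U τ c cnt x' T k y := by
    intro k y
    unfold load
    congr 2
    refine filter_congr fun v _ => ?_
    refine and_congr_right fun _ => and_congr_right fun h => ?_
    rw [hx _ h]
  simp only [forb, this]

/-- A walk composed of `k` chunks of `L` steps. The symbols forbidden in a chunk are determined by the
loads before the preceding chunk; thus, when a chunk is constructed, the obstacles of the next one
are known already, and the chunk can end at a vertex that is not bad for them. -/
theorem chunks {h : Fin (128 * b) × Fin 32 → Fin (128 * b)} (hh : Expands h) (hb : 1 ≤ b) {L : ℕ}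
    (hL : 2 * b < 2 ^ L) (hL' : 2 ^ L ≤ 4 * b) (U : Finset V) (τ : V → ℕ)
    (c : V → κ) (cnt : κ → Fin (128 * b) → ℕ) (θ : κ → ℕ) (hθ0 : ∀ k, 0 < θ k)
    (hτ : ∀ t, #{v ∈ U | τ v = t} ≤ 2)
    (hτ0 : ∀ v ∈ U, 1 ≤ τ v)
    (hθ : ∀ k, 4 * (∑ y, cnt k y + #{v ∈ U | c v = k}) ≤ θ k * b) (k : ℕ) :
    ∃ x : ℕ → Fin (128 * b), (∀ p < k * L, hostAdj h (x p) (x (p + 1))) ∧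
      (∀ k' < k, ∀ p ∈ Set.Ioc (k' * L) ((k' + 1) * L), x p ∉ forb h U τ c cnt θ x ((k' - 1) * L) p) ∧
      (∀ k' < k, Set.InjOn x (Set.Ioc (k' * L) ((k' + 1) * L))) ∧
      x (k * L) ∉ bad h L (fun j => forb h U τ c cnt θ x ((k - 1) * L) (k * L + j)) := by
  have hF := card_forb_le h U τ c cnt θ hθ0 hτ hθ
  induction k with
  | zero =>
    -- no item is carried at time `0`, so the forbidden sets do not depend on the walk yet
    have h0 : ∀ x x' : ℕ → Fin (128 * b), ∀ p,
        forb h U τ c cnt θ x 0 p = forb h U τ c cnt θ x' 0 p := by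
      intro x x' p
      have : ∀ k y, load U τ c cnt x 0 k y = load U τ c cnt x' 0 k y := by
        intro k y
        unfold load
        congr 2
        refine filter_congr fun v hv => ?_
        refine and_congr_right fun _ => and_congr_right fun h => ?_
        have := hτ0 v hv
        omega
      simp only [forb, this]
    obtain ⟨y, hy⟩ : ∃ y : Fin (128 * b), y ∉ bad h L (fun j => forb h U τ c cnt θ
        (fun _ => ⟨0, by omega⟩) 0 j) := by
      by_contra! hc
      have h1 := card_le_card (show univ ⊆ bad h L (fun j => forb h U τ c cnt θ
        (fun _ => ⟨0, by omega⟩) 0 j) from fun y _ => hc y)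
      have h2 := card_bad_le hh hb L (fun j => forb h U τ c cnt θ
        (fun _ => ⟨0, by omega⟩) 0 j) (fun j => hF _ _ _)
      simp only [card_univ, Fintype.card_fin] at h1
      omega
    refine ⟨fun _ => y, by simp, by simp, by simp, ?_⟩
    simp only [Nat.zero_sub, Nat.zero_mul, Nat.zero_add]
    simp only [h0 (fun _ => y) (fun _ => ⟨0, by omega⟩)]
    exact hy
  | succ k ih =>
    obtain ⟨x, hx1, hx2, hx3, hx4⟩ := ih
    obtain ⟨w, hw0, hwL, hws, hwB, hwi⟩ := chunk hh hL hL' _ _ hx4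
      (bad h L (fun j => forb h U τ c cnt θ x (k * L) ((k + 1) * L + j)))
      (card_bad_le hh hb _ _ (fun j => hF _ _ _))
    have hk : (k + 1) * L = k * L + L := by ring
    have hkk : (k - 1) * L ≤ k * L := Nat.mul_le_mul_right _ (by omega)
    let x' : ℕ → Fin (128 * b) := fun p => if p ≤ k * L then x p else w (p - k * L)
    have hxx : ∀ p ≤ k * L, x p = x' p := fun p hp => by simp [x', hp]
    have hxw : ∀ p, k * L ≤ p → x' p = w (p - k * L) := by
      intro p hp
      rcases hp.eq_or_lt with rfl | hp
      · simp [x', hw0]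
      · simp [x', not_le.2 hp]
    refine ⟨x', ?_, ?_, ?_, ?_⟩
    · intro p hp
      rcases lt_or_ge p (k * L) with h1 | h1
      · rw [← hxx p h1.le, ← hxx (p + 1) h1]
        exact hx1 p h1
      · rw [hxw p h1, hxw (p + 1) (by omega)]
        obtain ⟨i, hi⟩ := hws (p - k * L) (by omega)
        have h2 : p + 1 - k * L = p - k * L + 1 := by omega
        rw [h2]
        refine Or.inr (Or.inl ⟨i, hi, fun hc => ?_⟩)
        exact hwB (p - k * L + 1) (by omega) (mem_union_left _ hc)
    · intro k' hk' p hp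
      rcases Nat.lt_succ_iff_lt_or_eq.1 hk' with h1 | rfl
      · have h2 : (k' + 1) * L ≤ k * L := Nat.mul_le_mul_right _ h1
        have h3 : (k' - 1) * L ≤ k * L := Nat.mul_le_mul_right _ (by omega)
        rw [← hxx p (hp.2.trans h2), ← forb_congr h U τ c cnt θ (fun t ht => hxx t (ht.trans h3))]
        exact hx2 k' h1 p hp
      · have h3 := hp.1
        have h4 := hp.2
        rw [hxw p hp.1.le, ← forb_congr h U τ c cnt θ (fun t ht => hxx t (ht.trans hkk))]
        have h5 := hwB (p - k' * L) (by omega)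
        rwa [show k' * L + (p - k' * L) = p by omega] at h5
    · intro k' hk'
      rcases Nat.lt_succ_iff_lt_or_eq.1 hk' with h1 | rfl
      · have h2 : (k' + 1) * L ≤ k * L := Nat.mul_le_mul_right _ h1
        exact (hx3 k' h1).congr fun p hp => hxx p (hp.2.trans h2)
      · intro p hp q hq hpq
        have h1 := hp.1
        have h2 := hp.2
        have h3 := hq.1
        have h4 := hq.2
        rw [hxw p h1.le, hxw q h3.le] at hpq
        have := hwi (show _ ∈ Set.Iic L by simp; omega) (show _ ∈ Set.Iic L by simp; omega) hpq
        omega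
    · rw [hxw _ (by omega), show (k + 1) * L - k * L = L by omega]
      simp only [Nat.add_sub_cancel]
      simp only [← forb_congr h U τ c cnt θ hxx]
      exact hwL

/-- A walk for all items of `U`, visited at times `τ` with at most two at a time, along which no load
is pushed beyond `θ + 4`. When the last visit to a symbol takes place, the load of the symbol
before the preceding chunk is less than `θ`; since a chunk visits a symbol only once, the last two
chunks contribute at most two items each. -/
theorem piece {h : Fin (128 * b) × Fin 32 → Fin (128 * b)} (hh : Expands h) (hb : 1 ≤ b)
    (U : Finset V) (τ : V → ℕ)
    (c : V → κ) (cnt : κ → Fin (128 * b) → ℕ) (θ : κ → ℕ) (hθ0 : ∀ k, 0 < θ k)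
    (hτ : ∀ t, #{v ∈ U | τ v = t} ≤ 2)
    (hθ : ∀ k, 4 * (∑ y, cnt k y + #{v ∈ U | c v = k}) ≤ θ k * b) :
    ∃ x : ℕ → Fin (128 * b), (∀ p, hostAdj h (x p) (x (p + 1))) ∧
      ∀ k y, cnt k y + #{v ∈ U | c v = k ∧ x (τ v) = y} ≤ max (cnt k y) (θ k + 4) := by
  obtain ⟨L, hL, hL'⟩ : ∃ L, 2 * b < 2 ^ L ∧ 2 ^ L ≤ 4 * b := by
    refine ⟨Nat.log 2 (2 * b) + 1, Nat.lt_pow_succ_log_self (by norm_num) _, ?_⟩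
    have := Nat.pow_log_le_self 2 (show 2 * b ≠ 0 by omega)
    rw [pow_succ]; omega
  have hL0 : 1 ≤ L := by
    by_contra! h0
    obtain rfl : L = 0 := by omega
    simp at hL
    omega
  -- times are shifted by one, because the walks of `chunks` carry no item at time `0`
  set σ : V → ℕ := fun v => τ v + 1 with hσ
  have hσ2 : ∀ t, #{v ∈ U | σ v = t} ≤ 2 := by
    intro t
    refine le_trans (card_le_card ?_) (hτ (t - 1))
    intro v hv
    simp only [mem_filter, hσ] at hv ⊢
    exact ⟨hv.1, by omega⟩
  obtain ⟨x, hx1, hx2, hx3, -⟩ := chunks hh hb hL hL' U σ c cnt θ hθ0 hσ2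
    (fun v _ => Nat.le_add_left _ _) hθ (U.sup σ)
  have hσK : ∀ v ∈ U, σ v ≤ U.sup σ * L := fun v hv =>
    (Finset.le_sup (f := σ) hv).trans (Nat.le_mul_of_pos_right _ hL0)
  refine ⟨fun p => x (min (p + 1) (U.sup σ * L)), fun p => ?_, fun k y => ?_⟩
  · show hostAdj h (x (min (p + 1) (U.sup σ * L))) (x (min (p + 1 + 1) (U.sup σ * L)))
    rcases lt_or_ge (p + 1) (U.sup σ * L) with h1 | h1
    · rw [min_eq_left h1.le, min_eq_left h1]
      exact hx1 _ h1
    · rw [min_eq_right h1, min_eq_right (by omega)]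
      exact Or.inl rfl
  · have heq : ({v ∈ U | c v = k ∧ x (min (τ v + 1) (U.sup σ * L)) = y} : Finset V)
        = {v ∈ U | c v = k ∧ x (σ v) = y} := by
      refine filter_congr fun v hv => ?_
      have : τ v + 1 ≤ U.sup σ * L := hσK v hv
      rw [min_eq_left this]
    rw [heq]
    rcases (({v ∈ U | c v = k ∧ x (σ v) = y} : Finset V)).eq_empty_or_nonempty with h0 | h0
    · rw [h0]; simp
    obtain ⟨v, hv, hvmax⟩ := exists_max_image _ σ h0
    simp only [mem_filter] at hv hvmax
    -- the chunk containing the last visit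
    obtain ⟨q, hq1, hq2⟩ : ∃ q, q * L < σ v ∧ σ v ≤ (q + 1) * L := by
      refine ⟨τ v / L, ?_, ?_⟩
      · have := Nat.div_mul_le_self (τ v) L
        simp only [hσ]; omega
      · have := Nat.lt_mul_div_succ (τ v) hL0
        simp only [hσ]; rw [mul_comm]; omega
    have hqK : q < U.sup σ := by
      have h1 : q * L < U.sup σ * L := hq1.trans_le (hσK v hv.1)
      exact Nat.lt_of_mul_lt_mul_right h1
    have h1 := hx2 q hqK (σ v) ⟨hq1, hq2⟩
    have h2 : load U σ c cnt x ((q - 1) * L) k y < θ k := by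
      by_contra! hc
      refine h1 (mem_union_right _ ?_)
      simp only [mem_biUnion, mem_filter, mem_univ, true_and]
      refine ⟨v, ⟨hv.1, rfl⟩, ?_⟩
      rw [hv.2.1, hv.2.2]
      exact hc
    have h3 : ∀ q' < U.sup σ, #{w ∈ U | c w = k ∧ x (σ w) = y ∧
        σ w ∈ Set.Ioc (q' * L) ((q' + 1) * L)} ≤ 2 := by
      classical
      intro q' hq'
      rcases (({w ∈ U | c w = k ∧ x (σ w) = y ∧
        σ w ∈ Set.Ioc (q' * L) ((q' + 1) * L)} : Finset V)).eq_empty_or_nonempty with h0 | ⟨w, hw⟩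
      · rw [h0]; simp
      · refine le_trans (card_le_card ?_) (hσ2 (σ w))
        intro u hu
        simp only [mem_filter] at hu hw ⊢
        exact ⟨hu.1, hx3 q' hq' hu.2.2.2 hw.2.2.2 (hu.2.2.1.trans hw.2.2.1.symm)⟩
    have h4 : ({w ∈ U | c w = k ∧ x (σ w) = y} : Finset V) ⊆
        ({w ∈ U | c w = k ∧ σ w ≤ (q - 1) * L ∧ x (σ w) = y} : Finset V) ∪
        (({w ∈ U | c w = k ∧ x (σ w) = y ∧ σ w ∈ Set.Ioc ((q - 1) * L) ((q - 1 + 1) * L)} : Finset V) ∪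
        ({w ∈ U | c w = k ∧ x (σ w) = y ∧ σ w ∈ Set.Ioc (q * L) ((q + 1) * L)} : Finset V)) := by
      intro w hw
      have hm := hvmax w
      simp only [mem_union, mem_filter, Set.mem_Ioc] at hw ⊢ hm
      have hm := hm hw
      rcases Nat.eq_zero_or_pos q with rfl | hq0
      · right; right
        refine ⟨hw.1, hw.2.1, hw.2.2, ?_, by omega⟩
        simp [hσ]
      · have e1 : q - 1 + 1 = q := by omega
        rw [e1]
        rcases le_or_gt (σ w) ((q - 1) * L) with h5 | h5
        · left; exact ⟨hw.1, hw.2.1, h5, hw.2.2⟩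
        · rcases le_or_gt (σ w) (q * L) with h6 | h6
          · right; left; exact ⟨hw.1, hw.2.1, hw.2.2, h5, h6⟩
          · right; right; exact ⟨hw.1, hw.2.1, hw.2.2, h6, by omega⟩
    have h5 := (card_le_card h4).trans ((card_union_le _ _).trans
      (Nat.add_le_add_left (card_union_le _ _) _))
    have h6 := h3 q hqK
    have h7 := h3 (q - 1) (by omega)
    unfold load at h2
    refine le_trans ?_ (le_max_right _ _)
    omega

end Piece

/-! ### Extending words letter by letter -/

section Label
variable {b : ℕ} {V : Type*} [Fintype V] [DecidableEq V]

theorem prefix_ext_iff {α : Type*} (l l' : List α) (a : α) :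
    l <+: l' ++ [a] ↔ l <+: l' ∨ l = l' ++ [a] := by
  rw [List.prefix_concat_iff, or_comm]

/-- Appends one letter to the word `hist v` of every `v ∈ U`, reading letters along a walk, and
preserves the bound on the number of words with a given prefix. Items are classified by their
current word `k`, so that loads count the words with prefix `k ++ [y]`. -/
theorem label_step {h : Fin (128 * b) × Fin 32 → Fin (128 * b)} (hh : Expands h) (hb : 1 ≤ b)
    (Δ : ℕ) (U : Finset V) (τ : V → ℕ) (hτ : ∀ t, #{v ∈ U | τ v = t} ≤ 2)
    (hist : V → List (Option (Fin (128 * b)))) (hlen : ∀ v, (hist v).length ≤ Δ)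
    (hlenU : ∀ v ∈ U, (hist v).length < Δ)
    (h0 : ∀ l, l.length ≤ Δ → #{v | l <+: hist v} ≤ 8 ^ (l.length + 2) * b ^ (Δ - l.length)) :
    ∃ x : ℕ → Fin (128 * b), (∀ p, hostAdj h (x p) (x (p + 1))) ∧
      ∀ l, l.length ≤ Δ → #{v | l <+: if v ∈ U then hist v ++ [some (x (τ v))] else hist v}
        ≤ 8 ^ (l.length + 2) * b ^ (Δ - l.length) := by
  set cnt : List (Option (Fin (128 * b))) → Fin (128 * b) → ℕ :=
    fun k y => #{v | k ++ [some y] <+: hist v} with hcnt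
  -- the term `- 4` makes up for the overshoot permitted by `piece`; words `k` of full length
  -- receive no letter, and their threshold only has to be positive
  set θ : List (Option (Fin (128 * b))) → ℕ := fun k =>
    if k.length < Δ then 8 ^ (k.length + 1 + 2) * b ^ (Δ - (k.length + 1)) - 4 else 1 with hθ
  have hA : ∀ j j' : ℕ, 8 ≤ 8 ^ (j + 2) * b ^ j' := by
    intro j j'
    have h1 : 1 ≤ 8 ^ (j + 1) := Nat.one_le_pow _ _ (by norm_num)
    have h2 : 1 ≤ b ^ j' := Nat.one_le_pow _ _ hb
    have h3 : 8 ^ (j + 2) = 8 ^ (j + 1) * 8 := pow_succ _ _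
    rw [h3]; nlinarith
  have hθ0 : ∀ k, 0 < θ k := by
    intro k
    simp only [hθ]
    split_ifs
    · have := hA (k.length + 1) (Δ - (k.length + 1)); omega
    · norm_num
  have hsum : ∀ k, ∑ y, cnt k y + #{v ∈ U | hist v = k} ≤ #{v | k <+: hist v} := by
    intro k
    simp only [hcnt]
    rw [← card_biUnion, ← card_union_of_disjoint]
    · refine card_le_card fun v hv => ?_
      simp only [mem_union, mem_biUnion, mem_filter, mem_univ, true_and] at hv ⊢
      rcases hv with ⟨y, hy⟩ | ⟨-, rfl⟩
      · exact (List.prefix_append _ _).trans hy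
      · exact List.prefix_rfl
    · rw [disjoint_left]
      intro v hv hv'
      simp only [mem_biUnion, mem_filter, mem_univ, true_and] at hv hv'
      obtain ⟨y, hy⟩ := hv
      have := hy.length_le
      rw [hv'.2] at this
      simp at this
    · intro y _ y' _ hne
      simp only [Function.onFun]
      rw [disjoint_left]
      intro v hv hv'
      simp only [mem_filter, mem_univ, true_and] at hv hv'
      have h1 := List.prefix_of_prefix_length_le hv hv' (by simp)
      have h2 := h1.eq_of_length (by simp)
      simp at h2
      exact hne h2
  have hcond : ∀ k, 4 * (∑ y, cnt k y + #{v ∈ U | hist v = k}) ≤ θ k * b := by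
    intro k
    by_cases hk : k.length < Δ
    · have h1 := (hsum k).trans (h0 k hk.le)
      have h2 : θ k = 8 ^ (k.length + 1 + 2) * b ^ (Δ - (k.length + 1)) - 4 := by simp [hθ, hk]
      have h3 := hA (k.length + 1) (Δ - (k.length + 1))
      have h4 : Δ - k.length = Δ - (k.length + 1) + 1 := by omega
      have h5 := hA k.length (Δ - (k.length + 1))
      rw [h4, pow_succ b] at h1
      have h6 : 8 ^ (k.length + 1 + 2) * b ^ (Δ - (k.length + 1))
          = 8 * (8 ^ (k.length + 2) * b ^ (Δ - (k.length + 1))) := by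
        rw [show k.length + 1 + 2 = k.length + 2 + 1 by ring, pow_succ]; ring
      rw [h2, h6]
      rw [← mul_assoc] at h1
      generalize 8 ^ (k.length + 2) * b ^ (Δ - (k.length + 1)) = Q at *
      calc _ ≤ 4 * (Q * b) := Nat.mul_le_mul_left _ h1
        _ = 4 * Q * b := by ring
        _ ≤ _ := Nat.mul_le_mul_right _ (by omega)
    · have h1 : ∑ y, cnt k y = 0 := by
        refine sum_eq_zero fun y _ => ?_
        simp only [hcnt, card_eq_zero, filter_eq_empty_iff, mem_univ, true_implies]
        intro v hv
        have := hv.length_le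
        have := hlen v
        simp at *
        omega
      have h2 : #{v ∈ U | hist v = k} = 0 := by
        simp only [card_eq_zero, filter_eq_empty_iff]
        rintro v hv rfl
        exact hk (hlenU v hv)
      simp [h1, h2]
  obtain ⟨x, hx1, hx2⟩ := piece hh hb U τ hist cnt θ hθ0 hτ hcond
  refine ⟨x, hx1, fun l hl => ?_⟩
  by_cases hl' : ∃ k y, l = k ++ [some y]
  · obtain ⟨k, y, rfl⟩ := hl'
    simp only [List.length_append, List.length_singleton] at hl ⊢
    have h1 : ({v | k ++ [some y] <+: if v ∈ U then hist v ++ [some (x (τ v))] else hist v} :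
        Finset V) ⊆ ({v | k ++ [some y] <+: hist v} : Finset V) ∪
          ({v ∈ U | hist v = k ∧ x (τ v) = y} : Finset V) := by
      intro v hv
      simp only [mem_union, mem_filter, mem_univ, true_and] at hv ⊢
      by_cases hvU : v ∈ U
      · rw [if_pos hvU, prefix_ext_iff] at hv
        rcases hv with hv | hv
        · exact Or.inl hv
        · right
          have h2 := List.append_inj' hv (by simp)
          simp at h2
          exact ⟨hvU, h2.1.symm, h2.2.symm⟩
      · rw [if_neg hvU] at hv
        exact Or.inl hv
    have h2 := (card_le_card h1).trans (card_union_le _ _)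
    have h3 := h2.trans (hx2 k y)
    refine h3.trans (max_le ?_ ?_)
    · have := h0 (k ++ [some y]) (by simpa using hl)
      simpa using this
    · have h4 := hA (k.length + 1) (Δ - (k.length + 1))
      simp only [hθ, if_pos (show k.length < Δ by omega)]
      omega
  · refine le_trans (card_le_card ?_) (h0 l hl)
    intro v hv
    simp only [mem_filter, mem_univ, true_and] at hv ⊢
    by_cases hvU : v ∈ U
    · rw [if_pos hvU, prefix_ext_iff] at hv
      rcases hv with hv | hv
      · exact hv
      · exact absurd ⟨_, _, hv⟩ hl'
    · rwa [if_neg hvU] at hv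

/-- Iterates `label_step` over `m` walks. The letter that `v` gets from the `p`-th walk is at the
position given by the number of letters `v` has got before. -/
theorem label {h : Fin (128 * b) × Fin 32 → Fin (128 * b)} (hh : Expands h) (hb : 1 ≤ b)
    (Δ : ℕ) (U : ℕ → Finset V) (τ : ℕ → V → ℕ) (m : ℕ)
    (hist₀ : V → List (Option (Fin (128 * b))))
    (h0 : ∀ l, l.length ≤ Δ → #{v | l <+: hist₀ v} ≤ 8 ^ (l.length + 2) * b ^ (Δ - l.length))
    (hτ : ∀ p < m, ∀ t, #{v ∈ U p | τ p v = t} ≤ 2)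
    (hlen : ∀ v, (hist₀ v).length + #{p ∈ range m | v ∈ U p} ≤ Δ) :
    ∃ hist : V → List (Option (Fin (128 * b))), (∀ v, hist₀ v <+: hist v) ∧
      (∀ v, (hist v).length = (hist₀ v).length + #{p ∈ range m | v ∈ U p}) ∧
      (∀ l, l.length ≤ Δ → #{v | l <+: hist v} ≤ 8 ^ (l.length + 2) * b ^ (Δ - l.length)) ∧
      ∀ p < m, ∃ x : ℕ → Fin (128 * b), (∀ t, hostAdj h (x t) (x (t + 1))) ∧
        ∀ v ∈ U p, (hist v)[(hist₀ v).length + #{p' ∈ range p | v ∈ U p'}]?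
          = some (some (x (τ p v))) := by
  induction m with
  | zero => exact ⟨hist₀, fun v => List.prefix_rfl, by simp, h0, by simp⟩
  | succ m ih =>
    have hcard : ∀ v, #{p ∈ range (m + 1) | v ∈ U p}
        = #{p ∈ range m | v ∈ U p} + if v ∈ U m then 1 else 0 := by
      intro v
      rw [range_add_one, filter_insert]
      split_ifs with hv
      · rw [card_insert_of_notMem (by simp)]
      · rfl
    obtain ⟨hist, hp, hl, hN, hw⟩ := ih (fun p hp => hτ p (by omega)) (fun v => by
      have := hlen v; rw [hcard] at this; omega)
    obtain ⟨x, hx1, hx2⟩ := label_step hh hb Δ (U m) (τ m) (hτ m (by omega)) hist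
      (fun v => by have := hlen v; rw [hcard] at this; rw [hl]; omega)
      (fun v hv => by have := hlen v; rw [hcard, if_pos hv] at this; rw [hl]; omega) hN
    have hpre : ∀ v, hist v <+: if v ∈ U m then hist v ++ [some (x (τ m v))] else hist v := by
      intro v
      split_ifs
      · exact List.prefix_append _ _
      · exact List.prefix_rfl
    refine ⟨_, fun v => (hp v).trans (hpre v), fun v => ?_, hx2, fun p hpm => ?_⟩
    · rw [hcard]
      split_ifs
      · rw [List.length_append, hl]; simp; ring
      · rw [hl]; simp
    · rcases Nat.lt_succ_iff_lt_or_eq.1 hpm with h1 | rfl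
      · obtain ⟨x', hx', hx''⟩ := hw p h1
        refine ⟨x', hx', fun v hv => ?_⟩
        obtain ⟨t, ht⟩ := hpre v
        have h3 := hx'' v hv
        rw [← ht, List.getElem?_append_left]
        · exact h3
        · by_contra! hc
          rw [List.getElem?_eq_none hc] at h3
          simp at h3
      · refine ⟨x, hx1, fun v hv => ?_⟩
        rw [if_pos hv, ← hl, List.getElem?_concat_length]

end Label

/-! ### The host hypergraph -/

section Host

/-- A system of `r` constraints on the letters of `r` words of length `Δ`. A pair in
`Fin r × Fin Δ` is the slot of a letter. The `i`-th constraint concerns the letter at `δ i`: if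
`P i = none` it is the ground symbol, and if `P i = some s` it is related to the letter at `s`.
The constraints concern different slots and are not circular. -/
structure IsPattern {r Δ : ℕ} (δ : Fin r → Fin r × Fin Δ) (P : Fin r → Option (Fin r × Fin Δ)) :
    Prop where
  inj : Function.Injective δ
  acyclic : ∃ rank : Fin r → ℕ, ∀ i j, P i = some (δ j) → rank j < rank i

/-- The letters `Y` satisfy the constraints of the pattern `(δ, P)`. The symbol `none` is the ground
symbol. -/
structure Obeys {r Δ : ℕ} {O : Type*} (rel : Option O → Option O → Prop)
    (δ : Fin r → Fin r × Fin Δ) (P : Fin r → Option (Fin r × Fin Δ))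
    (Y : Fin r × Fin Δ → Option O) : Prop where
  ground : ∀ i, P i = none → Y (δ i) = none
  link : ∀ i s, P i = some s → rel (Y (δ i)) (Y s)

open Classical in
/-- The letters outside the range of `δ` are arbitrary. Each of the others is determined, by
induction along the rank, by the letter it is related to and one of `D` codes. -/
theorem card_obeys_le {r Δ D : ℕ} (hD : 0 < D) {O : Type*} [Fintype O]
    (rel : Option O → Option O → Prop) (hrel : ∀ o', #{o | rel o o'} ≤ D)
    {δ : Fin r → Fin r × Fin Δ} {P : Fin r → Option (Fin r × Fin Δ)} (hP : IsPattern δ P) :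
    #{Y : Fin r × Fin Δ → Option O | Obeys rel δ P Y}
      ≤ (Fintype.card O + 1) ^ (r * Δ - r) * D ^ r := by
  -- local names for the neighbours of `o'`
  obtain ⟨code, hcode⟩ : ∃ code : Option O → Option O → Fin D,
      ∀ o' o₁ o₂, rel o₁ o' → rel o₂ o' → code o' o₁ = code o' o₂ → o₁ = o₂ := by
    have : ∀ o', ∃ c : Option O → Fin D,
        ∀ o₁ o₂, rel o₁ o' → rel o₂ o' → c o₁ = c o₂ → o₁ = o₂ := by
      intro o'
      refine ⟨fun o => if ho : o ∈ ({o | rel o o'} : Finset (Option O)) then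
        Fin.castLE (hrel o') (equivFin _ ⟨o, ho⟩) else ⟨0, hD⟩, fun o₁ o₂ h₁ h₂ he => ?_⟩
      simp only [mem_filter, mem_univ, true_and, h₁, h₂, dif_pos] at he
      have h1 := Fin.castLE_injective _ he
      have h2 := (equivFin _).injective h1
      exact congrArg Subtype.val h2
    choose c hc using this
    exact ⟨c, hc⟩
  let enc : (Fin r × Fin Δ → Option O) → ({s // s ∉ Set.range δ} → Option O) × (Fin r → Fin D) :=
    fun Y => (fun s => Y s.1, fun i => (P i).elim ⟨0, hD⟩ fun s => code (Y s) (Y (δ i)))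
  have hinj : Set.InjOn enc ({Y | Obeys rel δ P Y} : Finset (Fin r × Fin Δ → Option O)) := by
    intro Y hY Y' hY' he
    replace hY : Obeys rel δ P Y := by simpa using hY
    replace hY' : Obeys rel δ P Y' := by simpa using hY'
    have he1 : ∀ s, s ∉ Set.range δ → Y s = Y' s := fun s hs =>
      congrFun (congrArg Prod.fst he) ⟨s, hs⟩
    have he2 : ∀ i, (P i).elim (⟨0, hD⟩ : Fin D) (fun s => code (Y s) (Y (δ i)))
        = (P i).elim (⟨0, hD⟩ : Fin D) (fun s => code (Y' s) (Y' (δ i))) := fun i =>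
      congrFun (congrArg Prod.snd he) i
    obtain ⟨rank, hrank⟩ := hP.acyclic
    have key : ∀ n i, rank i = n → Y (δ i) = Y' (δ i) := by
      intro n
      induction n using Nat.strong_induction_on with
      | _ n ih =>
        intro i hi
        rcases hPi : P i with _ | s
        · rw [hY.ground i hPi, hY'.ground i hPi]
        · have hs : Y s = Y' s := by
            by_cases hs : s ∈ Set.range δ
            · obtain ⟨j, rfl⟩ := hs
              exact ih (rank j) (hi ▸ hrank i j hPi) j rfl
            · exact he1 s hs
          have h1 := he2 i
          rw [hPi] at h1
          simp only [Option.elim_some, ← hs] at h1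
          exact hcode _ _ _ (hY.link i s hPi) (hs ▸ hY'.link i s hPi) h1
    funext s
    by_cases hs : s ∈ Set.range δ
    · obtain ⟨j, rfl⟩ := hs
      exact key _ j rfl
    · exact he1 s hs
  have h1 := card_le_card_of_injOn enc (t := univ) (fun _ _ => mem_univ _) hinj
  refine h1.trans_eq ?_
  rw [card_univ, Fintype.card_prod, Fintype.card_fun, Fintype.card_fun, Fintype.card_fin,
    Fintype.card_fin, Fintype.card_option, Fintype.card_subtype_compl]
  congr 2
  rw [Fintype.card_prod, Fintype.card_fin, Fintype.card_fin]
  congr 1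
  exact (Fintype.card_congr (Equiv.ofInjective δ hP.inj).symm).trans (Fintype.card_fin r)

/-- The number of pairs `(δ, P)`, an upper bound on the number of patterns. -/
def numPatterns (r Δ : ℕ) : ℕ :=
  Fintype.card ((Fin r → Fin r × Fin Δ) × (Fin r → Option (Fin r × Fin Δ)))

open Classical in
/-- The host hypergraph, on words of length `Δ` with an index in `Fin K`: its edges are the sets of
`r` vertices that, in some order, obey some pattern. -/
theorem exists_host {r Δ D K : ℕ} (hD : 0 < D) {O : Type*} [Fintype O]
    (rel : Option O → Option O → Prop) (hrel : ∀ o', #{o | rel o o'} ≤ D) :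
    ∃ EH : Finset (Finset ((Fin Δ → Option O) × Fin K)), (∀ e ∈ EH, #e = r) ∧
      #EH ≤ numPatterns r Δ * (K ^ r * ((Fintype.card O + 1) ^ (r * Δ - r) * D ^ r)) ∧
      ∀ X : Fin r → (Fin Δ → Option O) × Fin K, Function.Injective X →
        (∃ δ P, IsPattern δ P ∧ Obeys rel δ P (fun s => (X s.1).1 s.2)) → univ.image X ∈ EH := by
  let good : (Fin r → Fin r × Fin Δ) × (Fin r → Option (Fin r × Fin Δ)) →
      Finset (Fin r → (Fin Δ → Option O) × Fin K) := fun p =>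
    {X | IsPattern p.1 p.2 ∧ Obeys rel p.1 p.2 (fun s => (X s.1).1 s.2)}
  refine ⟨((univ.biUnion good).image fun X => univ.image X).filter fun e => #e = r,
    fun e he => (mem_filter.1 he).2, ?_, ?_⟩
  · refine (card_filter_le _ _).trans (card_image_le.trans ?_)
    refine (card_biUnion_le_card_mul _ _ _ fun p _ => ?_).trans_eq
      (by rw [card_univ, numPatterns])
    by_cases hp : IsPattern p.1 p.2
    · have h1 : #(good p) ≤ #((univ : Finset (Fin r → Fin K)) ×ˢ
          ({Y : Fin r × Fin Δ → Option O | Obeys rel p.1 p.2 Y} : Finset _)) := by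
        refine card_le_card_of_injOn (fun X => (fun i => (X i).2, fun s => (X s.1).1 s.2)) ?_ ?_
        · intro X hX
          simp only [good, coe_filter, mem_univ, true_and, Set.mem_ofPred_eq] at hX
          simp [hX.2]
        · intro X _ X' _ he
          simp only [Prod.mk.injEq] at he
          funext i
          refine Prod.ext (funext fun c => congrFun he.2 (i, c)) (congrFun he.1 i)
      refine h1.trans ?_
      rw [card_product, card_univ, Fintype.card_fun, Fintype.card_fin, Fintype.card_fin]
      exact Nat.mul_le_mul_left _ (card_obeys_le hD rel hrel hp)
    · have : good p = ∅ := by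
        simp only [good, hp, false_and, filter_false]
      rw [this]; simp
  · rintro X hX ⟨δ, P, hP, hO⟩
    refine mem_filter.2 ⟨mem_image.2 ⟨X, mem_biUnion.2 ⟨(δ, P), mem_univ _, ?_⟩, rfl⟩, ?_⟩
    · simp only [good, mem_filter, mem_univ, true_and]
      exact ⟨hP, hO⟩
    · rw [card_image_of_injective _ hX]; simp

end Host

/-! ### Closed tours through the edges -/

section Tours
variable {V E : Type*} {r : ℕ} [NeZero r]

/-- A list of incidences `(e, k)` is a path from `u` to `w`, where the incidence `(e, k)` stands for
the step from `vert e k` to its cyclic successor `vert e (k + 1)`. -/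
def IsPath (vert : E → Fin r → V) : V → List (E × Fin r) → V → Prop
  | u, [], w => u = w
  | u, p :: l, w => vert p.1 p.2 = u ∧ IsPath vert (vert p.1 (p.2 + 1)) l w

theorem isPath_append {vert : E → Fin r → V} {l₁ l₂ : List (E × Fin r)} {u w : V} :
    IsPath vert u (l₁ ++ l₂) w ↔ ∃ v, IsPath vert u l₁ v ∧ IsPath vert v l₂ w := by
  induction l₁ generalizing u with
  | nil => simp [IsPath]
  | cons p l ih => simp [IsPath, ih, and_assoc]

/-- The `n` successive steps of the edge `e` starting with the `k`-th one. -/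
def run (e : E) (k : Fin r) (n : ℕ) : List (E × Fin r) :=
  (List.range n).map fun i => (e, k + (Fin.ofNat r i))

theorem run_succ (e : E) (k : Fin r) (n : ℕ) : run e k (n + 1) = (e, k) :: run e (k + 1) n := by
  simp only [run, List.range_succ_eq_map, List.map_cons, List.map_map]
  congr 1
  · simp
  · refine List.map_congr_left fun i _ => ?_
    simp only [Function.comp, Prod.mk.injEq, true_and]
    rw [add_assoc]
    congr 1
    ext
    simp [Fin.val_add, Nat.add_comm]

theorem isPath_run (vert : E → Fin r → V) (e : E) (k : Fin r) (n : ℕ) :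
    IsPath vert (vert e k) (run e k n) (vert e (k + Fin.ofNat r n)) := by
  induction n generalizing k with
  | zero => simp [run, IsPath]
  | succ n ih =>
    rw [run_succ]
    refine ⟨rfl, ?_⟩
    convert ih (k + 1) using 2
    rw [add_assoc]
    congr 1
    ext
    simp [Fin.val_add, Nat.add_comm]

theorem ofNat_self : (Fin.ofNat r r : Fin r) = 0 := by
  ext; simp

theorem run_nodup (e : E) (k : Fin r) : (run e k r).Nodup := by
  refine (List.nodup_map_iff_inj_on List.nodup_range).2 ?_
  intro i hi j hj hij
  simp only [Prod.mk.injEq, true_and, add_right_inj, List.mem_range] at hij hi hj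
  have := congrArg Fin.val hij
  simpa [Nat.mod_eq_of_lt hi, Nat.mod_eq_of_lt hj] using this

theorem mem_run {e : E} {k : Fin r} {p : E × Fin r} : p ∈ run e k r ↔ p.1 = e := by
  constructor
  · intro h
    simp only [run, List.mem_map] at h
    obtain ⟨i, -, rfl⟩ := h
    rfl
  · rintro rfl
    simp only [run, List.mem_map, List.mem_range]
    exact ⟨(p.2 - k).val, (p.2 - k).isLt, by ext <;> simp⟩

/-- A closed path that uses every step of every edge of `S` exactly once, and no other step. -/
structure IsTour (vert : E → Fin r → V) (S : Finset E) (l : List (E × Fin r)) : Prop where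
  nodup : l.Nodup
  mem : ∀ p, p ∈ l ↔ p.1 ∈ S
  closed : ∃ u, IsPath vert u l u

theorem IsTour.rotate {vert : E → Fin r → V} {S : Finset E} {l₁ l₂ : List (E × Fin r)}
    (h : IsTour vert S (l₁ ++ l₂)) : IsTour vert S (l₂ ++ l₁) where
  nodup := List.nodup_append_comm.1 h.nodup
  mem p := by rw [← h.mem, List.mem_append, List.mem_append, or_comm]
  closed := by
    obtain ⟨u, hu⟩ := h.closed
    obtain ⟨v, h1, h2⟩ := isPath_append.1 hu
    exact ⟨v, isPath_append.2 ⟨u, h2, h1⟩⟩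

/-- Edges that meet an edge of `S` belong to `S`: a union of connected components. -/
def EdgeClosed (vert : E → Fin r → V) (S : Finset E) : Prop :=
  ∀ e ∈ S, ∀ f k k', vert e k = vert f k' → f ∈ S

theorem isTour_singleton (vert : E → Fin r → V) (e : E) : IsTour vert {e} (run e 0 r) where
  nodup := run_nodup e 0
  mem p := by rw [mem_run, mem_singleton]
  closed := by
    have := isPath_run vert e 0 r
    rw [ofNat_self, add_zero] at this
    exact ⟨_, this⟩

/-- A tour is extended to a further edge `f` by inserting all steps of `f` at a common vertex. -/
theorem isTour_insert [DecidableEq E] {vert : E → Fin r → V} {S : Finset E} {l : List (E × Fin r)}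
    (h : IsTour vert S l) {e f : E} (he : e ∈ S) (hf : f ∉ S) {k k' : Fin r}
    (hv : vert e k = vert f k') : ∃ l', IsTour vert (insert f S) l' := by
  obtain ⟨s, t, rfl⟩ := List.append_of_mem ((h.mem (e, k)).2 he)
  have h' := h.rotate
  rw [List.cons_append] at h'
  refine ⟨run f k' r ++ (e, k) :: (t ++ s), ?_, fun p => ?_, ?_⟩
  · refine List.Nodup.append (run_nodup f k') h'.nodup ?_
    intro p hp hp'
    rw [mem_run] at hp
    exact hf (hp ▸ (h'.mem p).1 hp')
  · rw [List.mem_append, mem_run, h'.mem, mem_insert]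
  · obtain ⟨u, hu⟩ := h'.closed
    have h1 := isPath_run vert f k' r
    rw [ofNat_self, add_zero] at h1
    obtain rfl : vert e k = u := hu.1
    exact ⟨vert f k', isPath_append.2 ⟨_, h1, hv ▸ hu⟩⟩

/-- A maximal set of edges having a tour is closed. -/
theorem exists_tour {vert : E → Fin r → V} {S : Finset E} (hS : EdgeClosed vert S)
    (hne : S.Nonempty) : ∃ T ⊆ S, T.Nonempty ∧ EdgeClosed vert T ∧ ∃ l, IsTour vert T l := by
  classical
  obtain ⟨e₀, he₀⟩ := hne
  obtain ⟨T, hT, hmax⟩ := exists_max_image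
    (S.powerset.filter fun T => T.Nonempty ∧ ∃ l, IsTour vert T l) (fun T => #T)
    ⟨{e₀}, by simp [he₀]; exact ⟨_, isTour_singleton vert e₀⟩⟩
  simp only [mem_filter, mem_powerset] at hT hmax
  refine ⟨T, hT.1, hT.2.1, ?_, hT.2.2⟩
  intro e he f k k' hv
  by_contra hf
  obtain ⟨l, hl⟩ := hT.2.2
  have h1 := hmax (insert f T) ⟨insert_subset (hS e (hT.1 he) f k k' hv) hT.1,
    insert_nonempty _ _, isTour_insert hl he hf hv⟩
  rw [card_insert_of_notMem hf] at h1
  omega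

variable [DecidableEq E]

/-- The number of pairs of successive steps that belong to the same edge. -/
def stays : List (E × Fin r) → ℕ
  | [] => 0
  | p :: l => (if ∃ q ∈ l.head?, p.1 = q.1 then 1 else 0) + stays l

theorem stays_append_ge (l₁ l₂ : List (E × Fin r)) :
    stays l₁ + stays l₂ ≤ stays (l₁ ++ l₂) := by
  induction l₁ with
  | nil => simp [stays]
  | cons p l ih =>
    have : (if ∃ q ∈ l.head?, p.1 = q.1 then 1 else 0)
        ≤ (if ∃ q ∈ (l ++ l₂).head?, p.1 = q.1 then 1 else 0) := by
      cases l with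
      | nil => simp
      | cons a l => simp
    simp only [stays, List.cons_append]
    omega

theorem stays_append (l₁ l₂ : List (E × Fin r)) (h : ∀ p ∈ l₁, ∀ q ∈ l₂.head?, p.1 ≠ q.1) :
    stays (l₁ ++ l₂) = stays l₁ + stays l₂ := by
  induction l₁ with
  | nil => simp [stays]
  | cons p l ih =>
    have h1 := ih fun p hp => h p (by simp [hp])
    have : (if ∃ q ∈ (l ++ l₂).head?, p.1 = q.1 then 1 else 0)
        = (if ∃ q ∈ l.head?, p.1 = q.1 then 1 else 0) := by
      cases l with
      | nil =>
        have := h p (by simp)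
        rw [if_neg, if_neg]
        · simp
        · rintro ⟨q, hq, he⟩
          exact this q hq he
      | cons a l => simp
    simp only [stays, List.cons_append, this, h1]
    omega

/-- The closed path `p₁ p₂ p₃ R A B C`, in which the steps of `e` are the first ones, is rearranged
into `p₁ B p₃ R A p₂ C`, where `A`, `B`, `C` include their first steps `a`, `x₂`, `x₃`. This
destroys the two stays `p₁ p₂` and `p₂ p₃`, and creates none, since at every junction of the new path
a step of `e` meets a step of another edge. -/
theorem stays_exchange {e : E} {p₁ p₂ p₃ a x₂ x₃ : E × Fin r} {R A B C : List (E × Fin r)}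
    (h₁ : p₁.1 = e) (h₂ : p₂.1 = e) (h₃ : p₃.1 = e) (hR : ∀ p ∈ R, p.1 = e)
    (hA : ∀ p ∈ a :: A, p.1 ≠ e) (hB : ∀ p ∈ x₂ :: B, p.1 ≠ e) (hC : ∀ p ∈ x₃ :: C, p.1 ≠ e) :
    stays ([p₁] ++ ((x₂ :: B) ++ ((p₃ :: R) ++ ((a :: A) ++ ([p₂] ++ ((x₃ :: C) ++ [p₁]))))))
      < stays (p₁ :: p₂ :: ((p₃ :: R) ++ ((a :: A) ++ ((x₂ :: B) ++ ((x₃ :: C) ++ [p₁]))))) := by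
  have n1 : ∀ p : E × Fin r, stays [p] = 0 := by simp [stays]
  have g1 : stays (p₁ :: p₂ :: ((p₃ :: R) ++ ((a :: A) ++ ((x₂ :: B) ++ ((x₃ :: C) ++ [p₁])))))
      = 1 + (1 + stays ((p₃ :: R) ++ ((a :: A) ++ ((x₂ :: B) ++ ((x₃ :: C) ++ [p₁]))))) := by
    rw [stays, stays, if_pos, if_pos]
    · simp [h₂, h₃]
    · simp [h₁, h₂]
  have g2 := stays_append_ge (p₃ :: R) ((a :: A) ++ ((x₂ :: B) ++ ((x₃ :: C) ++ [p₁])))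
  have g3 := stays_append_ge (a :: A) ((x₂ :: B) ++ ((x₃ :: C) ++ [p₁]))
  have g4 := stays_append_ge (x₂ :: B) ((x₃ :: C) ++ [p₁])
  have g5 := stays_append_ge (x₃ :: C) [p₁]
  rw [stays_append, stays_append, stays_append, stays_append, stays_append, stays_append, n1, n1]
  · omega
  · intro p hp q hq
    simp only [List.head?_cons, Option.mem_def, Option.some.injEq] at hq
    rw [← hq, h₁]; exact hC p hp
  · intro p hp q hq
    simp only [List.head?_cons, List.cons_append, Option.mem_def, Option.some.injEq] at hq
    simp only [List.mem_singleton] at hp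
    rw [← hq, hp, h₂]; exact (hC x₃ (by simp)).symm
  · intro p hp q hq
    simp only [List.head?_cons, List.cons_append, Option.mem_def, Option.some.injEq] at hq
    rw [← hq, h₂]; exact hA p hp
  · intro p hp q hq
    simp only [List.head?_cons, List.cons_append, Option.mem_def, Option.some.injEq] at hq
    have : p.1 = e := by
      rcases List.mem_cons.1 hp with rfl | hp
      · exact h₃
      · exact hR p hp
    rw [← hq, this]; exact (hA a (by simp)).symm
  · intro p hp q hq
    simp only [List.head?_cons, List.cons_append, Option.mem_def, Option.some.injEq] at hq
    rw [← hq, h₃]; exact hB p hp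
  · intro p hp q hq
    simp only [List.head?_cons, List.cons_append, Option.mem_def, Option.some.injEq] at hq
    simp only [List.mem_singleton] at hp
    rw [← hq, hp, h₁]; exact (hB x₂ (by simp)).symm

end Tours

/-! ### Tours that leave every edge before exhausting it -/

section Exchange
variable {V E : Type*} [DecidableEq E] {r : ℕ} [NeZero r]

theorem stays_split (l : List (E × Fin r)) (c : E × Fin r) (l' : List (E × Fin r)) :
    stays (l ++ c :: l') = stays (l ++ [c]) + stays (c :: l') := by
  induction l with
  | nil => simp [stays]
  | cons p l ih =>
    have h1 : (l ++ c :: l').head? = (l ++ [c]).head? := by cases l <;> simp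
    simp only [List.cons_append, stays] at ih ⊢
    simp only [h1, ih]
    omega

/-- The number of stays of a closed path, counting also the pair of the last and the first step. -/
def cyclicStays (l : List (E × Fin r)) : ℕ := stays (l ++ l.head?.toList)

theorem cyclicStays_rotate (l₁ l₂ : List (E × Fin r)) :
    cyclicStays (l₁ ++ l₂) = cyclicStays (l₂ ++ l₁) := by
  rcases l₁ with _ | ⟨a, A⟩
  · simp
  rcases l₂ with _ | ⟨c, C⟩
  · simp
  simp only [cyclicStays, List.cons_append, List.head?_cons, Option.toList_some, List.append_assoc]
  have h1 := stays_split (a :: A) c (C ++ [a])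
  have h2 := stays_split (c :: C) a (A ++ [c])
  simp only [List.cons_append] at h1 h2
  rw [h1, h2, add_comm]

/-- The vertices of each edge are the same, possibly in another order. -/
def Reorders (vert vert' : E → Fin r → V) : Prop :=
  ∀ f, ∃ σ : Equiv.Perm (Fin r), vert' f = vert f ∘ σ

theorem Reorders.trans {v₁ v₂ v₃ : E → Fin r → V} (h : Reorders v₁ v₂) (h' : Reorders v₂ v₃) :
    Reorders v₁ v₃ := by
  intro f
  obtain ⟨σ, hσ⟩ := h f
  obtain ⟨σ', hσ'⟩ := h' f
  exact ⟨σ'.trans σ, by rw [hσ', hσ]; rfl⟩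

theorem Reorders.exists_iff {v₁ v₂ : E → Fin r → V} (h : Reorders v₁ v₂) (f : E) (v : V) :
    (∃ k, v₂ f k = v) ↔ ∃ k, v₁ f k = v := by
  obtain ⟨σ, hσ⟩ := h f
  rw [hσ]
  exact ⟨fun ⟨k, hk⟩ => ⟨σ k, hk⟩, fun ⟨k, hk⟩ => ⟨σ.symm k, by simpa using hk⟩⟩

/-- Edges have `r` distinct vertices, and every vertex of an edge lies in another edge, too. -/
structure Proper (vert : E → Fin r → V) : Prop where
  inj : ∀ e, Function.Injective (vert e)
  other : ∀ e k, ∃ f k', f ≠ e ∧ vert f k' = vert e k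

theorem Proper.reorder {v₁ v₂ : E → Fin r → V} (hp : Proper v₁) (h : Reorders v₁ v₂) :
    Proper v₂ where
  inj e := by
    obtain ⟨σ, hσ⟩ := h e
    rw [hσ]
    exact (hp.inj e).comp σ.injective
  other e k := by
    obtain ⟨k₁, hk₁⟩ := (h.exists_iff e (v₂ e k)).1 ⟨k, rfl⟩
    obtain ⟨f, k', hf, hk'⟩ := hp.other e k₁
    obtain ⟨k₂, hk₂⟩ := (h.exists_iff f (v₁ f k')).2 ⟨k', rfl⟩
    exact ⟨f, k₂, hf, by rw [hk₂, hk', hk₁]⟩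

theorem EdgeClosed.reorder {v₁ v₂ : E → Fin r → V} {S : Finset E} (hS : EdgeClosed v₁ S)
    (h : Reorders v₁ v₂) : EdgeClosed v₂ S := by
  intro e he f k k' hv
  obtain ⟨k₁, hk₁⟩ := (h.exists_iff e (v₂ e k)).1 ⟨k, rfl⟩
  obtain ⟨k₂, hk₂⟩ := (h.exists_iff f (v₂ f k')).1 ⟨k', rfl⟩
  exact hS e he f k₁ k₂ (by rw [hk₁, hk₂, hv])

theorem run_eq_three (hr : 3 ≤ r) (e : E) (k : Fin r) :
    run e k r = (e, k) :: (e, k + 1) :: (e, k + 1 + 1) :: run e (k + 1 + 1 + 1) (r - 3) := by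
  have : run e k r = run e k (r - 3 + 1 + 1 + 1) := by congr 1; omega
  rw [this, run_succ, run_succ, run_succ]

/-- If a tour starts with all steps of `e`, from `v₁` through `v₂`, `v₃` back to `v₁`, and later
visits `v₂` and then `v₃`, then the steps from `v₁` to `v₂` and from `v₂` to `v₃` can be separated
from the other steps of `e` by rearranging the parts of the tour. -/
theorem exchange_aux (hr : 3 ≤ r) {vert : E → Fin r → V} {S : Finset E} {e : E} {k : Fin r}
    {a x₂ x₃ : E × Fin r} {A B C : List (E × Fin r)}
    (h : IsTour vert S (run e k r ++ ((a :: A) ++ ((x₂ :: B) ++ (x₃ :: C)))))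
    (h₂ : vert x₂.1 x₂.2 = vert e (k + 1)) (h₃ : vert x₃.1 x₃.2 = vert e (k + 1 + 1)) :
    ∃ l, IsTour vert S l ∧
      cyclicStays l < cyclicStays (run e k r ++ ((a :: A) ++ ((x₂ :: B) ++ (x₃ :: C)))) := by
  have hrest : ∀ p ∈ (a :: A) ++ ((x₂ :: B) ++ (x₃ :: C)), p.1 ≠ e := by
    intro p hp hpe
    exact List.disjoint_of_nodup_append h.nodup (mem_run.2 hpe) hp
  have hA : ∀ p ∈ a :: A, p.1 ≠ e := fun p hp => hrest p (List.mem_append_left _ hp)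
  have hB : ∀ p ∈ x₂ :: B, p.1 ≠ e := fun p hp =>
    hrest p (List.mem_append_right _ (List.mem_append_left _ hp))
  have hC : ∀ p ∈ x₃ :: C, p.1 ≠ e := fun p hp =>
    hrest p (List.mem_append_right _ (List.mem_append_right _ hp))
  have hR : ∀ p ∈ run e (k + 1 + 1 + 1) (r - 3), p.1 = e := by
    intro p hp
    refine (mem_run (k := k)).1 ?_
    rw [run_eq_three hr]
    simp [hp]
  rw [run_eq_three hr] at h ⊢
  generalize run e (k + 1 + 1 + 1) (r - 3) = R at *
  refine ⟨[(e, k)] ++ ((x₂ :: B) ++ (((e, k + 1 + 1) :: R) ++ ((a :: A) ++ ([(e, k + 1)] ++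
    (x₃ :: C))))), ⟨?_, fun p => ?_, ?_⟩, ?_⟩
  · refine (List.Perm.nodup_iff ?_).1 h.nodup
    rw [List.perm_iff_count]
    intro p
    simp only [List.cons_append, List.count_append, List.count_cons, List.nil_append]
    omega
  · rw [← h.mem]
    simp only [List.cons_append, List.mem_append, List.mem_cons, List.nil_append]
    tauto
  · obtain ⟨u, hu⟩ := h.closed
    simp only [List.cons_append, IsPath, isPath_append, true_and, List.nil_append] at hu ⊢
    obtain ⟨h1, v, h2, h3, w, h4, h5, w', h6, h7, h8⟩ := hu
    subst h1
    subst h3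
    refine ⟨_, rfl, ?_⟩
    refine ⟨h₂, _, h6, ?_⟩
    refine ⟨h₃ ▸ h7, _, h2, rfl, w, h4, ?_⟩
    exact ⟨h₂ ▸ h5, h₃, h8⟩
  · have := stays_exchange (p₁ := (e, k)) (p₂ := (e, k + 1)) (p₃ := (e, k + 1 + 1)) rfl rfl rfl
      hR hA hB hC
    simpa [cyclicStays] using this

theorem isPath_congr {vert vert' : E → Fin r → V} {l : List (E × Fin r)} {u w : V}
    (h : ∀ p ∈ l, vert p.1 = vert' p.1) (hl : IsPath vert u l w) : IsPath vert' u l w := by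
  induction l generalizing u with
  | nil => exact hl
  | cons p l ih =>
    refine ⟨?_, ?_⟩
    · rw [← h p (by simp)]; exact hl.1
    · rw [← h p (by simp)]; exact ih (fun q hq => h q (by simp [hq])) hl.2

theorem isPath_unique {vert : E → Fin r → V} {l : List (E × Fin r)} {u w w' : V}
    (h : IsPath vert u l w) (h' : IsPath vert u l w') : w = w' := by
  induction l generalizing u with
  | nil => exact h.symm.trans h'
  | cons p l ih => exact ih h.2 h'.2

theorem add_one_ne (hr : 3 ≤ r) (k : Fin r) : k + 1 ≠ k ∧ k + 1 + 1 ≠ k := by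
  constructor
  · intro h
    have h1 := congrArg Fin.val (add_eq_left.1 h)
    rw [Fin.val_one', Nat.mod_eq_of_lt (by omega)] at h1
    simp at h1
  · intro h
    rw [add_assoc] at h
    have h1 := congrArg Fin.val (add_eq_left.1 h)
    rw [Fin.val_add, Fin.val_one', Nat.mod_eq_of_lt (by omega : 1 < r),
      Nat.mod_eq_of_lt (by omega)] at h1
    simp at h1

/-- A tour starting with all steps of `e` does not minimise the number of stays. The second and third
vertex of `e` are visited again later, since they lie in other edges; if they are visited in the
wrong order for `exchange_aux`, then they are interchanged in `e`. -/
theorem exchange (hr : 3 ≤ r) {vert : E → Fin r → V} (hp : Proper vert) {S : Finset E}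
    (hS : EdgeClosed vert S) {e : E} {k : Fin r} {rest : List (E × Fin r)}
    (h : IsTour vert S (run e k r ++ rest)) :
    ∃ vert' l, Reorders vert vert' ∧ IsTour vert' S l ∧
      cyclicStays l < cyclicStays (run e k r ++ rest) := by
  have he : e ∈ S := (h.mem (e, k)).1 (List.mem_append_left _ (mem_run.2 rfl))
  have hex : ∀ k', ∃ x ∈ rest, vert x.1 x.2 = vert e k' := by
    intro k'
    obtain ⟨f, k₁, hf, hk₁⟩ := hp.other e k'
    have : (f, k₁) ∈ run e k r ++ rest := (h.mem _).2 (hS e he f k' k₁ hk₁.symm)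
    rcases List.mem_append.1 this with h1 | h1
    · exact absurd (mem_run.1 h1) hf
    · exact ⟨_, h1, hk₁⟩
  obtain ⟨hk1, hk2⟩ := add_one_ne hr k
  have hk3 := (add_one_ne hr (k + 1)).1
  obtain ⟨x₂, hx₂, hv₂⟩ := hex (k + 1)
  obtain ⟨x₃, hx₃, hv₃⟩ := hex (k + 1 + 1)
  -- the first incidence after the run returns to the initial vertex of the run
  obtain ⟨u, hu⟩ := h.closed
  obtain ⟨v, hu1, hu2⟩ := isPath_append.1 hu
  have hv : v = vert e k ∧ u = vert e k := by
    have h1 := isPath_run vert e k r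
    rw [ofNat_self, add_zero] at h1
    have h2 : u = vert e k := by
      rw [run_eq_three hr] at hu1
      exact hu1.1.symm
    subst h2
    exact ⟨isPath_unique hu1 h1, rfl⟩
  have hfirst : ∀ y t, rest = y :: t → vert y.1 y.2 = vert e k := by
    rintro y t rfl
    rw [hu2.1, hv.1]
  obtain ⟨s, t, rfl⟩ := List.append_of_mem hx₂
  rcases s with _ | ⟨a, A⟩
  · have := hfirst x₂ t rfl
    rw [hv₂] at this
    exact absurd (hp.inj e this) hk1
  rcases List.mem_append.1 hx₃ with h1 | h1
  · -- the incidence at the third vertex comes first: interchange the second and third vertex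
    obtain ⟨A₁, B, hA⟩ := List.append_of_mem h1
    rcases A₁ with _ | ⟨a', A₁⟩
    · have := hfirst x₃ (B ++ x₂ :: t) (by rw [hA]; simp)
      rw [hv₃] at this
      exact absurd (hp.inj e this) hk2
    set σ := Equiv.swap (k + 1) (k + 1 + 1) with hσ
    set vert' : E → Fin r → V := fun f => if f = e then vert e ∘ σ else vert f with hvert'
    have hre : Reorders vert vert' := by
      intro f
      by_cases hf : f = e
      · subst hf; exact ⟨σ, by simp [hvert']⟩
      · exact ⟨1, by simp [hvert', hf]⟩
    have hne : ∀ p ∈ (a :: A) ++ x₂ :: t, vert p.1 = vert' p.1 := by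
      intro p hp
      have : p.1 ≠ e := fun hpe =>
        List.disjoint_of_nodup_append h.nodup (mem_run.2 hpe) hp
      simp [hvert', this]
    have hek : ∀ j, vert' e j = vert e (σ j) := by simp [hvert']
    have htour : IsTour vert' S (run e k r ++ ((a :: A) ++ x₂ :: t)) := by
      refine ⟨h.nodup, h.mem, vert' e k, isPath_append.2 ⟨vert' e k, ?_, ?_⟩⟩
      · have := isPath_run vert' e k r
        rwa [ofNat_self, add_zero] at this
      · have h2 : vert' e k = vert e k := by
          rw [hek, hσ, Equiv.swap_apply_of_ne_of_ne hk1.symm hk2.symm]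
        rw [h2]
        refine isPath_congr hne ?_
        rwa [hv.1, hv.2] at hu2
    have heq : (a :: A) ++ x₂ :: t = (a' :: A₁) ++ ((x₃ :: B) ++ (x₂ :: t)) := by
      rw [hA]; simp
    rw [heq] at htour ⊢
    obtain ⟨l, hl, hlt⟩ := exchange_aux hr htour
      (by rw [← hne _ (by rw [hA]; simp), hv₃, hek, hσ, Equiv.swap_apply_left])
      (by rw [← hne _ (by simp), hv₂, hek, hσ, Equiv.swap_apply_right])
    exact ⟨vert', l, hre, hl, hlt⟩
  · have h2 : x₃ ∈ t := by
      rcases List.mem_cons.1 h1 with rfl | h2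
      · rw [hv₂] at hv₃
        exact absurd (hp.inj e hv₃).symm hk3
      · exact h2
    obtain ⟨B, C, rfl⟩ := List.append_of_mem h2
    have heq : (a :: A) ++ x₂ :: (B ++ x₃ :: C) = (a :: A) ++ ((x₂ :: B) ++ (x₃ :: C)) := by simp
    rw [heq] at h ⊢
    obtain ⟨l, hl, hlt⟩ := exchange_aux hr h hv₂ hv₃
    exact ⟨vert, l, fun f => ⟨1, by simp⟩, hl, hlt⟩

/-- After reordering, some tour does not contain all steps of an edge in succession, in any of its
rotations: take one with the least number of stays. -/
theorem exists_tour_no_full_run (hr : 3 ≤ r) {vert : E → Fin r → V} (hp : Proper vert)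
    {S : Finset E} (hS : EdgeClosed vert S) {l : List (E × Fin r)} (hl : IsTour vert S l) :
    ∃ vert' l', Reorders vert vert' ∧ IsTour vert' S l' ∧
      ∀ l₁ l₂ e k rest, l' = l₁ ++ l₂ → l₂ ++ l₁ ≠ run e k r ++ rest := by
  induction hn : cyclicStays l using Nat.strong_induction_on generalizing vert l with
  | _ n ih =>
    by_cases hc : ∃ l₁ l₂ e k rest, l = l₁ ++ l₂ ∧ l₂ ++ l₁ = run e k r ++ rest
    · obtain ⟨l₁, l₂, e, k, rest, rfl, h2⟩ := hc
      have h3 := hl.rotate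
      rw [h2] at h3
      obtain ⟨vert', l', hre, hl', hlt⟩ := exchange hr hp hS h3
      rw [← h2, cyclicStays_rotate, hn] at hlt
      obtain ⟨v'', l'', h4, h5, h6⟩ := ih _ hlt (hp.reorder hre) (hS.reorder hre) hl' rfl
      exact ⟨v'', l'', hre.trans h4, h5, h6⟩
    · refine ⟨vert, l, fun f => ⟨1, by simp⟩, hl, fun l₁ l₂ e k rest h1 h2 => ?_⟩
      exact hc ⟨l₁, l₂, e, k, rest, h1, h2⟩

end Exchange

/-! ### Cutting a path into segments without repeated vertices -/

section Segments
variable {V E J : Type*} [DecidableEq J]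

/-- A division of the path `t` of steps, from `ent p` to `ext p`, into segments; `col p` is the edge
of the step `p`. Segments are named by one of their steps, and `seg p` is the name of the segment of
`p`. A segment enters no vertex twice, and it assigns times `τ` to its steps, at most two to a time.
`tgt p` is the step of the same segment that enters the vertex at which `p` ends; its time differs
from that of `p` by at most one. Only the last step of `t` may lack such a step. For the steps of
one edge, passing from `p` to `tgt p` is not circular. -/
structure Segmented (ent ext : J → V) (col : J → E) (t : List J) (seg : J → J) (τ : J → ℕ)
    (tgt : J → Option J) : Prop where
  seg_mem : ∀ p ∈ t, seg p ∈ t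
  seg_inj : ∀ p ∈ t, ∀ p' ∈ t, seg p = seg p' → ent p = ent p' → p = p'
  fiber : ∀ g i, #{p ∈ t.toFinset | seg p = g ∧ τ p = i} ≤ 2
  tgt_some : ∀ p ∈ t, ∀ p', tgt p = some p' →
    p' ∈ t ∧ seg p' = seg p ∧ ent p' = ext p ∧ τ p ≤ τ p' + 1 ∧ τ p' ≤ τ p + 1
  tgt_none : ∀ p ∈ t, tgt p = none → t.getLast? = some p
  acyclic : ∀ e, ∃ rank : J → ℕ, ∀ p ∈ t, ∀ p', col p = e → tgt p = some p' → rank p' < rank p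

variable {ent ext : J → V} {col : J → E}

/-- Segmentations of two paths combine if the first one provides a `tgt` for all of its steps,
including its last. -/
theorem Segmented.append {t₁ t₂ : List J} {s₁ s₂ : J → J} {τ₁ τ₂ : J → ℕ}
    {g₁ g₂ : J → Option J} (h₁ : Segmented ent ext col t₁ s₁ τ₁ g₁)
    (h₂ : Segmented ent ext col t₂ s₂ τ₂ g₂) (hd : ∀ p ∈ t₁, p ∉ t₂)
    (hg : ∀ p ∈ t₁, g₁ p ≠ none) :
    Segmented ent ext col (t₁ ++ t₂) (fun p => if p ∈ t₁ then s₁ p else s₂ p)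
      (fun p => if p ∈ t₁ then τ₁ p else τ₂ p) (fun p => if p ∈ t₁ then g₁ p else g₂ p) := by
  have hm : ∀ p ∈ t₁ ++ t₂, (p ∈ t₁ ∧ p ∉ t₂) ∨ (p ∉ t₁ ∧ p ∈ t₂) := by
    intro p hp
    by_cases h : p ∈ t₁
    · exact Or.inl ⟨h, hd p h⟩
    · exact Or.inr ⟨h, (List.mem_append.1 hp).resolve_left h⟩
  constructor
  · intro p hp
    rcases hm p hp with ⟨h, -⟩ | ⟨h, h'⟩
    · simp [h, h₁.seg_mem p h]
    · simp [h, h₂.seg_mem p h']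
  · intro p hp p' hp' hs he
    rcases hm p hp with ⟨h, -⟩ | ⟨h, h'⟩ <;> rcases hm p' hp' with ⟨k, -⟩ | ⟨k, k'⟩ <;>
      simp only [h, k, if_true, if_false] at hs
    · exact h₁.seg_inj p h p' k hs he
    · exact absurd (hs ▸ h₂.seg_mem p' k') (hd _ (h₁.seg_mem p h))
    · exact absurd (hs ▸ h₂.seg_mem p h') (hd _ (h₁.seg_mem p' k))
    · exact h₂.seg_inj p h' p' k' hs he
  · intro g i
    by_cases hgt : g ∈ t₁
    · refine le_trans (card_le_card ?_) (h₁.fiber g i)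
      intro p
      simp only [mem_filter, List.mem_toFinset]
      rintro ⟨hp, hs, hτ⟩
      rcases hm p hp with ⟨h, -⟩ | ⟨h, h'⟩ <;> simp only [h, if_true, if_false] at hs hτ
      · exact ⟨h, hs, hτ⟩
      · exact absurd (hs ▸ h₂.seg_mem p h') (hd _ hgt)
    · refine le_trans (card_le_card ?_) (h₂.fiber g i)
      intro p
      simp only [mem_filter, List.mem_toFinset]
      rintro ⟨hp, hs, hτ⟩
      rcases hm p hp with ⟨h, -⟩ | ⟨h, h'⟩ <;> simp only [h, if_true, if_false] at hs hτ
      · exact absurd (hs ▸ h₁.seg_mem p h) hgt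
      · exact ⟨h', hs, hτ⟩
  · intro p hp p' ht
    rcases hm p hp with ⟨h, -⟩ | ⟨h, h'⟩ <;> simp only [h, if_true, if_false] at ht ⊢
    · obtain ⟨a, b, c⟩ := h₁.tgt_some p h p' ht
      simp only [a, if_true, List.mem_append, true_or, true_and]
      exact ⟨b, c⟩
    · obtain ⟨a, b, c⟩ := h₂.tgt_some p h' p' ht
      have : p' ∉ t₁ := fun h => hd _ h a
      simp only [this, if_false, List.mem_append, a, or_true, true_and]
      exact ⟨b, c⟩
  · intro p hp ht
    rcases hm p hp with ⟨h, -⟩ | ⟨h, h'⟩ <;> simp only [h, if_true, if_false] at ht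
    · exact absurd ht (hg p h)
    · rw [List.getLast?_append, h₂.tgt_none p h' ht]; rfl
  · intro e
    obtain ⟨r₁, hr₁⟩ := h₁.acyclic e
    obtain ⟨r₂, hr₂⟩ := h₂.acyclic e
    refine ⟨fun p => if p ∈ t₁ then r₁ p else r₂ p, fun p hp p' hc ht => ?_⟩
    rcases hm p hp with ⟨h, -⟩ | ⟨h, h'⟩ <;> simp only [h, if_true, if_false] at ht ⊢
    · simp only [(h₁.tgt_some p h p' ht).1, if_true]
      exact hr₁ p h p' hc ht
    · have : p' ∉ t₁ := fun h => hd _ h (h₂.tgt_some p h' p' ht).1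
      simp only [this, if_false]
      have hlt := hr₂ p h' p' hc ht
      exact hlt

/-- At most two elements of `t` satisfy `P` if these occur at one of two positions only. -/
theorem card_fiber_le {t : List J} {P : J → Prop} [DecidablePred P] {a b : ℕ}
    (h : ∀ p ∈ t, P p → t.idxOf p = a ∨ t.idxOf p = b) : #{p ∈ t.toFinset | P p} ≤ 2 := by
  calc #{p ∈ t.toFinset | P p} = #(({p ∈ t.toFinset | P p} : Finset J).image t.idxOf) := by
        rw [card_image_of_injOn]
        intro p hp p' _ he
        simp only [coe_filter, List.mem_toFinset, Set.mem_ofPred_eq] at hp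
        exact (List.idxOf_inj hp.1).1 he
    _ ≤ #({a, b} : Finset ℕ) := by
        refine card_le_card fun i hi => ?_
        simp only [mem_image, mem_filter, List.mem_toFinset] at hi
        obtain ⟨p, ⟨hp, hP⟩, rfl⟩ := hi
        simpa using h p hp hP
    _ ≤ 2 := card_le_two

/-- A path without repeated vertices is a single segment, timed by position. -/
theorem segmented_path {t : List J} (ht : t.Nodup) (hne : t ≠ [])
    (hinj : ∀ p ∈ t, ∀ p' ∈ t, ent p = ent p' → p = p')
    (hch : t.IsChain fun p p' => ext p = ent p') :
    Segmented ent ext col t (fun _ => t.head hne) (fun p => t.idxOf p)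
      (fun p => t[t.idxOf p + 1]?) := by
  constructor
  · intro p _; simp
  · intro p hp p' hp' _ he
    exact hinj p hp p' hp' he
  · intro g i
    refine card_fiber_le (a := i) (b := i) fun p _ h => Or.inl h.2
  · intro p hp p' h
    obtain ⟨hlt, h⟩ := List.getElem?_eq_some_iff.1 h
    have h1 : t.idxOf p' = t.idxOf p + 1 := by rw [← h, ht.idxOf_getElem]
    refine ⟨h ▸ List.getElem_mem _, rfl, ?_, by omega, by omega⟩
    have := List.isChain_iff_getElem.1 hch (t.idxOf p) hlt
    rw [List.getElem_idxOf, h] at this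
    exact this.symm
  · intro p hp h
    have h1 := List.getElem?_eq_none_iff.1 h
    have h2 := List.idxOf_lt_length_of_mem hp
    rw [List.getLast?_eq_getElem?, show t.length - 1 = t.idxOf p by omega]
    rw [List.getElem?_eq_getElem h2, List.getElem_idxOf]
  · intro e
    refine ⟨fun p => t.length - t.idxOf p, fun p hp p' _ h => ?_⟩
    obtain ⟨hlt, h⟩ := List.getElem?_eq_some_iff.1 h
    have h1 : t.idxOf p' = t.idxOf p + 1 := by rw [← h, ht.idxOf_getElem]
    simp only [h1]
    omega

/-- A path without repeated vertices that ends at one of its own vertices, the entry of its `i`-th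
step, is a single segment. Its final cycle is folded: the time of a step is `i` plus its distance to
the `i`-th step along the cycle, in the shorter direction. Circularity within one edge would need
all steps of the cycle to belong to that edge, which `hcol` excludes. -/
theorem segmented_cycle {t : List J} (ht : t.Nodup) {i : ℕ} (hi : i < t.length)
    (hinj : ∀ p ∈ t, ∀ p' ∈ t, ent p = ent p' → p = p')
    (hch : t.IsChain fun p p' => ext p = ent p')
    (hlast : ext (t[t.length - 1]) = ent t[i])
    (hcol : ∀ e, ∃ j, i ≤ j ∧ ∃ hj : j < t.length, col t[j] ≠ e) :
    Segmented ent ext col t (fun _ => t[0])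
      (fun p => if t.idxOf p ≤ i then t.idxOf p
        else i + min (t.idxOf p - i) (t.length - t.idxOf p))
      (fun p => some (if h : t.idxOf p + 1 < t.length then t[t.idxOf p + 1] else t[i])) := by
  have key : ∀ p ∈ t, ∀ p', some (if h : t.idxOf p + 1 < t.length then t[t.idxOf p + 1] else t[i])
      = some p' → p' ∈ t ∧ ent p' = ext p ∧ ((t.idxOf p' = t.idxOf p + 1 ∧ t.idxOf p' < t.length)
        ∨ (t.idxOf p' = i ∧ t.idxOf p + 1 = t.length)) := by
    intro p hp p' h
    rw [Option.some.injEq] at h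
    have h2 := List.idxOf_lt_length_of_mem hp
    split_ifs at h with hlt
    · have h1 : t.idxOf p' = t.idxOf p + 1 := by rw [← h, ht.idxOf_getElem]
      refine ⟨h ▸ List.getElem_mem _, ?_, Or.inl ⟨h1, by omega⟩⟩
      have := List.isChain_iff_getElem.1 hch (t.idxOf p) hlt
      rw [List.getElem_idxOf, h] at this
      exact this.symm
    · have h1 : t.idxOf p' = i := by rw [← h, ht.idxOf_getElem]
      refine ⟨h ▸ List.getElem_mem _, ?_, Or.inr ⟨h1, by omega⟩⟩
      rw [← h, ← hlast]
      congr 1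
      have h3 : t.length - 1 = t.idxOf p := by omega
      simp only [h3, List.getElem_idxOf]
  constructor
  · intro p _; simp
  · intro p hp p' hp' _ he
    exact hinj p hp p' hp' he
  · intro g s
    refine card_fiber_le (a := s) (b := t.length + i - s) fun p hp h => ?_
    have h2 := List.idxOf_lt_length_of_mem hp
    have h3 := h.2
    split_ifs at h3 with h4 <;> omega
  · intro p hp p' h
    obtain ⟨h1, h2, h3⟩ := key p hp p' h
    refine ⟨h1, rfl, h2, ?_⟩
    rcases h3 with ⟨h3, h4⟩ | ⟨h3, h4⟩
    · rw [h3] at h4 ⊢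
      constructor <;> split_ifs <;> omega
    · rw [h3]
      constructor <;> split_ifs <;> omega
  · intro p hp h
    simp at h
  · intro e
    obtain ⟨l, hil, hl, hle⟩ := hcol e
    refine ⟨fun p => if t.idxOf p ≤ l then l - t.idxOf p else t.length - t.idxOf p + l,
      fun p hp p' hc h => ?_⟩
    obtain ⟨-, -, h3⟩ := key p hp p' h
    have h4 : t.idxOf p ≠ l := by
      rintro rfl
      rw [List.getElem_idxOf] at hle
      exact hle hc
    have h2 := List.idxOf_lt_length_of_mem hp
    dsimp only
    rcases h3 with ⟨h3, h5⟩ | ⟨h3, h5⟩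
    · rw [h3] at h5 ⊢
      split_ifs <;> omega
    · rw [h3]
      split_ifs <;> omega

/-- Either no vertex is entered twice, or there is a first step `x` that enters a vertex for the second
time. -/
theorem exists_first_repeat [DecidableEq V] (t : List J) :
    (∀ p ∈ t, ∀ p' ∈ t, ent p = ent p' → p = p') ∨
    ∃ t₁ x t₂, t = t₁ ++ x :: t₂ ∧ (∀ p ∈ t₁, ∀ p' ∈ t₁, ent p = ent p' → p = p') ∧
      ∃ y ∈ t₁, ent x = ent y := by
  induction t using List.reverseRecOn with
  | nil => simp
  | append_singleton t x ih =>
    rcases ih with ih | ⟨t₁, x', t₂, rfl, h, hy⟩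
    · by_cases hx : ∃ y ∈ t, ent x = ent y
      · exact Or.inr ⟨t, x, [], rfl, ih, hx⟩
      · push Not at hx
        left
        intro p hp p' hp' he
        rw [List.mem_append, List.mem_singleton] at hp hp'
        rcases hp with hp | rfl <;> rcases hp' with hp' | rfl
        · exact ih p hp p' hp' he
        · exact absurd he.symm (hx p hp)
        · exact absurd he (hx p' hp')
        · rfl
    · exact Or.inr ⟨t₁, x', t₂ ++ [x], by simp, h, hy⟩

/-- Every path has a segmentation if no closed subpath consists of steps of one edge: the part before
the first repeated vertex is a segment as in `segmented_cycle`, and the rest follows by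
induction. -/
theorem exists_segmented [DecidableEq V] (t : List J) (ht : t.Nodup)
    (hch : t.IsChain fun p p' => ext p = ent p')
    (hcol : ∀ α y β x t₂, t = α ++ y :: β ++ x :: t₂ → ent x = ent y → ∃ p ∈ β, col p ≠ col y) :
    ∃ seg τ tgt, Segmented ent ext col t seg τ tgt := by
  induction hn : t.length using Nat.strong_induction_on generalizing t with
  | _ n ih =>
    by_cases hne : t = []
    · subst hne
      exact ⟨id, fun _ => 0, fun _ => none, by constructor <;> simp⟩
    rcases exists_first_repeat (ent := ent) t with hinj | ⟨t₁, x, t₂, rfl, hinj, y, hy, hxy⟩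
    · exact ⟨_, _, _, segmented_path ht hne hinj hch⟩
    · have hnd := List.nodup_append'.1 ht
      have hc := List.isChain_append.1 hch
      obtain ⟨α, β, rfl⟩ := List.append_of_mem hy
      obtain ⟨s₂, τ₂, g₂, h₂⟩ := ih (x :: t₂).length (by simp at hn ⊢; omega) (x :: t₂) hnd.2.1 hc.2.1
        (fun α' y' β' x' t' h he => hcol ((α ++ y :: β) ++ α') y' β' x' t'
          (by rw [h]; simp) he) rfl
      obtain ⟨p₀, hp₀, hcp⟩ := hcol α y β x t₂ rfl hxy
      have h₁ := segmented_cycle (ent := ent) (ext := ext) (col := col) (t := α ++ y :: β)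
        (i := α.length) hnd.1 (by simp) hinj hc.1
        (by
          have := hc.2.2 ((α ++ y :: β)[(α ++ y :: β).length - 1]'(by simp))
            (by rw [List.getLast?_eq_getElem?]; simp) x (by simp)
          rw [this, hxy]
          simp)
        (by
          intro e
          by_cases hye : col y = e
          · obtain ⟨j, hj, rfl⟩ := List.getElem_of_mem hp₀
            refine ⟨α.length + (j + 1), by omega, by simp; omega, ?_⟩
            simp only [List.getElem_append_right (Nat.le_add_right _ _)]
            simpa [← hye] using hcp
          · exact ⟨α.length, le_rfl, by simp, by simpa using hye⟩)
      exact ⟨_, _, _, h₁.append h₂ (fun p hp hp' => hnd.2.2 hp hp') (by simp)⟩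

end Segments

/-! ### Segmented tours -/

section GoodTour
variable {V E : Type*} [DecidableEq V] [DecidableEq E] {r : ℕ} [NeZero r]

theorem IsPath.isChain {vert : E → Fin r → V} {l : List (E × Fin r)} {u w : V}
    (h : IsPath vert u l w) :
    l.IsChain fun p p' => vert p.1 (p.2 + 1) = vert p'.1 p'.2 := by
  induction l generalizing u with
  | nil => simp
  | cons p l ih =>
    rcases l with _ | ⟨q, l⟩
    · simp
    · exact List.isChain_cons_cons.2 ⟨h.2.1.symm, ih h.2⟩

theorem IsPath.getLast {vert : E → Fin r → V} {l : List (E × Fin r)} {u w : V} {p : E × Fin r}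
    (h : IsPath vert u l w) (hp : l.getLast? = some p) : vert p.1 (p.2 + 1) = w := by
  obtain ⟨l, rfl⟩ : ∃ l', l = l' ++ [p] := by
    rw [List.getLast?_eq_some_iff] at hp
    exact hp
  obtain ⟨v, -, -, h2⟩ := isPath_append.1 h
  exact h2

/-- A path whose steps belong to one edge goes round that edge. -/
theorem IsPath.eq_run {vert : E → Fin r → V} {e : E} (hinj : Function.Injective (vert e))
    {l : List (E × Fin r)} {k : Fin r} {w : V} (h : IsPath vert (vert e k) l w)
    (hl : ∀ p ∈ l, p.1 = e) : l = run e k l.length := by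
  induction l generalizing k with
  | nil => rfl
  | cons p l ih =>
    obtain ⟨f, k'⟩ := p
    obtain rfl : f = e := hl _ (List.mem_cons_self ..)
    obtain rfl : k' = k := hinj h.1
    rw [List.length_cons, run_succ, ← ih h.2 fun q hq => hl q (List.mem_cons_of_mem _ hq)]

/-- A closed tour through more than one edge can be cut open between steps of different edges. -/
theorem exists_rotation {l : List (E × Fin r)} {a q : E × Fin r} (ha : a ∈ l) (hq : q ∈ l)
    (hne : q.1 ≠ a.1) : ∃ l₁ l₂ x y, l = l₁ ++ l₂ ∧ l₁.getLast? = some y ∧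
      l₂.head? = some x ∧ x.1 ≠ y.1 := by
  rcases l with _ | ⟨c, l⟩
  · simp at ha
  have hex : ∃ d ∈ c :: l, d.1 ≠ c.1 := by
    by_cases h : a.1 = c.1
    · exact ⟨q, hq, h ▸ hne⟩
    · exact ⟨a, ha, h⟩
  have hD : (c :: l).dropWhile (fun d => d.1 = c.1) ≠ [] := by
    rw [Ne, List.dropWhile_eq_nil_iff]
    push Not
    simpa using hex
  obtain ⟨x, hx⟩ : ∃ x, ((c :: l).dropWhile (fun d => d.1 = c.1)).head? = some x :=
    ⟨_, List.head?_eq_some_head hD⟩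
  have hT : (c :: l).takeWhile (fun d => d.1 = c.1) ≠ [] := by simp
  obtain ⟨y, hy⟩ : ∃ y, ((c :: l).takeWhile (fun d => d.1 = c.1)).getLast? = some y :=
    ⟨_, List.getLast?_eq_some_getLast hT⟩
  refine ⟨_, _, x, y, (List.takeWhile_append_dropWhile (p := fun d => d.1 = c.1)).symm,
    hy, hx, ?_⟩
  have h1 : y.1 = c.1 := by
    have := List.mem_takeWhile_imp (List.mem_of_getLast? hy)
    simpa using this
  have h2 : x.1 ≠ c.1 := by
    have := List.head?_dropWhile_not (fun d : E × Fin r => d.1 = c.1) (c :: l)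
    rw [hx] at this
    simpa using this
  rwa [h1]

/-- After reordering, there is a tour `s :: t` such that the first and last step belong to different
edges and `t` has a segmentation. -/
theorem exists_good_tour (hr : 3 ≤ r) {vert : E → Fin r → V} (hp : Proper vert)
    {T : Finset E} (hT : EdgeClosed vert T) (hne : T.Nonempty) {l : List (E × Fin r)}
    (hl : IsTour vert T l) :
    ∃ vert' s t, Reorders vert vert' ∧ IsTour vert' T (s :: t) ∧
      IsPath vert' (vert' s.1 (s.2 + 1)) t (vert' s.1 s.2) ∧
      (∀ p, t.getLast? = some p → p.1 ≠ s.1) ∧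
      ∃ seg τ tgt, Segmented (fun p : E × Fin r => vert' p.1 p.2)
        (fun p => vert' p.1 (p.2 + 1)) Prod.fst t seg τ tgt := by
  obtain ⟨vert', l', hre, hl', hfull⟩ := exists_tour_no_full_run hr hp hT hl
  have hp' := hp.reorder hre
  obtain ⟨e, he⟩ := hne
  obtain ⟨f, k', hfe, hk'⟩ := hp.other e 0
  have hf : f ∈ T := hT e he f 0 k' hk'.symm
  obtain ⟨l₁, l₂, x, y, rfl, hy, hx, hxy⟩ :=
    exists_rotation ((hl'.mem (e, 0)).2 he) ((hl'.mem (f, 0)).2 hf) hfe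
  obtain ⟨t, rfl⟩ : ∃ t, l₂ = x :: t := by
    rcases l₂ with _ | ⟨c, t⟩
    · simp at hx
    · simp only [List.head?_cons, Option.some.injEq] at hx
      exact ⟨t, by rw [hx]⟩
  have htour := hl'.rotate
  rw [List.cons_append] at htour
  have hfull' : ∀ m₁ m₂ e k rest, x :: (t ++ l₁) = m₁ ++ m₂ → m₂ ++ m₁ ≠ run e k r ++ rest := by
    intro m₁ m₂ e k rest hm h
    have h1 : (l₁ ++ x :: t) ~r (m₂ ++ m₁) := by
      refine List.isRotated_append.trans ?_
      rw [List.cons_append, hm]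
      exact List.isRotated_append
    obtain ⟨n, hn⟩ := h1
    rw [List.rotate_eq_drop_append_take_mod] at hn
    refine hfull _ _ e k rest (List.take_append_drop _ _).symm (hn.trans h)
  have hpath : IsPath vert' (vert' x.1 (x.2 + 1)) (t ++ l₁) (vert' x.1 x.2) := by
    obtain ⟨u, hu⟩ := htour.closed
    obtain ⟨rfl, hu2⟩ := hu
    exact hu2
  refine ⟨vert', x, t ++ l₁, hre, htour, hpath, ?_, ?_⟩
  · intro p h
    rw [List.getLast?_append, hy] at h
    simp only [Option.some_or, Option.some.injEq] at h
    rw [← h]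
    exact hxy.symm
  · refine exists_segmented _ (List.nodup_cons.1 htour.nodup).2 hpath.isChain ?_
    intro α y' β x' t₂ ht hent
    by_contra hcon
    push Not at hcon
    obtain ⟨e', k⟩ := y'
    dsimp only at hcon hent
    have hpath' := hpath
    rw [ht] at hpath'
    obtain ⟨v, hv1, hv2⟩ := isPath_append.1 hpath'
    obtain ⟨v', -, hv3⟩ := isPath_append.1 hv1
    obtain rfl : vert' x'.1 x'.2 = v := hv2.1
    obtain rfl : vert' e' k = v' := hv3.1
    have hall : ∀ p ∈ (e', k) :: β, p.1 = e' := by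
      intro p hp
      rcases List.mem_cons.1 hp with rfl | hp
      · rfl
      · exact hcon p hp
    have hrun := IsPath.eq_run (hp'.inj e') hv3 hall
    have hnd : ((e', k) :: β).Nodup := by
      have h1 := (List.nodup_cons.1 htour.nodup).2
      rw [ht] at h1
      exact (List.nodup_append'.1 (List.nodup_append'.1 h1).1).2.1
    have hlen : ((e', k) :: β).length ≤ r := by
      have h1 : (((e', k) :: β).map Prod.snd).Nodup := by
        refine (List.nodup_map_iff_inj_on hnd).2 ?_
        intro a ha b hb hab
        exact Prod.ext ((hall a ha).trans (hall b hb).symm) hab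
      have h2 := h1.length_le_card
      simpa using h2
    have hend := isPath_run vert' e' k ((e', k) :: β).length
    rw [← hrun] at hend
    have h3 := isPath_unique hend hv3
    rw [hent] at h3
    have h4 := congrArg Fin.val (add_eq_left.1 (hp'.inj e' h3))
    simp only [Fin.val_ofNat, Fin.val_zero] at h4
    have h5 : ((e', k) :: β).length = r :=
      le_antisymm hlen (Nat.le_of_dvd (by simp) (Nat.dvd_of_mod_eq_zero h4))
    rw [h5] at hrun
    refine hfull' (x :: α) (((e', k) :: β) ++ x' :: t₂) e' k ((x' :: t₂) ++ (x :: α)) ?_ ?_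
    · rw [ht]; simp
    · rw [List.append_assoc, ← hrun]

end GoodTour

/-! ### Plans for the words of the vertices -/

section Plans
variable {V E : Type*} [DecidableEq V] [DecidableEq E] {r : ℕ} [NeZero r]

/-- The vertices covered by the edges in `S`. -/
def verts (vert : E → Fin r → V) (S : Finset E) : Finset V := S.biUnion fun e => univ.image (vert e)

theorem mem_verts {vert : E → Fin r → V} {S : Finset E} {v : V} :
    v ∈ verts vert S ↔ ∃ e ∈ S, ∃ k, vert e k = v := by simp [verts]

/-- Symbolic constraints for an edge with vertices `w`. The slot `(k, none)` is the initial letter of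
`w k`, and the slot `(k, some j)` is the letter that `w k` gets from the walk `j`. The `i`-th
constraint concerns the slot `D i`: if `P i = none`, it is a ground letter; if `P i = some s`, the
two slots contain the same shared initial letter, or letters from the same walk at times that
differ by at most one. -/
structure Certified (S : Finset E) (ini : V → Option (Option E)) (U : E × Fin r → Finset V)
    (τ : E × Fin r → V → ℕ) (w : Fin r → V) (D : Fin r → Fin r × Option (E × Fin r))
    (P : Fin r → Option (Fin r × Option (E × Fin r))) : Prop where
  inj : Function.Injective D
  acyclic : ∃ rank : Fin r → ℕ, ∀ i j, P i = some (D j) → rank j < rank i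
  ground : ∀ i, P i = none → ∃ k, D i = (k, none) ∧ ini (w k) = some none
  link : ∀ i s, P i = some s →
    (∃ k k' c, D i = (k, none) ∧ s = (k', none) ∧ ini (w k) = some (some c) ∧
      ini (w k') = some (some c)) ∨
    (∃ k k' j, D i = (k, some j) ∧ s = (k', some j) ∧ j.1 ∈ S ∧ w k ∈ U j ∧ w k' ∈ U j ∧
      τ j (w k) ≤ τ j (w k') + 1 ∧ τ j (w k') ≤ τ j (w k) + 1)

/-- A plan for the words of the vertices covered by `S`, before any symbol is chosen. `ini v` is the
initial letter of `v`: `none` means that there is none, `some none` is the ground symbol, and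
`some (some c)` is a letter shared by all vertices with the same `c`. The walks are indexed by
incidences `j`; the walk `j` visits the vertices of `U j`, the vertex `v` at time `τ j v`. A vertex
gets at most `Δ` letters; ground letters and shared letters are rare enough not to spoil the bounds
on prefixes; and every edge of `S` has `r` constraints, after reordering its vertices. -/
structure Plan (vert : E → Fin r → V) (Δ b : ℕ) (S : Finset E) (ini : V → Option (Option E))
    (U : E × Fin r → Finset V) (τ : E × Fin r → V → ℕ) : Prop where
  sub : ∀ j : E × Fin r, j.1 ∈ S → U j ⊆ verts vert S
  fiber : ∀ j : E × Fin r, j.1 ∈ S → ∀ t, #{v ∈ U j | τ j v = t} ≤ 2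
  deg : ∀ v ∈ verts vert S,
    (ini v).toList.length + #{j ∈ S ×ˢ (univ : Finset (Fin r)) | v ∈ U j} ≤ Δ
  ground : #{v ∈ verts vert S | ini v = some none} * b ≤ #(verts vert S)
  small : ∀ c, #{v ∈ verts vert S | ini v = some (some c)} ≤ b
  small_mem : ∀ v ∈ verts vert S, ∀ c, ini v = some (some c) → c ∈ S
  cert : ∀ e ∈ S, ∃ w D P, (∃ σ : Equiv.Perm (Fin r), w = vert e ∘ σ) ∧
    Certified S ini U τ w D P

theorem verts_reorder {vert vert' : E → Fin r → V} (h : Reorders vert vert') (S : Finset E) :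
    verts vert' S = verts vert S := by
  ext v
  simp only [mem_verts, h.exists_iff]

theorem verts_disjoint {vert : E → Fin r → V} {S T : Finset E} (hT : EdgeClosed vert T)
    {v : V} (h : v ∈ verts vert T) : v ∉ verts vert (S \ T) := by
  intro h'
  obtain ⟨e, he, k, rfl⟩ := mem_verts.1 h
  obtain ⟨f, hf, k', hkk⟩ := mem_verts.1 h'
  exact (mem_sdiff.1 hf).2 (hT e he f k k' hkk.symm)

/-- Plans for a closed set `T` of edges and for its complement in `S` do not interfere. -/
theorem plan_glue {vert : E → Fin r → V} {Δ b : ℕ} {S T : Finset E} (hTS : T ⊆ S)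
    (hT : EdgeClosed vert T) {ini₁ ini₂ : V → Option (Option E)}
    {U₁ U₂ : E × Fin r → Finset V} {τ₁ τ₂ : E × Fin r → V → ℕ}
    (h₁ : Plan vert Δ b T ini₁ U₁ τ₁) (h₂ : Plan vert Δ b (S \ T) ini₂ U₂ τ₂) :
    Plan vert Δ b S (fun v => if v ∈ verts vert T then ini₁ v else ini₂ v)
      (fun j => if j.1 ∈ T then U₁ j else U₂ j) (fun j => if j.1 ∈ T then τ₁ j else τ₂ j) := by
  have hd : ∀ v ∈ verts vert (S \ T), v ∉ verts vert T := fun v h h' => verts_disjoint hT h' h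
  have hS : verts vert S = verts vert T ∪ verts vert (S \ T) := by
    ext v
    simp only [mem_union, mem_verts, mem_sdiff]
    constructor
    · rintro ⟨e, he, h⟩
      by_cases heT : e ∈ T
      · exact Or.inl ⟨e, heT, h⟩
      · exact Or.inr ⟨e, ⟨he, heT⟩, h⟩
    · rintro (⟨e, he, h⟩ | ⟨e, he, h⟩)
      · exact ⟨e, hTS he, h⟩
      · exact ⟨e, he.1, h⟩
  have hdis : Disjoint (verts vert T) (verts vert (S \ T)) :=
    disjoint_right.2 hd
  have hcount : ∀ x, #{v ∈ verts vert S | (if v ∈ verts vert T then ini₁ v else ini₂ v) = x}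
      = #{v ∈ verts vert T | ini₁ v = x} + #{v ∈ verts vert (S \ T) | ini₂ v = x} := by
    intro x
    rw [hS, filter_union, card_union_of_disjoint]
    · congr 2
      · exact filter_congr fun v hv => by simp [hv]
      · exact filter_congr fun v hv => by simp [hd v hv]
    · exact disjoint_filter_filter hdis
  have hmem : ∀ v ∈ verts vert S, (v ∈ verts vert T ∧ v ∉ verts vert (S \ T)) ∨
      (v ∉ verts vert T ∧ v ∈ verts vert (S \ T)) := by
    intro v hv
    rw [hS, mem_union] at hv
    rcases hv with hv | hv
    · exact Or.inl ⟨hv, verts_disjoint hT hv⟩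
    · exact Or.inr ⟨hd v hv, hv⟩
  have hsm : ∀ v ∈ verts vert S, ∀ c,
      (if v ∈ verts vert T then ini₁ v else ini₂ v) = some (some c) →
      (v ∈ verts vert T ∧ c ∈ T) ∨ (v ∉ verts vert T ∧ c ∈ S \ T) := by
    intro v hv c hc
    rcases hmem v hv with ⟨h, -⟩ | ⟨h, h'⟩ <;> simp only [h, if_true, if_false] at hc
    · exact Or.inl ⟨h, h₁.small_mem v h c hc⟩
    · exact Or.inr ⟨h, h₂.small_mem v h' c hc⟩
  constructor
  · intro j hj
    split_ifs with h
    · rw [hS]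
      exact (h₁.sub j h).trans subset_union_left
    · rw [hS]
      exact (h₂.sub j (mem_sdiff.2 ⟨hj, h⟩)).trans subset_union_right
  · intro j hj t
    split_ifs with h
    · exact h₁.fiber j h t
    · exact h₂.fiber j (mem_sdiff.2 ⟨hj, h⟩) t
  · intro v hv
    rcases hmem v hv with ⟨h, h'⟩ | ⟨h, h'⟩
    · simp only [h, if_true]
      refine le_trans (Nat.add_le_add_left (card_le_card ?_) _) (h₁.deg v h)
      intro j
      simp only [mem_product, mem_univ, and_true, mem_filter]
      rintro ⟨he, hv⟩
      by_cases heT : j.1 ∈ T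
      · rw [if_pos heT] at hv
        exact ⟨heT, hv⟩
      · rw [if_neg heT] at hv
        exact absurd (h₂.sub j (mem_sdiff.2 ⟨he, heT⟩) hv) h'
    · simp only [h, if_false]
      refine le_trans (Nat.add_le_add_left (card_le_card ?_) _) (h₂.deg v h')
      intro j
      simp only [mem_product, mem_univ, and_true, mem_filter]
      rintro ⟨he, hv⟩
      by_cases heT : j.1 ∈ T
      · rw [if_pos heT] at hv
        exact absurd (h₁.sub j heT hv) h
      · rw [if_neg heT] at hv
        exact ⟨mem_sdiff.2 ⟨he, heT⟩, hv⟩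
  · rw [hcount, hS, card_union_of_disjoint hdis, add_mul]
    exact add_le_add h₁.ground h₂.ground
  · intro c
    rw [hcount]
    by_cases hc : c ∈ T
    · have : ({v ∈ verts vert (S \ T) | ini₂ v = some (some c)} : Finset V) = ∅ := by
        rw [filter_eq_empty_iff]
        intro v hv h
        exact (mem_sdiff.1 (h₂.small_mem v hv c h)).2 hc
      rw [this, card_empty, add_zero]
      exact h₁.small c
    · have : ({v ∈ verts vert T | ini₁ v = some (some c)} : Finset V) = ∅ := by
        rw [filter_eq_empty_iff]
        intro v hv h
        exact hc (h₁.small_mem v hv c h)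
      rw [this, card_empty, zero_add]
      exact h₂.small c
  · intro v hv c hc
    rcases hsm v hv c hc with ⟨-, h⟩ | ⟨-, h⟩
    · exact hTS h
    · exact (mem_sdiff.1 h).1
  · intro e he
    by_cases heT : e ∈ T
    · obtain ⟨w, D, P, ⟨σ, rfl⟩, hc⟩ := h₁.cert e heT
      have hw : ∀ k, (vert e ∘ σ) k ∈ verts vert T := fun k => mem_verts.2 ⟨e, heT, _, rfl⟩
      refine ⟨_, D, P, ⟨σ, rfl⟩, hc.inj, hc.acyclic, ?_, ?_⟩
      · intro i hi
        obtain ⟨k, h1, h2⟩ := hc.ground i hi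
        exact ⟨k, h1, by simp only [hw, if_true]; exact h2⟩
      · intro i s hi
        rcases hc.link i s hi with ⟨k, k', c, h1, h2, h3, h4⟩ | ⟨k, k', j, h1, h2, h3, h4⟩
        · exact Or.inl ⟨k, k', c, h1, h2, by simp only [hw, if_true]; exact ⟨h3, h4⟩⟩
        · exact Or.inr ⟨k, k', j, h1, h2, hTS h3, by simp only [h3, if_true]; exact h4⟩
    · have he' : e ∈ S \ T := mem_sdiff.2 ⟨he, heT⟩
      obtain ⟨w, D, P, ⟨σ, rfl⟩, hc⟩ := h₂.cert e he'
      have hw : ∀ k, (vert e ∘ σ) k ∉ verts vert T :=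
        fun k => hd _ (mem_verts.2 ⟨e, he', _, rfl⟩)
      refine ⟨_, D, P, ⟨σ, rfl⟩, hc.inj, hc.acyclic, ?_, ?_⟩
      · intro i hi
        obtain ⟨k, h1, h2⟩ := hc.ground i hi
        exact ⟨k, h1, by simp only [hw, if_false]; exact h2⟩
      · intro i s hi
        rcases hc.link i s hi with ⟨k, k', c, h1, h2, h3, h4⟩ | ⟨k, k', j, h1, h2, h3, h4⟩
        · exact Or.inl ⟨k, k', c, h1, h2, by simp only [hw, if_false]; exact ⟨h3, h4⟩⟩
        · have hj := mem_sdiff.1 h3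
          exact Or.inr ⟨k, k', j, h1, h2, hj.1, by simp only [hj.2, if_false]; exact h4⟩

end Plans

/-! ### Plans for components -/

section BuildPlans
variable {V E : Type*} [DecidableEq V] [DecidableEq E] [Fintype E] {r : ℕ} [NeZero r]

theorem card_incidence_reorder {vert vert' : E → Fin r → V} (h : Reorders vert vert') (v : V) :
    #{p : E × Fin r | vert' p.1 p.2 = v} ≤ #{p : E × Fin r | vert p.1 p.2 = v} := by
  choose σ hσ using h
  refine card_le_card_of_injOn (fun p => (p.1, σ p.1 p.2)) ?_ ?_
  · intro p hp
    simpa [hσ] using hp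
  · rintro ⟨e, k⟩ - ⟨e', k'⟩ - h
    simp only [Prod.mk.injEq] at h
    obtain ⟨rfl, h⟩ := h
    simpa using h

/-- A component with at least `b` vertices. The walks are the segments of a tour with the first step
`s` removed, and the vertex at which `s` starts gets a ground letter. The `i`-th constraint of an
edge links the letters at the two ends of its `i`-th step. For the step `s` and for the last step
of the tour it concerns the ground letter of the vertex common to both instead; these two steps
belong to different edges, so no edge uses the ground letter twice. -/
theorem plan_big (hr : 3 ≤ r) {vert : E → Fin r → V} (hp : Proper vert) {Δ b : ℕ}
    (hdeg : ∀ v, #{p : E × Fin r | vert p.1 p.2 = v} ≤ Δ) {T : Finset E}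
    (hT : EdgeClosed vert T) (hne : T.Nonempty) {l : List (E × Fin r)} (hl : IsTour vert T l)
    (hb : b ≤ #(verts vert T)) : ∃ ini U τ, Plan vert Δ b T ini U τ := by
  obtain ⟨vert', s, t, hre, htour, hpath, hlast, seg, τ, tgt, hseg⟩ :=
    exists_good_tour hr hp hT hne hl
  have hvT : verts vert' T = verts vert T := verts_reorder hre T
  set U : E × Fin r → Finset V := fun g =>
    ({p ∈ t.toFinset | seg p = g} : Finset (E × Fin r)).image fun p => vert' p.1 p.2 with hU
  have hmU : ∀ g v, v ∈ U g ↔ ∃ p ∈ t, seg p = g ∧ vert' p.1 p.2 = v := by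
    intro g v
    simp [hU, and_assoc]
  set τ' : E × Fin r → V → ℕ := fun g v =>
    if h : ∃ p ∈ t, seg p = g ∧ vert' p.1 p.2 = v then τ h.choose else 0 with hτ'
  have hτ : ∀ p ∈ t, τ' (seg p) (vert' p.1 p.2) = τ p := by
    intro p hpt
    have h : ∃ p' ∈ t, seg p' = seg p ∧ vert' p'.1 p'.2 = vert' p.1 p.2 := ⟨p, hpt, rfl, rfl⟩
    simp only [hτ', dif_pos h]
    congr 1
    exact hseg.seg_inj _ h.choose_spec.1 _ hpt h.choose_spec.2.1 h.choose_spec.2.2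
  have hst : s ∉ t := (List.nodup_cons.1 htour.nodup).1
  refine ⟨fun v => if v = vert' s.1 s.2 then some none else none, U, τ', ?_⟩
  constructor
  · intro j _ v hv
    obtain ⟨p, hpt, -, rfl⟩ := (hmU j v).1 hv
    rw [← hvT, mem_verts]
    exact ⟨p.1, (htour.mem p).1 (by simp [hpt]), p.2, rfl⟩
  · intro j _ i
    refine le_trans (le_trans (card_le_card ?_)
      (card_image_le (f := fun p : E × Fin r => vert' p.1 p.2))) (hseg.fiber j i)
    intro v hv
    obtain ⟨hv1, hv2⟩ := mem_filter.1 hv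
    obtain ⟨p, hpt, rfl, rfl⟩ := (hmU j v).1 hv1
    rw [hτ p hpt] at hv2
    exact mem_image.2 ⟨p, by simp [hpt, hv2], rfl⟩
  · intro v _
    have h1 : #{j ∈ T ×ˢ (univ : Finset (Fin r)) | v ∈ U j}
        ≤ #{p ∈ t.toFinset | vert' p.1 p.2 = v} := by
      refine le_trans (card_le_card ?_) (card_image_le (f := seg))
      intro j hj
      obtain ⟨p, hpt, h1, h2⟩ := (hmU j v).1 (mem_filter.1 hj).2
      exact mem_image.2 ⟨p, by simp [hpt, h2], h1⟩
    have h2 : (if v = vert' s.1 s.2 then some none else none : Option (Option E)).toList.length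
        + #{p ∈ t.toFinset | vert' p.1 p.2 = v} ≤ #{p : E × Fin r | vert' p.1 p.2 = v} := by
      split_ifs with hv
      · rw [Option.toList_some, List.length_singleton, add_comm,
          ← card_insert_of_notMem (a := s) (by simp [hst])]
        refine card_le_card fun p hp => ?_
        rcases mem_insert.1 hp with rfl | hp
        · simp [hv]
        · simpa using (mem_filter.1 hp).2
      · simp only [Option.toList_none, List.length_nil, zero_add]
        exact card_le_card fun p hp => by simpa using (mem_filter.1 hp).2
    exact (Nat.add_le_add_left h1 _).trans
      (h2.trans ((card_incidence_reorder hre v).trans (hdeg v)))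
  · refine le_trans ?_ hb
    refine (Nat.mul_le_mul_right b (m := 1) ?_).trans (one_mul b).le
    refine (card_le_card (t := {vert' s.1 s.2}) ?_).trans_eq (card_singleton _)
    intro v hv
    have := (mem_filter.1 hv).2
    split_ifs at this with h
    simpa using h
  · intro c
    refine le_trans (le_of_eq ?_) (Nat.zero_le b)
    rw [card_eq_zero, filter_eq_empty_iff]
    intro v _
    split_ifs <;> simp
  · intro v _ c
    split_ifs <;> simp
  · intro e he
    set D : Fin r → Fin r × Option (E × Fin r) := fun k =>
      if (e, k) = s then (k, none) else
        (tgt (e, k)).elim (k + 1, none) fun _ => (k, some (seg (e, k))) with hD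
    set P : Fin r → Option (Fin r × Option (E × Fin r)) := fun k =>
      if (e, k) = s then none else
        (tgt (e, k)).elim none fun _ => some (k + 1, some (seg (e, k))) with hP
    have hcase : ∀ k, ((e, k) = s ∧ D k = (k, none) ∧ P k = none) ∨
        ((e, k) ∈ t ∧ tgt (e, k) = none ∧ D k = (k + 1, none) ∧ P k = none) ∨
        (∃ p', (e, k) ∈ t ∧ tgt (e, k) = some p' ∧ D k = (k, some (seg (e, k))) ∧
          P k = some (k + 1, some (seg (e, k)))) := by
      intro k
      by_cases h : (e, k) = s
      · exact Or.inl ⟨h, by simp [hD, h], by simp [hP, h]⟩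
      · have ht : (e, k) ∈ t := by
          rcases List.mem_cons.1 ((htour.mem (e, k)).2 he) with h' | h'
          · exact absurd h' h
          · exact h'
        cases hg : tgt (e, k) with
        | none => exact Or.inr (Or.inl ⟨ht, rfl, by simp [hD, h, hg], by simp [hP, h, hg]⟩)
        | some p' => exact Or.inr (Or.inr ⟨p', ht, rfl, by simp [hD, h, hg], by simp [hP, h, hg]⟩)
    have hl1 : ∀ k, (e, k) ∈ t → tgt (e, k) = none → e ≠ s.1 :=
      fun k h h' => hlast _ (hseg.tgt_none _ h h')
    obtain ⟨rank, hrank⟩ := hseg.acyclic e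
    refine ⟨vert' e, D, P, hre e, ?_, ⟨fun k => rank (e, k), ?_⟩, ?_, ?_⟩
    · intro k k' hkk
      rcases hcase k with ⟨h1, h2, -⟩ | ⟨h1, h2, h3, -⟩ | ⟨p, h1, h2, h3, -⟩ <;>
        rcases hcase k' with ⟨g1, g2, -⟩ | ⟨g1, g2, g3, -⟩ | ⟨p', g1, g2, g3, -⟩
      · rw [← g1] at h1
        exact congrArg Prod.snd h1
      · exact absurd (congrArg Prod.fst h1) (hl1 k' g1 g2)
      · rw [h2, g3] at hkk
        simp at hkk
      · exact absurd (congrArg Prod.fst g1) (hl1 k h1 h2)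
      · have a1 := hseg.tgt_none _ h1 h2
        have a2 := hseg.tgt_none _ g1 g2
        rw [a1, Option.some.injEq] at a2
        exact congrArg Prod.snd a2
      · rw [h3, g3] at hkk
        simp at hkk
      · rw [h3, g2] at hkk
        simp at hkk
      · rw [h3, g3] at hkk
        simp at hkk
      · rw [h3, g3] at hkk
        exact congrArg Prod.fst hkk
    · intro i j hij
      rcases hcase i with ⟨-, -, h2⟩ | ⟨-, -, -, h2⟩ | ⟨p', h1, h2, -, h3⟩
      · rw [h2] at hij; simp at hij
      · rw [h2] at hij; simp at hij
      · rw [h3, Option.some.injEq] at hij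
        rcases hcase j with ⟨-, g, -⟩ | ⟨-, -, g, -⟩ | ⟨p'', g1, g2, g3, -⟩
        · rw [g] at hij; simp at hij
        · rw [g] at hij; simp at hij
        · rw [g3] at hij
          simp only [Prod.mk.injEq, Option.some.injEq] at hij
          obtain ⟨rfl, hs⟩ := hij
          obtain ⟨a1, a2, a3, -⟩ := hseg.tgt_some _ h1 p' h2
          have : p' = (e, i + 1) := hseg.seg_inj _ a1 _ g1 (a2.trans hs) a3
          exact hrank _ h1 _ rfl (this ▸ h2)
    · intro k hk
      rcases hcase k with ⟨h1, h2, -⟩ | ⟨h1, h2, h3, -⟩ | ⟨p', -, -, -, h3⟩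
      · exact ⟨k, h2, by rw [← h1]; simp⟩
      · refine ⟨k + 1, h3, ?_⟩
        have := hpath.getLast (hseg.tgt_none _ h1 h2)
        dsimp only at this
        rw [if_pos this]
      · rw [h3] at hk; simp at hk
    · intro k x hx
      right
      rcases hcase k with ⟨-, -, h2⟩ | ⟨-, -, -, h2⟩ | ⟨p', h1, h2, h4, h3⟩
      · rw [h2] at hx; simp at hx
      · rw [h2] at hx; simp at hx
      · rw [h3, Option.some.injEq] at hx
        obtain ⟨a1, a2, a3, a4, a5⟩ := hseg.tgt_some _ h1 p' h2
        dsimp only at a3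
        refine ⟨k, k + 1, seg (e, k), h4, hx.symm, ?_, ?_, ?_, ?_⟩
        · exact (htour.mem _).1 (List.mem_cons_of_mem _ (hseg.seg_mem _ h1))
        · exact (hmU _ _).2 ⟨(e, k), h1, rfl, rfl⟩
        · exact (hmU _ _).2 ⟨p', a1, a2, a3⟩
        · have b1 : τ' (seg (e, k)) (vert' e k) = τ (e, k) := hτ _ h1
          have b2 : τ' (seg (e, k)) (vert' e (k + 1)) = τ p' := by
            rw [← a2, ← a3, hτ _ a1]
          rw [b1, b2]
          exact ⟨a4, a5⟩

/-- Every vertex can be assigned to an edge containing it such that each edge has at most `r - 2`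
vertices assigned to it. Hall's condition holds because `r ≤ (r - 2) * Δ`. -/
theorem exists_assignment (hr : 4 ≤ r) {vert : E → Fin r → V} {Δ : ℕ} (hΔ : 2 ≤ Δ)
    (hdeg : ∀ v, #{p : E × Fin r | vert p.1 p.2 = v} = Δ) :
    ∃ f : V → E × Fin (r - 2), Function.Injective f ∧ ∀ v, ∃ k, vert (f v).1 k = v := by
  classical
  obtain ⟨f, hf, hm⟩ := (all_card_le_biUnion_card_iff_exists_injective
    (fun v => ({q | ∃ k, vert q.1 k = v} : Finset (E × Fin (r - 2))))).1 (by
      intro A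
      set N : Finset E := {e | ∃ k, vert e k ∈ A} with hN
      have h1 : (A.biUnion fun v => ({q | ∃ k, vert q.1 k = v} : Finset (E × Fin (r - 2))))
          = N ×ˢ univ := by
        ext ⟨e, i⟩
        simp [hN]
      rw [h1, card_product, card_univ, Fintype.card_fin]
      have h2 : #A * Δ ≤ #N * r := by
        calc #A * Δ = ∑ v ∈ A, #{p : E × Fin r | vert p.1 p.2 = v} := by
              rw [sum_congr rfl fun v _ => hdeg v, sum_const, smul_eq_mul]
          _ = #(A.biUnion fun v => ({p | vert p.1 p.2 = v} : Finset (E × Fin r))) := by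
              rw [card_biUnion]
              intro v _ v' _ hvv
              rw [Function.onFun, disjoint_left]
              intro p hp hp'
              exact hvv ((mem_filter.1 hp).2.symm.trans (mem_filter.1 hp').2)
          _ ≤ #(N ×ˢ (univ : Finset (Fin r))) := by
              refine card_le_card ?_
              intro p hp
              obtain ⟨v, hv, hpv⟩ := mem_biUnion.1 hp
              rw [mem_filter] at hpv
              simp only [hN, mem_product, mem_filter, mem_univ, true_and, and_true]
              exact ⟨p.2, hpv.2 ▸ hv⟩
          _ = #N * r := by simp
      obtain ⟨m, rfl⟩ := Nat.exists_eq_add_of_le hr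
      have h3 : 4 + m ≤ (4 + m - 2) * Δ := by
        rw [show 4 + m - 2 = 2 + m by omega]
        nlinarith
      have h4 : #A * Δ ≤ #N * (4 + m - 2) * Δ :=
        h2.trans (by rw [mul_assoc]; exact Nat.mul_le_mul_left _ h3)
      exact Nat.le_of_mul_le_mul_right h4 (by omega))
  exact ⟨f, hf, fun v => by simpa using hm v⟩

/-- A component with at most `b` vertices. All its vertices share their initial letter, which gives
`r - 1` constraints for each edge. The last constraint comes from a walk that visits two vertices
of the edge at the same time, namely two that are not assigned to it by `exists_assignment`. A
vertex is not visited for the edge it is assigned to, which leaves room for the initial letter. -/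
theorem plan_small (hr : 4 ≤ r) {vert : E → Fin r → V} (hinj : ∀ e, Function.Injective (vert e))
    {Δ b : ℕ} (hΔ : 2 ≤ Δ) (hdeg : ∀ v, #{p : E × Fin r | vert p.1 p.2 = v} = Δ) {T : Finset E}
    (hne : T.Nonempty) (hb : #(verts vert T) ≤ b) : ∃ ini U τ, Plan vert Δ b T ini U τ := by
  obtain ⟨f, hf, hfm⟩ := exists_assignment hr hΔ hdeg
  obtain ⟨c, hc⟩ := hne
  have hk : ∀ e, ∃ k k', k ≠ k' ∧ (f (vert e k)).1 ≠ e ∧ (f (vert e k')).1 ≠ e := by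
    intro e
    have h1 : #{k | (f (vert e k)).1 = e} ≤ r - 2 := by
      calc #{k | (f (vert e k)).1 = e} ≤ #(univ : Finset (Fin (r - 2))) := by
            refine card_le_card_of_injOn (fun k => (f (vert e k)).2) (fun _ _ => by simp) ?_
            intro k hk k' hk' h
            simp only [coe_filter, mem_univ, true_and, Set.mem_ofPred_eq] at hk hk'
            exact hinj e (hf (Prod.ext (hk.trans hk'.symm) h))
        _ = r - 2 := by simp
    have h2 := card_filter_add_card_filter_not (s := (univ : Finset (Fin r)))
      (fun k => (f (vert e k)).1 = e)
    rw [card_univ, Fintype.card_fin] at h2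
    obtain ⟨k, hk, k', hk', hne⟩ := one_lt_card.1
      (show 1 < #{k | ¬ (f (vert e k)).1 = e} by omega)
    exact ⟨k, k', hne, (mem_filter.1 hk).2, (mem_filter.1 hk').2⟩
  choose k₁ k₂ hne h₁ h₂ using hk
  set U : E × Fin r → Finset V := fun j =>
    if j.2 = 0 then {vert j.1 (k₁ j.1), vert j.1 (k₂ j.1)} else ∅ with hU
  have hmU : ∀ j v, v ∈ U j → j.2 = 0 ∧ (f v).1 ≠ j.1 ∧ ∃ k, vert j.1 k = v := by
    intro j v hv
    simp only [hU] at hv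
    split_ifs at hv with h
    · simp only [mem_insert, mem_singleton] at hv
      rcases hv with rfl | rfl
      · exact ⟨h, h₁ _, _, rfl⟩
      · exact ⟨h, h₂ _, _, rfl⟩
    · simp at hv
  refine ⟨fun _ => some (some c), U, fun _ _ => 0, ?_⟩
  constructor
  · intro j hj v hv
    obtain ⟨-, -, h⟩ := hmU j v hv
    exact mem_verts.2 ⟨_, hj, h⟩
  · intro j _ t
    refine (card_filter_le _ _).trans ?_
    simp only [hU]
    split_ifs
    · exact card_le_two
    · simp
  · intro v _
    rw [Option.toList_some, List.length_singleton, add_comm]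
    rw [← card_image_of_injOn (f := Prod.fst)]
    · rw [← card_insert_of_notMem (a := (f v).1), ← hdeg v]
      · refine le_trans (card_le_card ?_) (card_image_le (f := Prod.fst))
        intro e he
        rcases mem_insert.1 he with rfl | he
        · obtain ⟨k, hk⟩ := hfm v
          exact mem_image.2 ⟨((f v).1, k), by simpa using hk, rfl⟩
        · obtain ⟨j, hj, rfl⟩ := mem_image.1 he
          obtain ⟨-, -, k, hk⟩ := hmU j v (mem_filter.1 hj).2
          exact mem_image.2 ⟨(j.1, k), by simpa using hk, rfl⟩
      · intro h
        obtain ⟨j, hj, h⟩ := mem_image.1 h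
        exact (hmU j v (mem_filter.1 hj).2).2.1 h.symm
    · intro j hj j' hj' h
      have a1 := (hmU j v (mem_filter.1 hj).2).1
      have a2 := (hmU j' v (mem_filter.1 hj').2).1
      exact Prod.ext h (a1.trans a2.symm)
  · simp
  · intro c'
    exact (card_filter_le _ _).trans hb
  · intro v _ c' h
    simp only [Option.some.injEq] at h
    exact h ▸ hc
  · intro e he
    refine ⟨vert e, fun i => if i = 0 then (k₁ e, some (e, 0)) else (i, none),
      fun i => if i = 0 then some (k₂ e, some (e, 0)) else some (0, none),
      ⟨1, by simp⟩, ?_, ⟨fun _ => 0, ?_⟩, ?_, ?_⟩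
    · intro i j hij
      dsimp only at hij
      split_ifs at hij with a b b
      · rw [a, b]
      · simp at hij
      · simp at hij
      · simpa using hij
    · intro i j hij
      split_ifs at hij with a b b
      · simp only [Option.some.injEq, Prod.mk.injEq] at hij
        exact absurd hij.1.symm (hne e)
      · simp at hij
      · simp at hij
      · simp only [Option.some.injEq, Prod.mk.injEq] at hij
        exact absurd hij.1.symm b
    · intro i hi
      split_ifs at hi
    · intro i x hx
      split_ifs at hx ⊢ with a
      · rw [Option.some.injEq] at hx
        exact Or.inr ⟨k₁ e, k₂ e, (e, 0), rfl, hx.symm, he, by simp [hU], by simp [hU], by simp⟩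
      · rw [Option.some.injEq] at hx
        exact Or.inl ⟨i, 0, c, rfl, hx.symm, rfl, rfl⟩

/-- Every closed set of edges has a plan, by induction over connected components. -/
theorem exists_plan (hr : 4 ≤ r) {vert : E → Fin r → V} (hp : Proper vert)
    {Δ : ℕ} (b : ℕ) (hΔ : 2 ≤ Δ) (hdeg : ∀ v, #{p : E × Fin r | vert p.1 p.2 = v} = Δ)
    (S : Finset E) (hS : EdgeClosed vert S) : ∃ ini U τ, Plan vert Δ b S ini U τ := by
  induction hn : #S using Nat.strong_induction_on generalizing S with
  | _ n ih =>
    rcases S.eq_empty_or_nonempty with rfl | hne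
    · refine ⟨fun _ => none, fun _ => ∅, fun _ _ => 0, ?_⟩
      constructor <;> simp [verts]
    · obtain ⟨T, hTS, hTne, hT, l, hl⟩ := exists_tour hS hne
      have h1 : ∃ ini U τ, Plan vert Δ b T ini U τ := by
        rcases le_total b #(verts vert T) with hb | hb
        · exact plan_big (by omega) hp (fun v => (hdeg v).le) hT hTne hl hb
        · exact plan_small hr hp.inj hΔ hdeg hTne hb
      have hST : EdgeClosed vert (S \ T) := by
        intro e he f k k' h
        rw [mem_sdiff] at he ⊢
        exact ⟨hS e he.1 f k k' h, fun hf => he.2 (hT f hf e k' k h.symm)⟩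
      obtain ⟨i₁, U₁, τ₁, p₁⟩ := h1
      obtain ⟨i₂, U₂, τ₂, p₂⟩ := ih #(S \ T)
        (hn ▸ card_lt_card (sdiff_ssubset hTS hTne)) (S \ T) hST rfl
      exact ⟨_, _, _, plan_glue hTS hT p₁ p₂⟩

end BuildPlans

/-! ### Initial letters and indices -/

section Embedding

/-- Items of weight at most `W` can be distributed to `M` bins such that no bin exceeds the average
by more than `W`: put each item into a lightest bin. -/
theorem exists_bins {E : Type*} [Fintype E] [DecidableEq E] {M : ℕ} (hM : 0 < M) (wt : E → ℕ)
    (W : ℕ) (hW : ∀ c, wt c ≤ W) :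
    ∃ g : E → Fin M, ∀ x, (∑ c with g c = x, wt c) * M ≤ (∑ c, wt c) + W * M := by
  have : ∀ S : Finset E, ∃ g : E → Fin M,
      ∀ x, (∑ c ∈ S with g c = x, wt c) * M ≤ (∑ c ∈ S, wt c) + W * M := by
    intro S
    induction S using Finset.induction_on with
    | empty => exact ⟨fun _ => ⟨0, hM⟩, by simp⟩
    | insert a S ha ih =>
      obtain ⟨g, hg⟩ := ih
      obtain ⟨x₀, -, hx₀⟩ := exists_min_image (univ : Finset (Fin M))
        (fun x => ∑ c ∈ S with g c = x, wt c) ⟨⟨0, hM⟩, mem_univ _⟩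
      have htot : ∑ x, (∑ c ∈ S with g c = x, wt c) = ∑ c ∈ S, wt c :=
        sum_fiberwise S g wt
      have hmin : (∑ c ∈ S with g c = x₀, wt c) * M ≤ ∑ c ∈ S, wt c := by
        rw [← htot, mul_comm]
        calc M * _ = ∑ x : Fin M, (∑ c ∈ S with g c = x₀, wt c) := by simp
          _ ≤ _ := sum_le_sum fun x hx => hx₀ x hx
      refine ⟨Function.update g a x₀, fun x => ?_⟩
      have hS : ∀ x, ({c ∈ S | Function.update g a x₀ c = x} : Finset E)
          = ({c ∈ S | g c = x} : Finset E) := by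
        intro x
        refine filter_congr fun c hc => ?_
        have : c ≠ a := fun h => ha (h ▸ hc)
        rw [Function.update_of_ne this]
      rw [filter_insert, Function.update_self, sum_insert ha]
      have h3 := hg x
      split_ifs with h
      · subst h
        rw [sum_insert (by simp [ha]), hS]
        have h1 := Nat.mul_le_mul_right M (hW a)
        rw [add_mul]
        omega
      · rw [hS]
        omega
  exact this univ

/-- If the fibres of `ℓ` have at most `K` elements, then indices in `Fin K` separate the elements of
each fibre. -/
theorem exists_index {V Y : Type*} [Fintype V] [DecidableEq Y] {K : ℕ} (ℓ : V → Y)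
    (h : ∀ v, #{v' | ℓ v' = ℓ v} ≤ K) :
    ∃ idx : V → Fin K, ∀ v v', ℓ v = ℓ v' → idx v = idx v' → v = v' := by
  classical
  have : ∀ y, ∃ c : V → ℕ, (∀ v, ℓ v = y → c v < K) ∧
      ∀ v v', ℓ v = y → ℓ v' = y → c v = c v' → v = v' := by
    intro y
    refine ⟨fun v => if hv : v ∈ ({v | ℓ v = y} : Finset V) then equivFin _ ⟨v, hv⟩ else 0,
      ?_, ?_⟩
    · rintro v rfl
      have hv : v ∈ ({v' | ℓ v' = ℓ v} : Finset V) := by simp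
      dsimp only
      rw [dif_pos hv]
      exact (Fin.isLt _).trans_le (h v)
    · intro v v' hv hv' he
      have h1 : v ∈ ({v' | ℓ v' = y} : Finset V) := by simp [hv]
      have h2 : v' ∈ ({v' | ℓ v' = y} : Finset V) := by simp [hv']
      simp only [dif_pos h1, dif_pos h2] at he
      exact congrArg Subtype.val ((equivFin _).injective (Fin.ext he))
  choose c hc1 hc2 using this
  refine ⟨fun v => ⟨c (ℓ v) v, hc1 _ v rfl⟩, fun v v' hv he => ?_⟩
  have := congrArg Fin.val he
  dsimp only at this
  rw [← hv] at this
  exact hc2 _ v v' rfl hv.symm this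

/-- The relation on letters used for the host: equal or adjacent. The ground symbol `none` is related
to itself only. -/
def hostRel {b : ℕ} (h : Fin (128 * b) × Fin 32 → Fin (128 * b))
    (o o' : Option (Fin (128 * b))) : Prop :=
  o = o' ∨ ∃ x y, o = some x ∧ o' = some y ∧ hostAdj h x y

open Classical in
theorem card_hostRel_le {b : ℕ} (h : Fin (128 * b) × Fin 32 → Fin (128 * b))
    (o' : Option (Fin (128 * b))) : #{o | hostRel h o o'} ≤ 8226 := by
  rcases o' with _ | y
  · refine (card_le_card (t := {none}) fun o ho => ?_).trans (by simp)
    rcases (mem_filter.1 ho).2 with h1 | ⟨_, _, _, h2, _⟩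
    · simpa using h1
    · simp at h2
  · refine (card_le_card (t := insert (some y) (({x | hostAdj h y x} : Finset _).image some))
      fun o ho => ?_).trans
      ((card_insert_le _ _).trans (Nat.succ_le_succ (card_image_le.trans (card_hostAdj_le h y))))
    rcases (mem_filter.1 ho).2 with h1 | ⟨x, z, rfl, h2, h3⟩
    · simp [h1]
    · obtain rfl : y = z := by simpa using h2
      rw [mem_insert, mem_image]
      exact Or.inr ⟨x, by rw [mem_filter]; exact ⟨mem_univ _, hostAdj_symm h3⟩, rfl⟩

variable {V E : Type*} [Fintype V] [DecidableEq V] [DecidableEq E] [Fintype E] {r : ℕ} [NeZero r]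

/-- The shared letters of a plan can be assigned symbols such that the words consisting of the initial
letters satisfy the bound on prefixes that `label` maintains. -/
theorem card_initial_le {vert : E → Fin r → V} {Δ b : ℕ} (hΔ : 2 ≤ Δ) (hb : 1 ≤ b)
    (hV : Fintype.card V ≤ b ^ Δ) (hall : verts vert univ = univ) {ini : V → Option (Option E)}
    {U : E × Fin r → Finset V} {τ : E × Fin r → V → ℕ} (hP : Plan vert Δ b univ ini U τ) :
    ∃ g : E → Fin (128 * b), ∀ l, l.length ≤ Δ →
      #{v | l <+: ((ini v).map (Option.map g)).toList} ≤ 8 ^ (l.length + 2) * b ^ (Δ - l.length) := by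
  obtain ⟨g, hg⟩ := exists_bins (M := 128 * b) (by omega)
    (fun c => #{v | ini v = some (some c)}) b (fun c => by simpa [hall] using hP.small c)
  have hbq : b ^ Δ = b ^ (Δ - 1) * b := by rw [← pow_succ]; congr 1; omega
  have hbq' : b ≤ b ^ (Δ - 1) := Nat.le_self_pow (by omega) b
  have hq : ∀ a, a ≤ 2 * b ^ (Δ - 1) → a ≤ 8 ^ (1 + 2) * b ^ (Δ - 1) := by
    intro a ha
    refine ha.trans (Nat.mul_le_mul_right _ (by norm_num))
  refine ⟨g, fun l hl => ?_⟩
  rcases l with _ | ⟨o, _ | ⟨o', l⟩⟩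
  · simp only [List.nil_prefix, filter_true, card_univ, List.length_nil]
    exact hV.trans (Nat.le_mul_of_pos_left _ (by norm_num))
  · refine hq _ ?_
    have hpre : ∀ v, [o] <+: ((ini v).map (Option.map g)).toList ↔
        (ini v).map (Option.map g) = some o := by
      intro v
      rcases (ini v).map (Option.map g) with _ | x
      · simp
      · simp [eq_comm]
    simp only [hpre]
    rcases o with _ | x
    · have h1 := hP.ground
      rw [hall, card_univ] at h1
      have h2 : ({v | (ini v).map (Option.map g) = some none} : Finset V)
          = ({v | ini v = some none} : Finset V) := by
        refine filter_congr fun v _ => ?_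
        rcases ini v with _ | _ | c <;> simp
      rw [h2]
      have h3 := Nat.le_of_mul_le_mul_right ((h1.trans hV).trans_eq hbq) hb
      omega
    · have h1 : #{v | (ini v).map (Option.map g) = some (some x)}
          ≤ ∑ c with g c = x, #{v | ini v = some (some c)} := by
        refine le_trans (card_le_card ?_) card_biUnion_le
        intro v hv
        have hv := (mem_filter.1 hv).2
        rcases hi : ini v with _ | _ | c
        · simp [hi] at hv
        · simp [hi] at hv
        · have : g c = x := by simpa [hi] using hv
          exact mem_biUnion.2 ⟨c, by simp [this], by simp [hi]⟩
      have h2 : ∑ c, #{v | ini v = some (some c)} ≤ Fintype.card V := by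
        rw [← card_biUnion]
        · exact card_le_univ _
        · intro c _ c' _ hcc
          rw [Function.onFun, disjoint_left]
          intro v hv hv'
          have := (mem_filter.1 hv).2.symm.trans (mem_filter.1 hv').2
          simp only [Option.some.injEq] at this
          exact hcc this
      refine h1.trans ?_
      have h3 := hg x
      refine Nat.le_of_mul_le_mul_right (c := 128 * b) ?_ (by omega)
      calc _ ≤ _ := h3
        _ ≤ b ^ (Δ - 1) * b + b ^ (Δ - 1) * (128 * b) := by
            rw [← hbq]
            exact add_le_add (h2.trans hV) (Nat.mul_le_mul_right _ hbq')
        _ ≤ 2 * b ^ (Δ - 1) * (128 * b) := by nlinarith [Nat.zero_le (b ^ (Δ - 1) * b)]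
  · refine le_trans (le_of_eq ?_) (Nat.zero_le _)
    rw [card_eq_zero, filter_eq_empty_iff]
    intro v _ h
    have := h.length_le
    rcases hi : ini v with _ | c <;> simp [hi] at this

end Embedding

/-! ### Turning a plan into an embedding -/

section Realize
variable {V E : Type*} [Fintype V] [DecidableEq V] [DecidableEq E] [Fintype E] {r : ℕ} [NeZero r]

/-- Words of length exactly `Δ` that contain letters from all walks `j`, such that every word occurs
at most `8 ^ (Δ + 2)` times; `pos v j` is the position of the letter that `v` gets from the walk
`j`. -/
theorem exists_full_labelling {b : ℕ} {h : Fin (128 * b) × Fin 32 → Fin (128 * b)}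
    (hh : Expands h) (hb : 1 ≤ b) {J : Type*} [Fintype J] (Δ : ℕ) (U : J → Finset V)
    (τ : J → V → ℕ) (hist₀ : V → List (Option (Fin (128 * b))))
    (h0 : ∀ l, l.length ≤ Δ → #{v | l <+: hist₀ v} ≤ 8 ^ (l.length + 2) * b ^ (Δ - l.length))
    (hτ : ∀ j t, #{v ∈ U j | τ j v = t} ≤ 2)
    (hlen : ∀ v, (hist₀ v).length + #{j | v ∈ U j} ≤ Δ) :
    ∃ hist : V → List (Option (Fin (128 * b))), (∀ v, hist₀ v <+: hist v) ∧
      (∀ v, (hist v).length = Δ) ∧ (∀ v, #{v' | hist v' = hist v} ≤ 8 ^ (Δ + 2)) ∧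
      ∃ pos : V → J → ℕ, (∀ v j, (hist₀ v).length ≤ pos v j) ∧
        (∀ v j j', v ∈ U j → v ∈ U j' → pos v j = pos v j' → j = j') ∧
        ∀ j, ∃ x : ℕ → Fin (128 * b), (∀ t, hostAdj h (x t) (x (t + 1))) ∧
          ∀ v ∈ U j, (hist v)[pos v j]? = some (some (x (τ j v))) := by
  set ι := Fintype.equivFin J with hι
  set N := Fintype.card J with hN
  set miss : V → ℕ := fun v => Δ - ((hist₀ v).length + #{j | v ∈ U j}) with hdef
  -- further walks, visiting the vertices one by one, fill up the words that are too short
  set U' : ℕ → Finset V := fun p =>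
    if hp : p < N then U (ι.symm ⟨p, hp⟩) else ({v | p - N < miss v} : Finset V) with hU'
  set τ' : ℕ → V → ℕ := fun p v =>
    if hp : p < N then τ (ι.symm ⟨p, hp⟩) v else (Fintype.equivFin V v : ℕ) with hτ'
  have hUj : ∀ j, U' (ι j) = U j := by
    intro j
    simp [hU']
  have hτj : ∀ j, τ' (ι j) = τ j := by
    intro j
    funext v
    simp [hτ']
  have hlen' : ∀ v, (hist₀ v).length + #{p ∈ range (N + Δ) | v ∈ U' p} = Δ := by
    intro v
    have h1 : #{p ∈ range (N + Δ) | v ∈ U' p} = #{j | v ∈ U j} + miss v := by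
      rw [card_filter, sum_range_add, card_filter]
      congr 1
      · rw [Finset.sum_range, ← Equiv.sum_comp ι]
        exact sum_congr rfl fun j _ => by rw [hUj]
      · have h2 : ∀ p, v ∈ U' (N + p) ↔ p < miss v := by
          intro p
          simp [hU']
        simp only [h2]
        rw [← card_filter]
        have h3 : ({p ∈ range Δ | p < miss v} : Finset ℕ) = range (miss v) := by
          ext p
          simp only [mem_filter, mem_range, hdef]
          omega
        rw [h3, card_range]
    have h2 := hlen v
    rw [h1, hdef]
    dsimp only
    omega
  obtain ⟨hist, g1, g2, g3, g4⟩ := label hh hb Δ U' τ' (N + Δ) hist₀ h0 (by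
    intro p _ t
    by_cases hp : p < N
    · have := hτ (ι.symm ⟨p, hp⟩) t
      simp only [hU', hτ', dif_pos hp]
      exact this
    · simp only [hτ', dif_neg hp]
      refine (card_le_one.2 ?_).trans (by norm_num)
      intro v hv v' hv'
      have h1 := (mem_filter.1 hv).2.trans (mem_filter.1 hv').2.symm
      exact (Fintype.equivFin V).injective (Fin.ext h1)) (fun v => (hlen' v).le)
  have hlh : ∀ v, (hist v).length = Δ := fun v => (g2 v).trans (hlen' v)
  refine ⟨hist, g1, hlh, fun v => ?_,
    fun v j => (hist₀ v).length + #{p' ∈ range (ι j) | v ∈ U' p'}, fun v j => Nat.le_add_right _ _,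
    ?_, fun j => ?_⟩
  · have h1 := g3 (hist v) (hlh v).le
    rw [hlh, Nat.sub_self, pow_zero, mul_one] at h1
    refine (card_le_card fun v' hv' => ?_).trans h1
    rw [mem_filter] at hv' ⊢
    exact ⟨mem_univ _, hv'.2 ▸ List.prefix_rfl⟩
  · intro v
    have hlt : ∀ j j', v ∈ U j → ι j < ι j' → #{p' ∈ range (ι j) | v ∈ U' p'}
        < #{p' ∈ range (ι j') | v ∈ U' p'} := by
      intro j j' hj hjj
      refine card_lt_card ⟨?_, fun hsub => ?_⟩
      · exact filter_subset_filter _ (range_subset_range.2 (le_of_lt hjj))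
      · have h1 : (ι j : ℕ) ∈ ({p' ∈ range (ι j') | v ∈ U' p'} : Finset ℕ) := by
          rw [mem_filter, mem_range, hUj]
          exact ⟨hjj, hj⟩
        simpa using (mem_filter.1 (hsub h1)).1
    intro j j' hj hj' he
    rcases lt_trichotomy (ι j) (ι j') with hlt' | heq | hlt'
    · have := hlt j j' hj hlt'
      dsimp only at he
      omega
    · exact ι.injective heq
    · have := hlt j' j hj' hlt'
      dsimp only at he
      omega
  · obtain ⟨x, hx1, hx2⟩ := g4 (ι j) (by have := (ι j).isLt; omega)
    refine ⟨x, hx1, fun v hv => ?_⟩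
    have := hx2 v (by rwa [hUj])
    rwa [hτj] at this

/-- A hypergraph all of whose degrees are `Δ` embeds into the host: every edge obeys a pattern. -/
theorem exists_embedding (hr : 4 ≤ r) {vert : E → Fin r → V} (hp : Proper vert)
    {Δ b : ℕ} (hb : 1 ≤ b) (hΔ : 2 ≤ Δ) (hdeg : ∀ v, #{p : E × Fin r | vert p.1 p.2 = v} = Δ)
    (hV : Fintype.card V ≤ b ^ Δ) {h : Fin (128 * b) × Fin 32 → Fin (128 * b)} (hh : Expands h) :
    ∃ X : V → (Fin Δ → Option (Fin (128 * b))) × Fin (8 ^ (Δ + 2)), Function.Injective X ∧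
      ∀ e, ∃ σ : Equiv.Perm (Fin r), ∃ δ P, IsPattern δ P ∧
        Obeys (hostRel h) δ P (fun s => (X (vert e (σ s.1))).1 s.2) := by
  obtain ⟨ini, U, τ, hP⟩ := exists_plan hr hp b hΔ hdeg univ (fun _ _ f _ _ _ => mem_univ f)
  have hall : verts vert univ = univ := by
    refine eq_univ_iff_forall.2 fun v => ?_
    obtain ⟨p, hp⟩ := card_pos.1 (by rw [hdeg v]; omega : 0 < #{p : E × Fin r | vert p.1 p.2 = v})
    exact mem_verts.2 ⟨p.1, mem_univ _, p.2, (mem_filter.1 hp).2⟩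
  obtain ⟨g, hg⟩ := card_initial_le hΔ hb hV hall hP
  obtain ⟨hist, h1, h2, h3, pos, h4, h5, h6⟩ := exists_full_labelling hh hb Δ U τ _ hg
    (fun j t => hP.fiber j (mem_univ _) t) (by
      intro v
      have := hP.deg v (by rw [hall]; exact mem_univ _)
      rw [univ_product_univ] at this
      rcases hi : ini v with _ | c <;> simpa [hi] using this)
  choose x hx1 hx2 using h6
  set ℓ : V → Fin Δ → Option (Fin (128 * b)) := fun v i => (hist v)[i.val]'(by rw [h2]; exact i.isLt)
    with hℓ
  have hinj : ∀ v v', ℓ v = ℓ v' → hist v = hist v' := by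
    intro v v' he
    refine List.ext_getElem ((h2 v).trans (h2 v').symm) fun i hi _ => ?_
    exact congrFun he ⟨i, by rwa [h2] at hi⟩
  have hget : ∀ v i (hi : i < Δ) o, (hist v)[i]? = some o → ℓ v ⟨i, hi⟩ = o := by
    intro v i hi o ho
    obtain ⟨_, h⟩ := List.getElem?_eq_some_iff.1 ho
    exact h
  obtain ⟨idx, hidx⟩ := exists_index (K := 8 ^ (Δ + 2)) ℓ (fun v =>
    (card_le_card fun v' hv' => by
      rw [mem_filter] at hv' ⊢
      exact ⟨mem_univ _, hinj _ _ hv'.2⟩).trans (h3 v))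
  refine ⟨fun v => (ℓ v, idx v), fun v v' he => hidx v v' (congrArg Prod.fst he)
    (congrArg Prod.snd he), fun e => ?_⟩
  -- the coordinate of a vertex that carries a given kind of label
  set place : V → Option (E × Fin r) → ℕ := fun v o => o.elim 0 (pos v) with hplace
  set valid : V → Option (E × Fin r) → Prop := fun v o =>
    (o = none ∧ ini v ≠ none) ∨ ∃ j, o = some j ∧ v ∈ U j with hvalid
  have hhead : ∀ v c, ini v = some c → (hist v)[0]? = some (c.map g) := by
    intro v c hc
    have := h1 v
    rw [hc] at this
    obtain ⟨t, ht⟩ := this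
    rw [← ht]
    simp
  have hlt : ∀ v o, valid v o → place v o < Δ := by
    rintro v o (⟨rfl, -⟩ | ⟨j, rfl, hj⟩)
    · change 0 < Δ
      omega
    · obtain ⟨h, -⟩ := List.getElem?_eq_some_iff.1 (hx2 j v hj)
      rwa [h2] at h
  have hpl : ∀ v o o', valid v o → valid v o' → place v o = place v o' → o = o' := by
    have hpos : ∀ v j, ini v ≠ none → 0 < pos v j := by
      intro v j hv
      refine lt_of_lt_of_le ?_ (h4 v j)
      obtain ⟨c, hc⟩ := Option.ne_none_iff_exists'.1 hv
      simp [hc]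
    rintro v o o' (⟨rfl, hv⟩ | ⟨j, rfl, hj⟩) (⟨rfl, hv'⟩ | ⟨j', rfl, hj'⟩) he
    · rfl
    · exact absurd he (hpos v j' hv).ne
    · exact absurd he (hpos v j hv').ne'
    · rw [h5 v j j' hj hj' he]
  obtain ⟨w, D, P, ⟨σ, rfl⟩, hc⟩ := hP.cert e (mem_univ _)
  set w := vert e ∘ σ with hw
  set conv : Fin r × Option (E × Fin r) → Fin r × Fin Δ := fun s =>
    (s.1, if hs : place (w s.1) s.2 < Δ then ⟨_, hs⟩ else ⟨0, by omega⟩) with hconv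
  have hcv : ∀ k o, valid (w k) o → ∃ hs : place (w k) o < Δ, conv (k, o) = (k, ⟨_, hs⟩) := by
    intro k o hv
    refine ⟨hlt _ _ hv, ?_⟩
    simp only [hconv, dif_pos (hlt _ _ hv)]
  have hci : ∀ s s', valid (w s.1) s.2 → valid (w s'.1) s'.2 → conv s = conv s' → s = s' := by
    rintro ⟨k, o⟩ ⟨k', o'⟩ hv hv' he
    obtain ⟨_, e1⟩ := hcv k o hv
    obtain ⟨_, e2⟩ := hcv k' o' hv'
    rw [e1, e2] at he
    simp only [Prod.mk.injEq, Fin.mk.injEq] at he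
    obtain ⟨rfl, he⟩ := he
    exact congrArg (Prod.mk k) (hpl _ _ _ hv hv' he)
  have hvs : ∀ i s, P i = some s → valid (w (D i).1) (D i).2 ∧ valid (w s.1) s.2 := by
    intro i s hs
    rcases hc.link i s hs with ⟨k, k', c, e1, rfl, e3, e4⟩ | ⟨k, k', j, e1, rfl, -, e3, e4, -⟩
    · rw [e1]
      exact ⟨Or.inl ⟨rfl, by simp [e3]⟩, Or.inl ⟨rfl, by simp [e4]⟩⟩
    · rw [e1]
      exact ⟨Or.inr ⟨j, rfl, e3⟩, Or.inr ⟨j, rfl, e4⟩⟩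
  have hvD : ∀ i, valid (w (D i).1) (D i).2 := by
    intro i
    rcases hs : P i with _ | s
    · obtain ⟨k, e1, e2⟩ := hc.ground i hs
      rw [e1]
      exact Or.inl ⟨rfl, by simp [e2]⟩
    · exact (hvs i s hs).1
  refine ⟨σ, fun i => conv (D i), fun i => (P i).map conv, ⟨?_, ?_⟩, ?_, ?_⟩
  · intro i i' he
    exact hc.inj (hci _ _ (hvD i) (hvD i') he)
  · obtain ⟨rank, hrank⟩ := hc.acyclic
    refine ⟨rank, fun i j hij => hrank i j ?_⟩
    obtain ⟨s, hs, he⟩ := Option.map_eq_some_iff.1 hij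
    rw [hs, hci _ _ (hvs i s hs).2 (hvD j) he]
  · intro i hi
    obtain ⟨k, e1, e2⟩ := hc.ground i (Option.map_eq_none_iff.1 hi)
    have hv := hvD i
    rw [e1] at hv
    obtain ⟨_, e3⟩ := hcv k none hv
    rw [e1, e3]
    exact hget _ _ _ _ (hhead _ _ e2)
  · intro i s' hi
    obtain ⟨s, hs, rfl⟩ := Option.map_eq_some_iff.1 hi
    obtain ⟨hv1, hv2⟩ := hvs i s hs
    rcases hc.link i s hs with ⟨k, k', c, e1, rfl, e3, e4⟩ |
      ⟨k, k', j, e1, rfl, -, e3, e4, e5, e6⟩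
    · rw [e1] at hv1 ⊢
      obtain ⟨_, f1⟩ := hcv k none hv1
      obtain ⟨_, f2⟩ := hcv k' none hv2
      rw [f1, f2]
      refine Or.inl ?_
      exact (hget _ _ _ _ (hhead _ _ e3)).trans (hget _ _ _ _ (hhead _ _ e4)).symm
    · rw [e1] at hv1 ⊢
      obtain ⟨l1, f1⟩ := hcv k (some j) hv1
      obtain ⟨l2, f2⟩ := hcv k' (some j) hv2
      rw [f1, f2]
      have q1 := hget _ _ l1 _ (hx2 j _ e3)
      have q2 := hget _ _ l2 _ (hx2 j _ e4)
      refine Or.inr ⟨_, _, q1, q2, ?_⟩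
      obtain hτ | hτ | hτ : τ j (w k) = τ j (w k') ∨ τ j (w k') = τ j (w k) + 1 ∨
          τ j (w k) = τ j (w k') + 1 := by omega
      · rw [hτ]; exact Or.inl rfl
      · rw [hτ]; exact hx1 j _
      · rw [hτ]; exact hostAdj_symm (hx1 j _)

end Realize

/-! ### Regularisation and the choice of parameters -/

section Assembly
/-- The smallest `b` with `m ≤ b ^ Δ`. -/
theorem exists_base (m Δ : ℕ) (hΔ : 1 ≤ Δ) (hm : 1 ≤ m) :
    ∃ b, 1 ≤ b ∧ m ≤ b ^ Δ ∧ b ^ Δ ≤ 2 ^ Δ * m := by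
  have hex : ∃ b, m ≤ b ^ Δ := ⟨m, Nat.le_self_pow (by omega) m⟩
  obtain ⟨c, hc⟩ : ∃ c, Nat.find hex = c + 1 := by
    refine ⟨Nat.find hex - 1, ?_⟩
    have := Nat.find_spec hex
    rcases Nat.eq_zero_or_pos (Nat.find hex) with h | h
    · rw [h, zero_pow (by omega)] at this; omega
    · omega
  have h1 := Nat.find_spec hex
  have h2 := Nat.find_min hex (m := c) (by omega)
  rw [hc] at h1
  refine ⟨c + 1, by omega, h1, ?_⟩
  rcases Nat.eq_zero_or_pos c with rfl | h
  · rw [zero_add, one_pow]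
    exact Nat.mul_pos (pow_pos (by norm_num) Δ) hm
  · calc (c + 1) ^ Δ ≤ (2 * c) ^ Δ := Nat.pow_le_pow_left (by omega) _
      _ = 2 ^ Δ * c ^ Δ := mul_pow ..
      _ ≤ _ := Nat.mul_le_mul_left _ (by omega)

theorem edge_bound {r Δ b m : ℕ} (hΔ : 1 ≤ Δ) (hb : b ^ Δ ≤ m) :
    (b : ℝ) ^ (r * Δ - r) ≤ (m : ℝ) ^ ((r : ℝ) - r / Δ) := by
  have hΔ' : (0 : ℝ) < Δ := by exact_mod_cast hΔ
  have h1 : (r : ℝ) / Δ ≤ r := div_le_self (by positivity) (by exact_mod_cast hΔ)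
  have h2 : r ≤ r * Δ := Nat.le_mul_of_pos_right _ hΔ
  calc (b : ℝ) ^ (r * Δ - r) = ((b : ℝ) ^ Δ) ^ ((r : ℝ) - r / Δ) := by
        rw [← Real.rpow_natCast, ← Real.rpow_natCast, ← Real.rpow_mul (by positivity)]
        congr 1
        rw [Nat.cast_sub h2]
        push_cast
        field_simp
    _ ≤ _ := Real.rpow_le_rpow (by positivity) (by exact_mod_cast hb) (by linarith)

/-- A hypergraph of maximum degree at most `Δ` is part of one that has all degrees equal to `Δ`: to `r`
disjoint copies, add for each vertex `v` the missing `Δ - deg v` edges, all of them joining the `r`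
copies of `v`. Edges may be repeated. -/
theorem exists_regular {n r Δ : ℕ} (hr : 1 ≤ r) (hΔ : 2 ≤ Δ) (EF : Finset (Finset (Fin n)))
    (hE : ∀ e ∈ EF, e.card = r) (hdeg : ∀ v : Fin n, (EF.filter (fun e => v ∈ e)).card ≤ Δ) :
    ∃ (E : Type) (_ : Fintype E) (_ : DecidableEq E) (vert : E → Fin r → Fin n × Fin r),
      Proper vert ∧ (∀ v, #{p : E × Fin r | vert p.1 p.2 = v} = Δ) ∧
      ∀ e ∈ EF, ∃ f, (∀ k, ∃ v ∈ e, vert f k = (v, ⟨0, hr⟩)) ∧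
        ∀ v ∈ e, ∃ k, vert f k = (v, ⟨0, hr⟩) := by
  classical
  let d : Fin n → ℕ := fun v => #{e ∈ EF | v ∈ e}
  let E := ({e // e ∈ EF} × Fin r) ⊕ (Σ v : Fin n, Fin (Δ - d v))
  let vert : E → Fin r → Fin n × Fin r := Sum.elim
    (fun q k => (q.1.1.orderEmbOfFin (hE _ q.1.2) k, q.2)) (fun q k => (q.1, k))
  have hinj : ∀ e, Function.Injective (vert e) := by
    rintro (⟨e, i⟩ | ⟨v, j⟩) k k' h
    · simpa [vert] using h
    · simpa [vert] using h
  have hD : ∀ v, #{p : E × Fin r | vert p.1 p.2 = v} = Δ := by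
    rintro ⟨v, i⟩
    have h1 : #{p : E × Fin r | vert p.1 p.2 = (v, i)} = #{f : E | ∃ k, vert f k = (v, i)} := by
      refine card_nbij' (fun p => p.1) (fun f => (f, if h : ∃ k, vert f k = (v, i) then h.choose
        else ⟨0, hr⟩)) ?_ ?_ ?_ ?_
      · intro p hp
        simp only [coe_filter, mem_univ, true_and, Set.mem_ofPred_eq] at hp ⊢
        exact ⟨_, hp⟩
      · intro f hf
        simp only [coe_filter, mem_univ, true_and, Set.mem_ofPred_eq] at hf ⊢
        rw [dif_pos hf]
        exact hf.choose_spec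
      · intro p hp
        simp only [coe_filter, mem_univ, true_and, Set.mem_ofPred_eq] at hp
        have hf : ∃ k, vert p.1 k = (v, i) := ⟨_, hp⟩
        refine Prod.ext rfl (hinj p.1 ?_)
        dsimp only
        rw [dif_pos hf, hf.choose_spec, hp]
      · intro f _
        rfl
    have h2 : ({f : E | ∃ k, vert f k = (v, i)} : Finset E) =
        (({e ∈ EF | v ∈ e} : Finset _).subtype (· ∈ EF) ×ˢ {i}).disjSum
          (({v} : Finset (Fin n)).sigma fun v => univ) := by
      ext f
      rcases f with ⟨e, i'⟩ | ⟨v', j⟩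
      · have h3 : (∃ k, e.1.orderEmbOfFin (hE _ e.2) k = v) ↔ v ∈ e.1 := by
          rw [← Set.mem_range, range_orderEmbOfFin, mem_coe]
        refine Iff.trans ?_ inl_mem_disjSum.symm
        have h4 : i' = i ↔ i = i' := eq_comm
        simp [vert, h3, h4]
      · refine Iff.trans ?_ inr_mem_disjSum.symm
        simp [vert]
    rw [h1, h2, card_disjSum, card_product, card_sigma, card_subtype, filter_filter]
    have h4 : #{a ∈ EF | v ∈ a ∧ a ∈ EF} = d v := by
      congr 1
      ext a
      simp only [mem_filter]
      tauto
    have := hdeg v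
    simp only [h4, card_singleton, sum_singleton, card_univ, Fintype.card_fin, d]
    omega
  refine ⟨E, inferInstance, inferInstance, vert, ⟨hinj, ?_⟩, hD, ?_⟩
  · intro e k
    obtain ⟨p, hp, hne⟩ := exists_mem_ne (by rw [hD (vert e k)]; omega) (e, k)
    rw [mem_filter] at hp
    refine ⟨p.1, p.2, ?_, hp.2⟩
    intro h
    refine hne (Prod.ext h (hinj e ?_))
    rw [← hp.2, h]
  · intro e he
    refine ⟨Sum.inl (⟨e, he⟩, ⟨0, hr⟩), fun k => ⟨_, orderEmbOfFin_mem e (hE _ he) k, rfl⟩,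
      fun v hv => ?_⟩
    have h3 : ∃ k, e.orderEmbOfFin (hE _ he) k = v := by
      rwa [← Set.mem_range, range_orderEmbOfFin, mem_coe]
    exact h3.imp fun k hk => by simp [vert, hk]

/-- The host is universal as soon as `n * r`, the number of vertices after regularisation, is at most
`b ^ Δ`. -/
theorem exists_universal_of_pow {r Δ n b : ℕ} (hr : 4 ≤ r) (hΔ : 2 ≤ Δ) (hb : 1 ≤ b)
    (hn : n * r ≤ b ^ Δ) :
    ∃ EH : Finset (Finset (Fin ((128 * b + 1) ^ Δ * 8 ^ (Δ + 2)))), (∀ e ∈ EH, e.card = r) ∧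
      #EH ≤ numPatterns r Δ * ((8 ^ (Δ + 2)) ^ r * ((128 * b + 1) ^ (r * Δ - r) * 8226 ^ r)) ∧
      HypergraphUniversal r n Δ _ EH := by
  classical
  obtain ⟨h, hh⟩ := exists_expander b hb
  obtain ⟨EH, h1, h2, h3⟩ := exists_host (r := r) (Δ := Δ) (K := 8 ^ (Δ + 2)) (D := 8226)
    (by norm_num) (hostRel h) (fun o' => by convert card_hostRel_le h o')
  have hcard : Fintype.card ((Fin Δ → Option (Fin (128 * b))) × Fin (8 ^ (Δ + 2))) =
      (128 * b + 1) ^ Δ * 8 ^ (Δ + 2) := by simp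
  let ε := Fintype.equivFinOfCardEq hcard
  refine ⟨EH.image fun e => e.image ε, ?_, ?_, ?_⟩
  · intro e he
    obtain ⟨e', he', rfl⟩ := mem_image.1 he
    rw [card_image_of_injective _ ε.injective, h1 e' he']
  · simpa using card_image_le.trans h2
  · intro EF hE hdeg
    have : NeZero r := ⟨by omega⟩
    obtain ⟨E, _, _, vert, hp, hD, hEF⟩ := exists_regular (by omega) hΔ EF hE hdeg
    obtain ⟨X, hX, hXe⟩ := exists_embedding hr hp hb hΔ hD (by simpa using hn) hh
    refine ⟨fun v => ε (X (v, 0)), fun v v' hv => ?_, fun e he => ?_⟩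
    · simpa using hX (ε.injective hv)
    · obtain ⟨f, hf⟩ := hEF e he
      obtain ⟨σ, hσ⟩ := hXe f
      have h4 := h3 (fun k => X (vert f (σ k)))
        (hX.comp ((hp.inj f).comp σ.injective)) hσ
      refine mem_image.2 ⟨_, h4, ?_⟩
      ext y
      simp only [mem_image, mem_univ, true_and]
      constructor
      · rintro ⟨_, ⟨k, rfl⟩, rfl⟩
        obtain ⟨v, hv, hk⟩ := hf.1 (σ k)
        exact ⟨v, hv, by rw [hk]; rfl⟩
      · rintro ⟨v, hv, rfl⟩
        obtain ⟨k, hk⟩ := hf.2 v hv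
        exact ⟨_, ⟨σ.symm k, rfl⟩, by simp [hk]⟩

end Assembly

/-- for even `r ≥ 4` and `Δ ≥ 2` there are `𝓕^(r)(n,Δ)`-universal
`r`-uniform hypergraphs with at most `C·n` vertices and at most `C·n^{r-r/Δ}` edges. -/
theorem universal_even_uniformity (r Δ : ℕ) (hr : 4 ≤ r) (hre : Even r) (hΔ : 2 ≤ Δ) :
    ∃ C : ℝ, 0 < C ∧ ∀ n : ℕ, 1 ≤ n →
      ∃ (N : ℕ) (EH : Finset (Finset (Fin N))),
        (∀ e ∈ EH, e.card = r) ∧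
        (N : ℝ) ≤ C * n ∧
        (EH.card : ℝ) ≤ C * (n : ℝ) ^ ((r : ℝ) - (r : ℝ) / (Δ : ℝ)) ∧
        HypergraphUniversal r n Δ N EH := by
  classical
  set A : ℝ := 129 ^ Δ * 8 ^ (Δ + 2) * (2 ^ Δ * r) with hA
  set B : ℝ := numPatterns r Δ * ((8 ^ (Δ + 2)) ^ r * (129 ^ (r * Δ - r) * 8226 ^ r)) *
    ((2 : ℝ) ^ Δ * r) ^ ((r : ℝ) - r / Δ) with hB
  have hr0 : (0 : ℝ) < r := by exact_mod_cast (by omega : 0 < r)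
  have hA0 : 0 < A := by positivity
  have hB0 : 0 ≤ B := by positivity
  refine ⟨A + B, by positivity, fun n hn => ?_⟩
  obtain ⟨b, hb, hb1, hb2⟩ := exists_base (n * r) Δ (by omega) (Nat.mul_pos hn (by omega))
  obtain ⟨EH, h1, h2, h3⟩ := exists_universal_of_pow hr hΔ hb hb1
  have hb129 : ((128 * b + 1 : ℕ) : ℝ) ≤ 129 * b := by
    exact_mod_cast (by omega : 128 * b + 1 ≤ 129 * b)
  refine ⟨_, EH, h1, ?_, ?_, h3⟩
  · have hb2' : (b : ℝ) ^ Δ ≤ 2 ^ Δ * (n * r) := by exact_mod_cast hb2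
    calc (((128 * b + 1) ^ Δ * 8 ^ (Δ + 2) : ℕ) : ℝ)
        = ((128 * b + 1 : ℕ) : ℝ) ^ Δ * 8 ^ (Δ + 2) := by push_cast; ring
      _ ≤ (129 * b) ^ Δ * 8 ^ (Δ + 2) := by gcongr
      _ = 129 ^ Δ * 8 ^ (Δ + 2) * b ^ Δ := by rw [mul_pow]; ring
      _ ≤ 129 ^ Δ * 8 ^ (Δ + 2) * (2 ^ Δ * (n * r)) := by gcongr
      _ = A * n := by rw [hA]; ring
      _ ≤ (A + B) * n := by gcongr; linarith
  · have h4 := edge_bound (r := r) (by omega) hb2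
    push_cast at h4
    calc (#EH : ℝ)
        ≤ ((numPatterns r Δ *
            ((8 ^ (Δ + 2)) ^ r * ((128 * b + 1) ^ (r * Δ - r) * 8226 ^ r)) : ℕ) : ℝ) := by
          exact_mod_cast h2
      _ = numPatterns r Δ * ((8 ^ (Δ + 2)) ^ r *
            (((128 * b + 1 : ℕ) : ℝ) ^ (r * Δ - r) * 8226 ^ r)) := by push_cast; ring
      _ ≤ numPatterns r Δ * ((8 ^ (Δ + 2)) ^ r * ((129 * b) ^ (r * Δ - r) * 8226 ^ r)) := by
          gcongr
      _ = numPatterns r Δ * ((8 ^ (Δ + 2)) ^ r * (129 ^ (r * Δ - r) * 8226 ^ r)) *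
            b ^ (r * Δ - r) := by rw [mul_pow]; ring
      _ ≤ numPatterns r Δ * ((8 ^ (Δ + 2)) ^ r * (129 ^ (r * Δ - r) * 8226 ^ r)) *
            (2 ^ Δ * (n * r)) ^ ((r : ℝ) - r / Δ) := by gcongr
      _ = B * (n : ℝ) ^ ((r : ℝ) - r / Δ) := by
          rw [hB, (by ring : (2 : ℝ) ^ Δ * (n * r) = 2 ^ Δ * r * n),
            Real.mul_rpow (by positivity) (by positivity), ← mul_assoc]
      _ ≤ (A + B) * (n : ℝ) ^ ((r : ℝ) - r / Δ) := by gcongr; linarith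
end
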